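/- arXiv:0902.3419 — 2 statements merged into one kernel-verified Lean document; each statement's English description precedes it below -/
import Mathlib

section
/- Under the stated assumptions including non-periodicity, for every odd integer k ≥ 1, Σ_{1≤n≤N} b_k(n) = o(N^{ρ} (log N)^{k/2}) as N → ∞; equivalently (1/A(N)) Σ_{1≤n≤N} b_k(n) = o((log N)^{k/2}). -/
/-!
Draw the letters `n ∈ 𝒫` independently with probabilities `n ^ (-ρ)`, let `n` take the time `log n`
and carry the mark `1 - μ log n`, whose mean vanishes by the choice of `μ`. The words read up to
time `log N` are the factorizations over `𝒫` of the integers up to `N`, so `N ^ (-ρ) ∑ b_k(n)` is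
the sum `M_k(L)` of the `k`-th powers of the height over the epochs before `L = log N`, discounted
by `exp (-ρ (L - time))`, and `N ^ (-ρ) A(N) = M_0(L)`.

The Markov property at the first epoch after `L - R` shows that, for large `R`, `M_k(L)` is close to
`M_0(R)` times the `k`-th moment of the height at that epoch. This uses that `M_0` varies slowly:
along any ultrafilter its translates converge to a bounded harmonic function, which is invariant
under every `log n` by the Choquet–Deny theorem, and the `log n` generate a dense subgroup of `ℝ`
by non-periodicity. Dynkin's formula expresses the `(k + 2)`-nd moment at the first epoch after `B`
through an integral of `M_k` up to `B` and lower order terms, the intermediate term vanishing with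
the mean of the mark; and the first moment is zero. Hence, inductively, both are negligible for
every odd `k`.
-/

open scoped BigOperators ENNReal
open Filter Asymptotics

noncomputable section

/-- `af P m n` is the number of ordered `m`-tuples `(n₁,…,n_m)` of elements of `P`
with product `n` (so `af P 0 n = 1` iff `n = 1`). -/
def af (P : Set ℕ) (m n : ℕ) : ℕ :=
  Nat.card {t : Fin m → ℕ // (∀ i, t i ∈ P) ∧ ∏ i, t i = n}

/-- `aTot P n = a(n) = Σ_{m ≥ 0} a_m(n)`. -/
def aTot (P : Set ℕ) (n : ℕ) : ℝ := ∑' m : ℕ, (af P m n : ℝ)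

/-- `Acum P N = A(N) = Σ_{1 ≤ n ≤ N} a(n)`. -/
def Acum (P : Set ℕ) (N : ℕ) : ℝ := ∑ n ∈ Finset.Icc 1 N, aTot P n

/-- The Dirichlet series `𝒫(x) = Σ_{n ∈ 𝒫} n^{-x}` at a real point. -/
def Pval (P : Set ℕ) (x : ℝ) : ℝ := ∑' n : P, ((n : ℕ) : ℝ) ^ (-x)

/-- `𝒫'(x) = -Σ_{n ∈ 𝒫} n^{-x} log n`. -/
def Pderiv1 (P : Set ℕ) (x : ℝ) : ℝ := -∑' n : P, ((n : ℕ) : ℝ) ^ (-x) * Real.log (n : ℕ)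

/-- `𝒫''(x) = Σ_{n ∈ 𝒫} n^{-x} (log n)^2`. -/
def Pderiv2 (P : Set ℕ) (x : ℝ) : ℝ := ∑' n : P, ((n : ℕ) : ℝ) ^ (-x) * (Real.log (n : ℕ)) ^ 2

/-- The abscissa of convergence `κ` of the Dirichlet series of `P`, as an extended real
(`⊥` when `P` is finite). -/
def kappa (P : Set ℕ) : EReal :=
  sInf {x : EReal | ∃ r : ℝ, x = (r : EReal) ∧ Summable (fun n : P => ((n : ℕ) : ℝ) ^ (-r))}

open Classical in
/-- The (possibly infinite) value `𝒫(x) ∈ (0,∞]` of the Dirichlet series at an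
extended-real point; at `x = -∞` every term `n^{-x}` is infinite. -/
def PvalE (P : Set ℕ) (x : EReal) : ℝ≥0∞ :=
  if x = ⊥ then ⊤ else ∑' n : P, ENNReal.ofReal (((n : ℕ) : ℝ) ^ (-x.toReal))

/-- `b_k(n) = Σ_{m ≥ 0} a_m(n) (m - μ log n)^k`. -/
def bCoef (P : Set ℕ) (μ : ℝ) (k n : ℕ) : ℝ :=
  ∑' m : ℕ, (af P m n : ℝ) * ((m : ℝ) - μ * Real.log n) ^ k

open scoped Topology

lemma abs_pow_le_one_add_abs_pow (t : ℝ) {j n : ℕ} (h : j ≤ n) : |t| ^ j ≤ 1 + |t| ^ n := by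
  rcases le_total |t| 1 with ht | ht
  · linarith [pow_le_one₀ (n := j) (abs_nonneg t) ht, pow_nonneg (abs_nonneg t) n]
  · linarith [pow_le_pow_right₀ ht h]

lemma exists_abs_sum_pow_mul_le (n : ℕ) (a : ℕ → ℝ) : ∃ C, 0 ≤ C ∧ ∀ t : ℝ,
    |∑ j ∈ Finset.range (n + 1), t ^ j * a j| ≤ C * (1 + |t| ^ n) := by
  refine ⟨∑ j ∈ Finset.range (n + 1), |a j|, by positivity, fun t => ?_⟩
  rw [Finset.sum_mul]
  refine (Finset.abs_sum_le_sum_abs _ _).trans (Finset.sum_le_sum fun j hj => ?_)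
  rw [abs_mul, abs_pow, mul_comm]
  exact mul_le_mul_of_nonneg_left
    (abs_pow_le_one_add_abs_pow t (Finset.mem_range_succ_iff.1 hj)) (abs_nonneg _)

lemma abs_add_pow_le (a b : ℝ) (k : ℕ) : |a + b| ^ k ≤ 2 ^ (k - 1) * (|a| ^ k + |b| ^ k) :=
  (pow_le_pow_left₀ (abs_nonneg _) (abs_add_le a b) k).trans
    (add_pow_le (abs_nonneg a) (abs_nonneg b) k)

lemma one_le_sqrt_one_add {x : ℝ} (hx : 0 ≤ x) : 1 ≤ √(1 + x) :=
  Real.one_le_sqrt.2 (by linarith)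

lemma sqrt_one_add_pow_two_mul {x : ℝ} (hx : 0 ≤ x) (r : ℕ) :
    √(1 + x) ^ (2 * r) = (1 + x) ^ r := by
  rw [pow_mul, Real.sq_sqrt (by linarith)]

lemma monotoneOn_one_add_pow (r : ℕ) : MonotoneOn (fun x : ℝ => (1 + x) ^ r) (Set.Ici 0) :=
  fun _ hx _ _ hxy =>
    pow_le_pow_left₀ (add_nonneg zero_le_one hx) (add_le_add_right hxy 1) r

lemma le_div_one_sub_of_le_add_mul {f G : ℝ → ℝ} {c θ : ℝ} (hc : 0 < c) (hθ0 : 0 ≤ θ)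
    (hθ1 : θ < 1) (hG : MonotoneOn G (Set.Ici 0)) (hG0 : 0 ≤ G 0)
    (hinit : ∀ x, 0 ≤ x → x < c → f x ≤ G x) (hrec : ∀ x, c ≤ x → f x ≤ G x + θ * f (x - c))
    {x : ℝ} (hx : 0 ≤ x) : f x ≤ G x / (1 - θ) := by
  have hθ : 0 < 1 - θ := sub_pos.2 hθ1
  obtain ⟨n, hn⟩ := exists_nat_gt (x / c)
  rw [div_lt_iff₀ hc] at hn
  induction n generalizing x with
  | zero => simp only [Nat.cast_zero, zero_mul] at hn; linarith
  | succ n ih =>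
    have hGx : 0 ≤ G x := hG0.trans (hG Set.self_mem_Ici hx hx)
    rcases lt_or_ge x c with hxc | hcx
    · exact (hinit x hx hxc).trans (le_div_self hGx hθ (by linarith))
    · have hxc : 0 ≤ x - c := sub_nonneg.2 hcx
      push_cast at hn
      calc f x ≤ G x + θ * f (x - c) := hrec x hcx
        _ ≤ G x + θ * (G (x - c) / (1 - θ)) := by gcongr; exact ih hxc (by linarith)
        _ ≤ G x + θ * (G x / (1 - θ)) := by gcongr; exact hG hxc hx (by linarith)
        _ = G x / (1 - θ) := by field_simp; ring

lemma intervalIntegrable_ite_exp (d : ℝ) {t B : ℝ} (ht : 0 ≤ t) (hB : t ≤ B) :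
    IntervalIntegrable (fun x => if t ≤ x then Real.exp (-d * (x - t)) else 0)
      MeasureTheory.volume 0 B := by
  refine .trans (b := t) ?_ ?_
  · refine (intervalIntegrable_const (c := (0 : ℝ))).congr_uIoo fun x hx => ?_
    rw [Set.uIoo_of_le ht] at hx
    simp [hx.2.not_ge]
  · refine (Continuous.intervalIntegrable (u := fun x => Real.exp (-d * (x - t)))
      (by fun_prop) t B).congr_uIoo fun x hx => ?_
    rw [Set.uIoo_of_le hB] at hx
    simp [hx.1.le]

lemma mul_integral_ite_exp (d : ℝ) {t B : ℝ} (ht : 0 ≤ t) (hB : t ≤ B) :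
    d * ∫ x in (0 : ℝ)..B, (if t ≤ x then Real.exp (-d * (x - t)) else 0) =
      1 - Real.exp (-d * (B - t)) := by
  have hsplit := intervalIntegral.integral_add_adjacent_intervals
    (intervalIntegrable_ite_exp d ht le_rfl)
    ((intervalIntegrable_ite_exp d ht le_rfl).symm.trans (intervalIntegrable_ite_exp d ht hB))
  rw [intervalIntegral.integral_congr_Ioo_of_le (g := fun _ => 0) ht
      (fun x hx => by simp [hx.2.not_ge]),
    intervalIntegral.integral_congr_Ioo_of_le (g := fun x => Real.exp (-d * (x - t))) hB
      (fun x hx => by simp [hx.1.le]), intervalIntegral.integral_zero, zero_add] at hsplit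
  have hderiv : ∀ x ∈ Set.uIcc t B,
      HasDerivAt (fun x => -Real.exp (-d * (x - t))) (d * Real.exp (-d * (x - t))) x :=
    fun x _ => (((hasDerivAt_id x).sub_const t).const_mul (-d)).exp.neg.congr_deriv (by
      simp only [id_eq]; ring)
  rw [← hsplit, ← intervalIntegral.integral_const_mul,
    intervalIntegral.integral_eq_sub_of_hasDerivAt hderiv
      (Continuous.intervalIntegrable (by fun_prop) _ _)]
  simp only [sub_self, mul_zero, Real.exp_zero]
  ring

lemma tendsto_sqrt_one_add : Tendsto (fun x : ℝ => √(1 + x)) atTop atTop :=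
  Real.tendsto_sqrt_atTop.comp (tendsto_atTop_add_const_left _ 1 tendsto_id)

lemma tendsto_sqrt_one_add_pow {k : ℕ} (hk : k ≠ 0) :
    Tendsto (fun x : ℝ => √(1 + x) ^ k) atTop atTop :=
  (tendsto_pow_atTop hk).comp tendsto_sqrt_one_add

lemma sqrt_one_add_pow_isLittleO {j k : ℕ} (h : j < k) :
    (fun x : ℝ => √(1 + x) ^ j) =o[atTop] fun x => √(1 + x) ^ k :=
  (isLittleO_pow_pow_atTop_of_lt h).comp_tendsto tendsto_sqrt_one_add

lemma sqrt_one_add_pow_isBigO (k : ℕ) :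
    (fun x : ℝ => √(1 + x) ^ k) =O[atTop] fun x => x ^ ((k : ℝ) / 2) := by
  refine IsBigO.of_bound (√2 ^ k) ?_
  filter_upwards [eventually_ge_atTop 1] with x hx
  have hx0 : 0 ≤ x := zero_le_one.trans hx
  rw [Real.norm_of_nonneg (by positivity), Real.norm_of_nonneg (by positivity)]
  calc √(1 + x) ^ k ≤ √(2 * x) ^ k := by
        gcongr
        linarith
    _ = √2 ^ k * x ^ ((k : ℝ) / 2) := by
        rw [Real.sqrt_mul zero_le_two, mul_pow, Real.sqrt_eq_rpow x, ← Real.rpow_mul_natCast hx0,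
          one_div_mul_eq_div]

lemma abs_add_pow_succ_sub_le (t s : ℝ) (k : ℕ) : |(t + s) ^ (k + 1) - t ^ (k + 1)| ≤
    2 ^ (k + 1) * (1 + |t| ^ k) * (1 + |s| ^ (k + 1)) := by
  have hchoose : (2 : ℝ) ^ (k + 1) = ∑ j ∈ Finset.range (k + 2), ((k + 1).choose j : ℝ) := by
    exact_mod_cast (Nat.sum_range_choose (k + 1)).symm
  rw [hchoose, Finset.sum_mul, Finset.sum_mul, add_pow, Finset.sum_range_succ _ (k + 1),
    Finset.sum_range_succ _ (k + 1), Nat.sub_self, Nat.choose_self, pow_zero, Nat.cast_one,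
    mul_one, mul_one, add_sub_cancel_right]
  refine le_add_of_le_of_nonneg ?_ (by positivity)
  refine (Finset.abs_sum_le_sum_abs _ _).trans (Finset.sum_le_sum fun j hj => ?_)
  rw [abs_mul, abs_mul, abs_pow, abs_pow, Nat.abs_cast, mul_comm, ← mul_assoc]
  gcongr
  · exact abs_pow_le_one_add_abs_pow t (Finset.mem_range_succ_iff.1 hj)
  · exact abs_pow_le_one_add_abs_pow s (Nat.sub_le _ _)

section ChoquetDeny

variable {ι G : Type*} [AddCommMonoid G] {q : ι → ℝ} {l : ι → G} {K : ℝ} {F : G → ℝ}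

/-- `F` is bounded by `K` and harmonic for the random walk on `G` which jumps by `l i` with
probability `q i`. -/
structure IsBoundedHarmonic (q : ι → ℝ) (l : ι → G) (K : ℝ) (F : G → ℝ) : Prop where
  bound : ∀ t, |F t| ≤ K
  hasSum : ∀ t, HasSum (fun i => q i * F (t + l i)) (F t)

namespace IsBoundedHarmonic

lemma neg (hF : IsBoundedHarmonic q l K F) : IsBoundedHarmonic q l K (-F) where
  bound t := by simpa using hF.bound t
  hasSum t := by simpa using (hF.hasSum t).neg

lemma sub_translate (hF : IsBoundedHarmonic q l K F) (a : G) :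
    IsBoundedHarmonic q l (K + K) fun t => F t - F (t + a) where
  bound t := (abs_sub _ _).trans (add_le_add (hF.bound _) (hF.bound _))
  hasSum t := by
    simpa only [mul_sub, add_right_comm _ a] using (hF.hasSum t).sub (hF.hasSum (t + a))

lemma eq_of_forall_le (hF : IsBoundedHarmonic q l K F) (hq : ∀ i, 0 < q i) (hq1 : HasSum q 1)
    {t : G} (h : ∀ s, F s ≤ F t) (i : ι) : F (t + l i) = F t := by
  have hsum : HasSum (fun i => q i * (F t - F (t + l i))) 0 := by
    simpa only [mul_sub, one_mul, sub_self] using (hq1.mul_right (F t)).sub (hF.hasSum t)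
  have hzero := (hasSum_zero_iff_of_nonneg fun i =>
    mul_nonneg (hq i).le (sub_nonneg.2 (h (t + l i)))).1 hsum
  have := (mul_eq_zero.1 (congrFun hzero i)).resolve_left (hq i).ne'
  linarith

lemma exists_tendsto {α : Type*} (U : Ultrafilter α) (hq : ∀ i, 0 ≤ q i) (hqs : Summable q)
    {f : α → G → ℝ} (hK : ∀ a t, |f a t| ≤ K)
    (hf : ∀ t, Tendsto (fun a => f a t - ∑' i, q i * f a (t + l i)) U (𝓝 0)) :
    ∃ F, IsBoundedHarmonic q l K F ∧ ∀ t, Tendsto (f · t) U (𝓝 (F t)) := by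
  have hlim : ∀ t, ∃ y ∈ Set.Icc (-K) K, Tendsto (f · t) U (𝓝 y) := fun t =>
    isCompact_Icc.ultrafilter_le_nhds (U.map (f · t))
      (le_principal_iff.2 (mem_map.2 (univ_mem' fun a => abs_le.1 (hK a t))))
  choose F hFK hF using hlim
  have hFK' : ∀ t, |F t| ≤ K := fun t => abs_le.2 (hFK t)
  refine ⟨F, ⟨hFK', fun t => ?_⟩, hF⟩
  have hbound : ∀ (c : ℝ) i, |c| ≤ K → ‖q i * c‖ ≤ q i * K := fun c i hc => by
    rw [norm_mul, Real.norm_of_nonneg (hq i)]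
    exact mul_le_mul_of_nonneg_left hc (hq i)
  have hdom := tendsto_tsum_of_dominated_convergence (𝓕 := (U : Filter α))
    (f := fun a i => q i * f a (t + l i)) (hqs.mul_right K)
    (fun i => (hF (t + l i)).const_mul (q i))
    (Eventually.of_forall fun a i => hbound _ i (hK a _))
  have hFt := tendsto_nhds_unique (hF t) (((hf t).add hdom).congr fun a => sub_add_cancel _ _)
  rw [zero_add] at hFt
  rw [hFt]
  exact ((hqs.mul_right K).of_norm_bounded fun i => hbound _ i (hFK' _)).hasSum

/-- Some limit of translates of `F` attains the supremum of `F t - F (t + a)`, hence attains it all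
along the walk by the maximum principle; summing along a ray of step `a = l i` contradicts
boundedness, unless this supremum is nonpositive. -/
lemma sub_translate_nonpos (hF : IsBoundedHarmonic q l K F) (hq : ∀ i, 0 < q i) (hq1 : HasSum q 1)
    (i : ι) (t : G) : F t - F (t + l i) ≤ 0 := by
  set D : G → ℝ := fun t => F t - F (t + l i)
  have hbdd : BddAbove (Set.range D) := ⟨K + K, by
    rintro _ ⟨t, rfl⟩
    exact (le_abs_self _).trans ((hF.sub_translate _).bound t)⟩
  obtain ⟨u, -, hu, hmem⟩ := exists_seq_tendsto_sSup (Set.range_nonempty D) hbdd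
  choose s hs using hmem
  obtain ⟨H, hH, hlim⟩ := exists_tendsto (hyperfilter ℕ) (fun i => (hq i).le) hq1.summable
    (f := fun n t => F (s n + t)) (fun _ _ => hF.bound _) (l := l) fun t => by
      simp only [← add_assoc, (hF.hasSum _).tsum_eq, sub_self, tendsto_const_nhds]
  have hdiff : ∀ t, Tendsto (fun n => D (s n + t)) (hyperfilter ℕ) (𝓝 (H t - H (t + l i))) :=
    fun t => by simpa only [D, add_assoc] using (hlim t).sub (hlim (t + l i))
  have hsup : H 0 - H (0 + l i) = sSup (Set.range D) :=
    tendsto_nhds_unique (hdiff 0) ((hu.mono_left Nat.hyperfilter_le_atTop).congr fun n => by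
      rw [add_zero, hs])
  have hmax : ∀ t, H t - H (t + l i) ≤ sSup (Set.range D) := fun t =>
    le_of_tendsto (hdiff t) (Eventually.of_forall fun n => le_csSup hbdd ⟨_, rfl⟩)
  have hray : ∀ j : ℕ, H (j • l i) - H (j • l i + l i) = sSup (Set.range D) := fun j => by
    induction j with
    | zero => simpa using hsup
    | succ j ih =>
      rw [succ_nsmul, ← ih]
      exact (hH.sub_translate (l i)).eq_of_forall_le hq hq1 (fun t => by rw [ih]; exact hmax t) i
  refine (le_csSup hbdd ⟨t, rfl⟩).trans (le_of_not_gt fun hpos => ?_)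
  obtain ⟨n, hn⟩ := exists_nat_gt ((K + K) / sSup (Set.range D))
  have htelescope := Finset.sum_range_sub' (fun j : ℕ => H (j • l i)) n
  simp only [succ_nsmul, hray, Finset.sum_const, Finset.card_range, nsmul_eq_mul] at htelescope
  rw [div_lt_iff₀ hpos, htelescope] at hn
  linarith [(abs_le.1 (hH.bound (0 • l i))).2, (abs_le.1 (hH.bound (n • l i))).1]

/-- The Choquet–Deny theorem. -/
theorem translate_eq (hF : IsBoundedHarmonic q l K F) (hq : ∀ i, 0 < q i) (hq1 : HasSum q 1)
    (i : ι) (t : G) : F (t + l i) = F t := by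
  have hneg := hF.neg.sub_translate_nonpos hq hq1 i t
  rw [Pi.neg_apply, Pi.neg_apply] at hneg
  linarith [hF.sub_translate_nonpos hq hq1 i t]

end IsBoundedHarmonic

end ChoquetDeny

/-- Along any ultrafilter at infinity the translates of `Z` converge to a bounded harmonic
function, which is invariant under the jumps. -/
theorem tendsto_sub_of_renewal {ι : Type*} {q l : ι → ℝ} {Z e : ℝ → ℝ} {K : ℝ}
    (hq : ∀ i, 0 < q i) (hq1 : HasSum q 1) (hK : ∀ x, |Z x| ≤ K)
    (hZ : ∀ x, Z x = e x + ∑' i, q i * Z (x - l i)) (he : Tendsto e atTop (𝓝 0)) (i : ι) :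
    Tendsto (fun x => Z x - Z (x - l i)) atTop (𝓝 0) := by
  rw [tendsto_iff_ultrafilter]
  intro U hU
  obtain ⟨F, hF, hlim⟩ := IsBoundedHarmonic.exists_tendsto U (fun i => (hq i).le) hq1.summable
    (f := fun x t => Z (x - t)) (l := l) (fun _ _ => hK _) fun t => by
      refine (he.comp ((tendsto_atTop_add_const_right _ (-t) tendsto_id).mono_left hU)).congr
        fun x => ?_
      simp only [← sub_sub]
      exact eq_sub_of_add_eq (hZ (x - t)).symm
  have hzero := (hlim 0).sub (hlim (0 + l i))
  rw [hF.translate_eq hq hq1, sub_self] at hzero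
  simpa only [zero_add, sub_zero] using hzero

/-- The asymptotic periods of `f`, a group so that their density can be tested on generators. -/
def asymptoticPeriods (f : ℝ → ℝ) : AddSubgroup ℝ where
  carrier := {a | Tendsto (fun x => f x - f (x - a)) atTop (𝓝 0)}
  zero_mem' := by simp
  add_mem' {a b} ha hb := by
    have h := ha.add (hb.comp (tendsto_atTop_add_const_right _ (-a) tendsto_id))
    rw [add_zero] at h
    refine h.congr fun x => ?_
    simp only [Function.comp_apply, id_eq, ← sub_eq_add_neg, sub_sub, sub_add_sub_cancel]
  neg_mem' {a} ha := by
    have h := (ha.comp (tendsto_atTop_add_const_right _ a tendsto_id)).neg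
    rw [neg_zero] at h
    refine h.congr fun x => ?_
    simp

lemma mem_asymptoticPeriods {f : ℝ → ℝ} {a : ℝ} :
    a ∈ asymptoticPeriods f ↔ Tendsto (fun x => f x - f (x - a)) atTop (𝓝 0) := Iff.rfl

/-- Slow decrease in the sense of Tauberian theory, uniformly on the line. -/
def IsSlowlyDecreasing (f : ℝ → ℝ) : Prop :=
  ∀ ε > 0, ∃ δ > 0, ∀ x y, x ≤ y → y ≤ x + δ → f x ≤ f y + ε

lemma isSlowlyDecreasing_of_le_exp_mul {f : ℝ → ℝ} {d K : ℝ} (hd : 0 ≤ d) (h0 : ∀ x, 0 ≤ f x)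
    (hK : ∀ x, f x ≤ K) (hf : ∀ x y, x ≤ y → f x ≤ Real.exp (d * (y - x)) * f y) :
    IsSlowlyDecreasing f := by
  intro ε hε
  have hcont : Continuous fun δ : ℝ => K * (Real.exp (d * δ) - 1) := by fun_prop
  have hlim := hcont.tendsto 0
  simp only [mul_zero, Real.exp_zero, sub_self] at hlim
  obtain ⟨δ, hδε, hδ⟩ := (((hlim.mono_left nhdsWithin_le_nhds).eventually_le_const hε).and
    (self_mem_nhdsWithin (s := Set.Ioi 0))).exists
  refine ⟨δ, hδ, fun x y hxy hyx => ?_⟩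
  have hone : 1 ≤ Real.exp (d * (y - x)) :=
    Real.one_le_exp (mul_nonneg hd (sub_nonneg.2 hxy))
  calc f x ≤ f y + f y * (Real.exp (d * (y - x)) - 1) := (hf x y hxy).trans_eq (by ring)
    _ ≤ f y + K * (Real.exp (d * δ) - 1) := by
        have hK0 := (h0 y).trans (hK y)
        have := sub_nonneg.2 hone
        gcongr
        exacts [hK y, by linarith]
    _ ≤ f y + ε := by gcongr

lemma IsSlowlyDecreasing.eventually_nhds_abs_sub_le {f : ℝ → ℝ} (hf : IsSlowlyDecreasing f)
    (hdense : Dense (asymptoticPeriods f : Set ℝ)) (c : ℝ) {ε : ℝ} (hε : 0 < ε) :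
    ∃ s ∈ 𝓝 c, ∀ᶠ x in atTop, ∀ b ∈ s, |f x - f (x - b)| ≤ ε := by
  obtain ⟨δ, hδ, hslow⟩ := hf (ε / 2) (half_pos hε)
  obtain ⟨a, ha, hac⟩ := hdense.exists_between (show c - δ / 2 < c by linarith)
  obtain ⟨a', ha', hca⟩ := hdense.exists_between (show c < c + δ / 2 by linarith)
  refine ⟨Set.Ioo a a', Ioo_mem_nhds hac.2 hca.1, ?_⟩
  have hsmall : ∀ a ∈ asymptoticPeriods f, ∀ᶠ x in atTop, |f x - f (x - a)| < ε / 2 :=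
    fun a ha => by
      simpa using (mem_asymptoticPeriods.1 ha).eventually (Metric.ball_mem_nhds 0 (half_pos hε))
  filter_upwards [hsmall a ha, hsmall a' ha'] with x hx hx' b hb
  rw [abs_lt] at hx hx'
  have hright := hslow (x - b) (x - a) (by linarith [hb.1]) (by linarith [hb.2, hac.1, hca.2])
  have hleft := hslow (x - a') (x - b) (by linarith [hb.2]) (by linarith [hb.1, hac.1, hca.2])
  rw [abs_le]
  constructor <;> linarith

theorem IsSlowlyDecreasing.eventually_abs_sub_le {f : ℝ → ℝ} (hf : IsSlowlyDecreasing f)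
    (hdense : Dense (asymptoticPeriods f : Set ℝ)) (C : ℝ) {ε : ℝ} (hε : 0 < ε) :
    ∀ᶠ x in atTop, ∀ b ∈ Set.Icc 0 C, |f x - f (x - b)| ≤ ε := by
  refine isCompact_Icc.induction_on (p := fun s => ∀ᶠ x in atTop, ∀ b ∈ s, |f x - f (x - b)| ≤ ε)
    (by simp) (fun s t hst ht => ht.mono fun x hx b hb => hx b (hst hb)) (fun s t hs ht => ?_)
    fun c _ => ?_
  · filter_upwards [hs, ht] with x hxs hxt b hb using hb.elim (hxs b) (hxt b)
  · obtain ⟨s, hs, h⟩ := hf.eventually_nhds_abs_sub_le hdense c hε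
    exact ⟨s, mem_nhdsWithin_of_mem_nhds hs, h⟩

/-- A marked renewal process: i.i.d. letters `i : ι`, drawn with probability `prob i`, each taking
the time `span i` and carrying the centred mark `mark i`. The moment condition provides an
exponential moment of the span, of order `rate`, jointly with all moments of the mark. -/
structure MarkedRenewal (ι : Type*) where
  prob : ι → ℝ
  span : ι → ℝ
  mark : ι → ℝ
  gap : ℝ
  rate : ℝ
  prob_pos : ∀ i, 0 < prob i
  gap_pos : 0 < gap
  gap_le_span : ∀ i, gap ≤ span i
  finite_span_le : ∀ B, {i | span i ≤ B}.Finite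
  hasSum_prob : HasSum prob 1
  hasSum_mark : HasSum (fun i => prob i * mark i) 0
  rate_pos : 0 < rate
  summable_expMoment : ∀ k : ℕ, Summable fun i => prob i * (Real.exp (rate * span i) * |mark i| ^ k)

namespace MarkedRenewal

variable {ι : Type*} (S : MarkedRenewal ι)

/-- The renewal epoch reached after reading the word `w`. -/
def time (w : List ι) : ℝ := (w.map S.span).sum

/-- The sum of the marks of the letters of `w`. -/
def height (w : List ι) : ℝ := (w.map S.mark).sum

/-- The probability that the process starts with the word `w`. -/
def wordProb (w : List ι) : ℝ := (w.map S.prob).prod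

@[simp] lemma time_nil : S.time [] = 0 := rfl

@[simp] lemma height_nil : S.height [] = 0 := rfl

@[simp] lemma wordProb_nil : S.wordProb [] = 1 := rfl

@[simp] lemma time_cons (i : ι) (w : List ι) : S.time (i :: w) = S.span i + S.time w := by
  simp [time]

@[simp] lemma height_cons (i : ι) (w : List ι) : S.height (i :: w) = S.mark i + S.height w := by
  simp [height]

@[simp] lemma wordProb_cons (i : ι) (w : List ι) :
    S.wordProb (i :: w) = S.prob i * S.wordProb w := by
  simp [wordProb]

lemma span_pos (i : ι) : 0 < S.span i := S.gap_pos.trans_le (S.gap_le_span i)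

lemma wordProb_pos (w : List ι) : 0 < S.wordProb w :=
  List.prod_pos fun _ h => by
    obtain ⟨i, -, rfl⟩ := List.mem_map.1 h
    exact S.prob_pos i

lemma time_nonneg (w : List ι) : 0 ≤ S.time w :=
  List.sum_nonneg fun _ h => by
    obtain ⟨i, -, rfl⟩ := List.mem_map.1 h
    exact (S.span_pos i).le

lemma length_mul_gap_le_time (w : List ι) : w.length * S.gap ≤ S.time w := by
  induction w with
  | nil => simp
  | cons i w ih =>
    simp only [List.length_cons, Nat.cast_add, Nat.cast_one, time_cons]
    linarith [S.gap_le_span i]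

lemma finite_time_le (B : ℝ) : {w | S.time w ≤ B}.Finite := by
  obtain ⟨n, hn⟩ := exists_nat_gt (B / S.gap)
  rw [div_lt_iff₀ S.gap_pos] at hn
  have : Finite {i | S.span i ≤ B} := S.finite_span_le B
  refine ((List.finite_length_lt {i | S.span i ≤ B} n).image (List.map (↑))).subset fun w hw => ?_
  have hletters : ∀ i ∈ w, S.span i ≤ B := fun i hi =>
    (List.single_le_sum (by simpa using fun j _ => (S.span_pos j).le) _
      (List.mem_map_of_mem hi)).trans hw
  obtain ⟨v, rfl⟩ : ∃ v : List {i | S.span i ≤ B}, v.map (↑) = w := CanLift.prf w hletters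
  refine ⟨v, ?_, rfl⟩
  have hlength : ((v.map Subtype.val).length : ℝ) * S.gap < n * S.gap :=
    ((S.length_mul_gap_le_time _).trans hw).trans_lt hn
  simpa using lt_of_mul_lt_mul_right hlength S.gap_pos.le

/-- The words read entirely up to time `B`. -/
def words (B : ℝ) : Finset (List ι) := (S.finite_time_le B).toFinset

/-- The letters whose span is at most `B`. -/
def letters (B : ℝ) : Finset ι := (S.finite_span_le B).toFinset

@[simp] lemma mem_words {B : ℝ} {w : List ι} : w ∈ S.words B ↔ S.time w ≤ B := by simp [words]

@[simp] lemma mem_letters {B : ℝ} {i : ι} : i ∈ S.letters B ↔ S.span i ≤ B := by simp [letters]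

lemma words_of_neg {B : ℝ} (hB : B < 0) : S.words B = ∅ :=
  Finset.eq_empty_of_forall_notMem fun w hw =>
    absurd (S.time_nonneg w) (((S.mem_words.1 hw).trans_lt hB).not_ge)

lemma words_of_lt_gap {B : ℝ} (h0 : 0 ≤ B) (hB : B < S.gap) : S.words B = {[]} := by
  ext w
  rw [mem_words, Finset.mem_singleton]
  refine ⟨fun hw => ?_, fun hw => by simpa [hw]⟩
  rcases w with - | ⟨i, u⟩
  · rfl
  · rw [time_cons] at hw
    linarith [S.gap_le_span i, S.time_nonneg u]

lemma words_mono : Monotone S.words := fun _ _ h _ hw =>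
  S.mem_words.2 ((S.mem_words.1 hw).trans h)

lemma sum_words (B : ℝ) (g : List ι → ℝ) :
    ∑ w ∈ S.words B, g w = (if 0 ≤ B then g [] else 0) +
      ∑ i ∈ S.letters B, ∑ u ∈ S.words B, if S.time u + S.span i ≤ B then g (i :: u) else 0 := by
  classical
  rw [← Finset.sum_filter_add_sum_filter_not (S.words B) (· = []) g, Finset.sum_filter,
    Finset.sum_ite_eq' (S.words B) [] g, ← Finset.sum_product', ← Finset.sum_filter]
  congr 1
  · simp
  · refine (Finset.sum_bij (fun x _ => x.1 :: x.2) (fun x hx => ?_) (fun x _ y _ hxy => ?_)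
      (fun w hw => ?_) fun _ _ => rfl).symm
    · simp only [Finset.mem_filter, Finset.mem_product] at hx
      simpa [add_comm] using hx.2
    · exact Prod.ext (List.cons.inj hxy).1 (List.cons.inj hxy).2
    · rcases w with - | ⟨i, u⟩
      · simp at hw
      · have hle : S.span i + S.time u ≤ B := by simpa using hw
        refine ⟨(i, u), ?_, rfl⟩
        simp only [Finset.mem_filter, Finset.mem_product, mem_letters, mem_words]
        exact ⟨⟨by linarith [S.time_nonneg u], by linarith [S.span_pos i]⟩, by linarith⟩

lemma sum_words_eq_tsum (B : ℝ) (g : List ι → ℝ) :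
    ∑ w ∈ S.words B, g w = (if 0 ≤ B then g [] else 0) +
      ∑' i, ∑ u ∈ S.words (B - S.span i), g (i :: u) := by
  rw [sum_words, tsum_eq_sum (s := S.letters B)]
  · congr 1
    refine Finset.sum_congr rfl fun i _ => ?_
    rw [← Finset.sum_filter]
    refine Finset.sum_congr (Finset.ext fun u => ?_) fun _ _ => rfl
    rw [Finset.mem_filter, mem_words, mem_words, le_sub_iff_add_le]
    exact and_iff_right_of_imp fun h => by linarith [S.span_pos i]
  · intro i hi
    rw [mem_letters, not_le] at hi
    rw [S.words_of_neg (by linarith), Finset.sum_empty]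

lemma sum_words_eq_sum_tsum (B : ℝ) (g : List ι → ℝ) :
    ∑ w ∈ S.words B, g w = (if 0 ≤ B then g [] else 0) +
      ∑ u ∈ S.words B, ∑' i, if S.time u + S.span i ≤ B then g (i :: u) else 0 := by
  rw [sum_words, Finset.sum_comm]
  congr 1
  refine Finset.sum_congr rfl fun u _ => (tsum_eq_sum fun i hi => if_neg ?_).symm
  rw [mem_letters, not_le] at hi
  linarith [S.time_nonneg u]

/-- The one-step transition operator: the mean of `f` over the letter read from the state with
height `t` and time `x`. -/
def step (f : ℝ → ℝ → ℝ) (t x : ℝ) : ℝ := ∑' i, S.prob i * f (t + S.mark i) (x + S.span i)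

/-- Finiteness of the mean defining `step f t x`, from every state. -/
def StepSummable (f : ℝ → ℝ → ℝ) : Prop :=
  ∀ t x, Summable fun i => S.prob i * f (t + S.mark i) (x + S.span i)

/-- The mean of `f (height) (time)` at the first renewal epoch after `B`: the word `w` is the one
read up to time `B`, the letter summed over in `step` is the one that straddles `B`. -/
def firstPassage (B : ℝ) (f : ℝ → ℝ → ℝ) : ℝ :=
  ∑ w ∈ S.words B,
    S.wordProb w * S.step (fun t x => if B < x then f t x else 0) (S.height w) (S.time w)

/-- The mean of `φ (height)` over the renewal epochs up to `L`, discounted at rate `d` by the time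
left until `L`. -/
def discounted (d : ℝ) (φ : ℝ → ℝ) (L : ℝ) : ℝ :=
  ∑ u ∈ S.words L, S.wordProb u * (Real.exp (-d * (L - S.time u)) * φ (S.height u))

section StepSummable

variable {S} {f g : ℝ → ℝ → ℝ}

lemma StepSummable.of_abs_le (hg : S.StepSummable g) (hfg : ∀ t x, |f t x| ≤ g t x) :
    S.StepSummable f := fun t x =>
  (hg t x).of_norm_bounded fun i => by
    rw [norm_mul, Real.norm_of_nonneg (S.prob_pos i).le]
    exact mul_le_mul_of_nonneg_left (hfg _ _) (S.prob_pos i).le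

lemma StepSummable.abs (hf : S.StepSummable f) : S.StepSummable fun t x => |f t x| := fun t x =>
  (hf t x).abs.congr fun i => by rw [abs_mul, abs_of_pos (S.prob_pos i)]

lemma StepSummable.ite (hf : S.StepSummable f) (p : ℝ → Prop) [DecidablePred p] :
    S.StepSummable fun t x => if p x then f t x else 0 :=
  hf.abs.of_abs_le fun t x => by split_ifs <;> simp

lemma StepSummable.add (hf : S.StepSummable f) (hg : S.StepSummable g) :
    S.StepSummable (f + g) := fun t x =>
  ((hf t x).add (hg t x)).congr fun i => by simp [mul_add]

lemma StepSummable.const_smul (hf : S.StepSummable f) (c : ℝ) : S.StepSummable (c • f) :=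
  fun t x => ((hf t x).mul_left c).congr fun i => by simp [mul_left_comm]

end StepSummable

variable {f g : ℝ → ℝ → ℝ}

lemma step_add (hf : S.StepSummable f) (hg : S.StepSummable g) :
    S.step (f + g) = S.step f + S.step g := by
  ext t x
  simp only [step, Pi.add_apply, mul_add]
  exact (hf t x).tsum_add (hg t x)

lemma step_const_smul (c : ℝ) (f : ℝ → ℝ → ℝ) : S.step (c • f) = c • S.step f := by
  ext t x
  simp only [step, Pi.smul_apply, smul_eq_mul, mul_left_comm _ c, tsum_mul_left]

lemma step_mono (hf : S.StepSummable f) (hg : S.StepSummable g) (h : f ≤ g) :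
    S.step f ≤ S.step g := fun t x =>
  (hf t x).tsum_le_tsum (fun i => mul_le_mul_of_nonneg_left (h _ _) (S.prob_pos i).le) (hg t x)

lemma firstPassage_add (hf : S.StepSummable f) (hg : S.StepSummable g) (B : ℝ) :
    S.firstPassage B (f + g) = S.firstPassage B f + S.firstPassage B g := by
  have hite : (fun t x => if B < x then (f + g) t x else 0) =
      (fun t x => if B < x then f t x else 0) + fun t x => if B < x then g t x else 0 := by
    ext t x
    by_cases h : B < x <;> simp [h]
  rw [firstPassage, hite, S.step_add (hf.ite _) (hg.ite _)]
  simp only [firstPassage, Pi.add_apply, mul_add, Finset.sum_add_distrib]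

lemma firstPassage_const_smul (c : ℝ) (f : ℝ → ℝ → ℝ) (B : ℝ) :
    S.firstPassage B (c • f) = c * S.firstPassage B f := by
  have hite : (fun t x => if B < x then (c • f) t x else 0) =
      c • fun t x => if B < x then f t x else 0 := by
    ext t x
    by_cases h : B < x <;> simp [h]
  rw [firstPassage, hite, step_const_smul]
  simp only [firstPassage, Pi.smul_apply, smul_eq_mul, mul_left_comm _ c, Finset.mul_sum]

lemma firstPassage_mono (hf : S.StepSummable f) (hg : S.StepSummable g) {B : ℝ}
    (h : ∀ t x, B < x → f t x ≤ g t x) : S.firstPassage B f ≤ S.firstPassage B g :=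
  Finset.sum_le_sum fun w _ => mul_le_mul_of_nonneg_left
    (S.step_mono (hf.ite _) (hg.ite _) (fun t x => by
      change (if B < x then f t x else 0) ≤ if B < x then g t x else 0
      split_ifs with hx
      exacts [h t x hx, le_rfl]) _ _) (S.wordProb_pos w).le

lemma abs_firstPassage_le (hf : S.StepSummable f) (hg : S.StepSummable g) {B : ℝ}
    (h : ∀ t x, B < x → |f t x| ≤ g t x) : |S.firstPassage B f| ≤ S.firstPassage B g := by
  rw [abs_le']
  refine ⟨S.firstPassage_mono hf hg fun t x hx => (abs_le'.1 (h t x hx)).1, ?_⟩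
  rw [← neg_one_mul, ← firstPassage_const_smul]
  refine S.firstPassage_mono (hf.const_smul _) hg fun t x hx => ?_
  simpa using (abs_le'.1 (h t x hx)).2

/-- Dynkin's formula for the process stopped at its first epoch after `B`. -/
theorem firstPassage_add_sum_words (hf : S.StepSummable f) {B : ℝ} (hB : 0 ≤ B) :
    S.firstPassage B f + ∑ w ∈ S.words B, S.wordProb w * f (S.height w) (S.time w) =
      f 0 0 + ∑ w ∈ S.words B, S.wordProb w * S.step f (S.height w) (S.time w) := by
  have hsplit : f = (fun t x => if B < x then f t x else 0) +
      fun t x => if x ≤ B then f t x else 0 := by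
    ext t x
    rcases lt_or_ge B x with h | h <;> simp [h, not_le.2, not_lt.2]
  have hread : ∀ w : List ι, ∑' i, (if S.time w + S.span i ≤ B then
      S.wordProb (i :: w) * f (S.height (i :: w)) (S.time (i :: w)) else 0) =
      S.wordProb w * S.step (fun t x => if x ≤ B then f t x else 0) (S.height w) (S.time w) := by
    intro w
    rw [step, ← tsum_mul_left]
    refine tsum_congr fun i => ?_
    rw [wordProb_cons, height_cons, time_cons, add_comm (S.mark i), add_comm (S.span i)]
    split_ifs <;> ring
  rw [S.sum_words_eq_sum_tsum B fun w => S.wordProb w * f (S.height w) (S.time w), if_pos hB]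
  conv_rhs => rw [hsplit, S.step_add (hf.ite _) (hf.ite _)]
  simp only [hread, firstPassage, Pi.add_apply, mul_add, Finset.sum_add_distrib, wordProb_nil,
    height_nil, time_nil, one_mul, if_neg hB.not_gt, if_pos hB, zero_add]
  ring

lemma discounted_of_neg (d : ℝ) (φ : ℝ → ℝ) {L : ℝ} (hL : L < 0) : S.discounted d φ L = 0 := by
  rw [discounted, S.words_of_neg hL, Finset.sum_empty]

lemma discounted_of_lt_gap (d : ℝ) (φ : ℝ → ℝ) {L : ℝ} (h0 : 0 ≤ L) (hL : L < S.gap) :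
    S.discounted d φ L = Real.exp (-d * L) * φ 0 := by
  simp [discounted, S.words_of_lt_gap h0 hL]

theorem discounted_renewal (d : ℝ) (φ : ℝ → ℝ) (L : ℝ) :
    S.discounted d φ L = (if 0 ≤ L then Real.exp (-d * L) * φ 0 else 0) +
      ∑' i, S.prob i * S.discounted d (fun s => φ (S.mark i + s)) (L - S.span i) := by
  rw [discounted, sum_words_eq_tsum]
  simp only [wordProb_nil, height_nil, time_nil, one_mul, sub_zero]
  congr 1
  refine tsum_congr fun i => ?_
  rw [discounted, Finset.mul_sum]
  refine Finset.sum_congr rfl fun u _ => ?_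
  rw [wordProb_cons, height_cons, time_cons, mul_assoc, sub_sub]

lemma stepSummable_discounted (d : ℝ) (φ : ℝ → ℝ) (L : ℝ) :
    S.StepSummable fun t x => S.discounted d (fun s => φ (t + s)) (L - x) := fun t x =>
  summable_of_ne_finset_zero (s := S.letters (L - x)) fun i hi => by
    rw [mem_letters, not_le] at hi
    simp only [S.discounted_of_neg d _ (show L - (x + S.span i) < 0 by linarith), mul_zero]

/-- The Markov property at the first epoch after `B`: epochs up to `B` contribute to
`discounted d φ L` as they do to `discounted d φ B`, but for the extra discount. -/
theorem discounted_eq_firstPassage_add (d : ℝ) (φ : ℝ → ℝ) {B L : ℝ} (hB : 0 ≤ B) (hL : B ≤ L) :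
    S.discounted d φ L =
      S.firstPassage B (fun t x => S.discounted d (fun s => φ (t + s)) (L - x)) +
        Real.exp (-d * (L - B)) * S.discounted d φ B := by
  have hdynkin := S.firstPassage_add_sum_words (S.stepSummable_discounted d φ L) hB
  simp only [zero_add, sub_zero] at hdynkin
  have hrenewal : ∀ w ∈ S.words B,
      S.wordProb w * S.discounted d (fun s => φ (S.height w + s)) (L - S.time w) =
      Real.exp (-d * (L - B)) *
        (S.wordProb w * (Real.exp (-d * (B - S.time w)) * φ (S.height w))) +
      S.wordProb w * S.step (fun t x => S.discounted d (fun s => φ (t + s)) (L - x))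
        (S.height w) (S.time w) := by
    intro w hw
    rw [mem_words] at hw
    have hexp : Real.exp (-d * (L - S.time w)) =
        Real.exp (-d * (L - B)) * Real.exp (-d * (B - S.time w)) := by
      rw [← Real.exp_add]; ring_nf
    rw [discounted_renewal, if_pos (by linarith), add_zero, hexp, step]
    simp only [← add_assoc, ← sub_sub]
    ring
  rw [Finset.sum_congr rfl hrenewal, Finset.sum_add_distrib, ← Finset.mul_sum] at hdynkin
  rw [discounted.eq_1 S d φ B]
  linarith

section Discounted

variable (d : ℝ) {φ ψ : ℝ → ℝ}

lemma discounted_add (φ ψ : ℝ → ℝ) (L : ℝ) :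
    S.discounted d (φ + ψ) L = S.discounted d φ L + S.discounted d ψ L := by
  simp only [discounted, Pi.add_apply, mul_add, Finset.sum_add_distrib]

lemma discounted_const_smul (c : ℝ) (φ : ℝ → ℝ) (L : ℝ) :
    S.discounted d (c • φ) L = c * S.discounted d φ L := by
  simp only [discounted, Pi.smul_apply, smul_eq_mul, mul_left_comm _ c, Finset.mul_sum]

lemma discounted_mono (h : ∀ t, φ t ≤ ψ t) (L : ℝ) :
    S.discounted d φ L ≤ S.discounted d ψ L :=
  Finset.sum_le_sum fun u _ => mul_le_mul_of_nonneg_left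
    (mul_le_mul_of_nonneg_left (h _) (Real.exp_pos _).le) (S.wordProb_pos u).le

lemma discounted_nonneg (h : ∀ t, 0 ≤ φ t) (L : ℝ) : 0 ≤ S.discounted d φ L :=
  Finset.sum_nonneg fun u _ =>
    mul_nonneg (S.wordProb_pos u).le (mul_nonneg (Real.exp_pos _).le (h _))

lemma abs_discounted_le (h : ∀ t, |φ t| ≤ ψ t) (L : ℝ) :
    |S.discounted d φ L| ≤ S.discounted d ψ L := by
  refine (Finset.abs_sum_le_sum_abs _ _).trans (Finset.sum_le_sum fun u _ => ?_)
  rw [abs_mul, abs_mul, abs_of_pos (S.wordProb_pos u), abs_of_pos (Real.exp_pos _)]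
  exact mul_le_mul_of_nonneg_left
    (mul_le_mul_of_nonneg_left (h _) (Real.exp_pos _).le) (S.wordProb_pos u).le

lemma discounted_zero_left (φ : ℝ → ℝ) (B : ℝ) :
    S.discounted 0 φ B = ∑ w ∈ S.words B, S.wordProb w * φ (S.height w) := by
  simp [discounted]

theorem discounted_zero_eq_add_integral (φ : ℝ → ℝ) {B : ℝ} (hB : 0 ≤ B) :
    S.discounted 0 φ B = S.discounted d φ B + d * ∫ x in (0 : ℝ)..B, S.discounted d φ x := by
  have hEq : Set.EqOn (S.discounted d φ) (fun x => ∑ u ∈ S.words B,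
      S.wordProb u * φ (S.height u) *
        if S.time u ≤ x then Real.exp (-d * (x - S.time u)) else 0) (Set.Ioo 0 B) := by
    intro x hx
    refine Eq.trans ?_ (Finset.sum_subset (S.words_mono hx.2.le) ?_)
    · refine Finset.sum_congr rfl fun u hu => ?_
      rw [if_pos (S.mem_words.1 hu)]
      ring
    · intro u _ hu
      rw [if_neg (mt S.mem_words.2 hu), mul_zero]
  rw [intervalIntegral.integral_congr_Ioo_of_le hB hEq, intervalIntegral.integral_finsetSum
    fun u hu => (intervalIntegrable_ite_exp d (S.time_nonneg u) (S.mem_words.1 hu)).const_mul _,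
    discounted_zero_left, discounted, Finset.mul_sum, ← Finset.sum_add_distrib]
  refine Finset.sum_congr rfl fun u hu => ?_
  rw [intervalIntegral.integral_const_mul, mul_left_comm d,
    mul_integral_ite_exp d (S.time_nonneg u) (S.mem_words.1 hu)]
  ring

variable {d}

lemma abs_discounted_zero_le (hd : 0 ≤ d) {B K : ℝ} (hB : 0 ≤ B)
    (h : ∀ x, 0 ≤ x → x ≤ B → |S.discounted d φ x| ≤ K) :
    |S.discounted 0 φ B| ≤ (1 + d * B) * K := by
  have hint : |∫ x in (0 : ℝ)..B, S.discounted d φ x| ≤ K * B := by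
    have := intervalIntegral.norm_integral_le_of_norm_le_const (a := 0) (b := B)
      (f := S.discounted d φ) (C := K) fun x hx => by
        rw [Set.uIoc_of_le hB] at hx
        exact h x hx.1.le hx.2
    rwa [Real.norm_eq_abs, sub_zero, abs_of_nonneg hB] at this
  calc |S.discounted 0 φ B|
      ≤ |S.discounted d φ B| + |d * ∫ x in (0 : ℝ)..B, S.discounted d φ x| := by
        rw [S.discounted_zero_eq_add_integral d φ hB]
        exact abs_add_le _ _
    _ ≤ K + d * (K * B) := by
        rw [abs_mul, abs_of_nonneg hd]
        exact add_le_add (h B hB le_rfl) (mul_le_mul_of_nonneg_left hint hd)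
    _ = (1 + d * B) * K := by ring

theorem firstPassage_eq_add_discounted_zero (hφ : S.StepSummable fun t _ => φ t) {B : ℝ}
    (hB : 0 ≤ B) : S.firstPassage B (fun t _ => φ t) =
      φ 0 + S.discounted 0 (fun t => S.step (fun t _ => φ t) t 0 - φ t) B := by
  have hdynkin := S.firstPassage_add_sum_words hφ hB
  have hstep : ∀ t x, S.step (fun t _ => φ t) t x = S.step (fun t _ => φ t) t 0 := fun _ _ => rfl
  simp only [hstep _ (S.time _)] at hdynkin
  simp only [discounted_zero_left, mul_sub, Finset.sum_sub_distrib]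
  linarith

lemma discounted_le_firstPassage_add (hd : 0 ≤ d) (hφ : S.StepSummable fun t _ => φ t)
    (hφ0 : ∀ t, 0 ≤ φ t) {L : ℝ} (hL : S.gap ≤ L) :
    S.discounted d φ L ≤ S.firstPassage (L - S.gap) (fun t _ => φ t) +
      Real.exp (-d * S.gap) * S.discounted d φ (L - S.gap) := by
  rw [S.discounted_eq_firstPassage_add d φ (sub_nonneg.2 hL) (sub_le_self L S.gap_pos.le),
    sub_sub_cancel]
  refine add_le_add_left (S.firstPassage_mono (S.stepSummable_discounted d φ L) hφ
    fun t x hx => ?_) _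
  rcases lt_or_ge (L - x) 0 with hneg | hpos
  · rw [S.discounted_of_neg _ _ hneg]
    exact hφ0 t
  · rw [S.discounted_of_lt_gap _ _ hpos (by linarith), add_zero]
    exact mul_le_of_le_one_left (hφ0 t) (Real.exp_le_one_iff.2 (by nlinarith))

lemma discounted_le_of_firstPassage_le (hd : 0 < d) (hφ : S.StepSummable fun t _ => φ t)
    (hφ0 : ∀ t, 0 ≤ φ t) {G : ℝ → ℝ} (hG : MonotoneOn G (Set.Ici 0)) (hG0 : φ 0 ≤ G 0)
    (h : ∀ B, 0 ≤ B → S.firstPassage B (fun t _ => φ t) ≤ G B) {L : ℝ} (hL : 0 ≤ L) :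
    S.discounted d φ L ≤ G L / (1 - Real.exp (-d * S.gap)) := by
  refine le_div_one_sub_of_le_add_mul S.gap_pos (Real.exp_pos _).le
    (Real.exp_lt_one_iff.2 (by nlinarith [mul_pos hd S.gap_pos])) hG ((hφ0 0).trans hG0)
    (fun x hx hxc => ?_) (fun x hx => ?_) hL
  · rw [S.discounted_of_lt_gap _ _ hx hxc]
    exact (mul_le_of_le_one_left (hφ0 0) (Real.exp_le_one_iff.2 (by nlinarith))).trans
      (hG0.trans (hG Set.self_mem_Ici hx hx))
  · have hxc : 0 ≤ x - S.gap := sub_nonneg.2 hx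
    have hGx : G (x - S.gap) ≤ G x :=
      hG hxc (S.gap_pos.le.trans hx) (sub_le_self x S.gap_pos.le)
    linarith [S.discounted_le_firstPassage_add hd.le hφ hφ0 hx, h _ hxc]

end Discounted

section Moments

lemma summable_abs_mark_pow (k : ℕ) : Summable fun i => S.prob i * |S.mark i| ^ k := by
  refine (S.summable_expMoment k).of_nonneg_of_le
    (fun i => mul_nonneg (S.prob_pos i).le (by positivity))
    fun i => mul_le_mul_of_nonneg_left ?_ (S.prob_pos i).le
  exact le_mul_of_one_le_left (by positivity)
    (Real.one_le_exp (mul_nonneg S.rate_pos.le (S.span_pos i).le))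

lemma summable_mark_pow (k : ℕ) : Summable fun i => S.prob i * S.mark i ^ k :=
  (S.summable_abs_mark_pow k).of_norm_bounded fun i => by
    rw [Real.norm_eq_abs, abs_mul, abs_pow, abs_of_pos (S.prob_pos i)]

/-- The `k`-th moment of the mark. -/
def moment (k : ℕ) : ℝ := ∑' i, S.prob i * S.mark i ^ k

lemma moment_zero : S.moment 0 = 1 := by
  simpa only [moment, pow_zero, mul_one] using S.hasSum_prob.tsum_eq

lemma moment_one : S.moment 1 = 0 := by
  simpa only [moment, pow_one] using S.hasSum_mark.tsum_eq

lemma hasSum_prob_mul_add_mark_pow (k : ℕ) (t : ℝ) :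
    HasSum (fun i => S.prob i * (t + S.mark i) ^ k)
      (∑ j ∈ Finset.range (k + 1), t ^ j * (S.moment (k - j) * k.choose j)) := by
  have hbinom : (fun i => S.prob i * (t + S.mark i) ^ k) = fun i =>
      ∑ j ∈ Finset.range (k + 1), t ^ j * (S.prob i * S.mark i ^ (k - j) * k.choose j) := by
    ext i
    rw [add_pow, Finset.mul_sum]
    exact Finset.sum_congr rfl fun j _ => by ring
  rw [hbinom]
  exact hasSum_sum fun j _ => ((S.summable_mark_pow (k - j)).hasSum.mul_right _).mul_left _

lemma stepSummable_pow (k : ℕ) : S.StepSummable fun t _ => t ^ k := fun t _ =>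
  (S.hasSum_prob_mul_add_mark_pow k t).summable

lemma stepSummable_abs_pow (k : ℕ) : S.StepSummable fun t _ => |t| ^ k := by
  simpa only [abs_pow] using (S.stepSummable_pow k).abs

lemma stepSummable_one : S.StepSummable fun _ _ => 1 := by
  simpa only [pow_zero] using S.stepSummable_pow 0

lemma step_pow (k : ℕ) (t x : ℝ) : S.step (fun t _ => t ^ k) t x =
    ∑ j ∈ Finset.range (k + 1), t ^ j * (S.moment (k - j) * k.choose j) :=
  (S.hasSum_prob_mul_add_mark_pow k t).tsum_eq

lemma step_pow_one (t x : ℝ) : S.step (fun t _ => t ^ 1) t x = t ^ 1 := by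
  rw [step_pow]
  simp [Finset.sum_range_succ, moment_zero, moment_one]

lemma step_pow_add_two (n : ℕ) (t x : ℝ) : S.step (fun t _ => t ^ (n + 2)) t x = t ^ (n + 2) +
    ∑ j ∈ Finset.range (n + 1), t ^ j * (S.moment (n + 2 - j) * (n + 2).choose j) := by
  rw [step_pow, Finset.sum_range_succ, Finset.sum_range_succ, Nat.sub_self,
    show n + 2 - (n + 1) = 1 by omega, moment_zero, moment_one, Nat.choose_self]
  push_cast
  ring

lemma exists_abs_step_pow_sub_le (n : ℕ) : ∃ C, 0 ≤ C ∧ ∀ t : ℝ,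
    |S.step (fun t _ => t ^ (n + 2)) t 0 - t ^ (n + 2)| ≤ C * (1 + |t| ^ n) := by
  simp only [step_pow_add_two, add_sub_cancel_left]
  exact exists_abs_sum_pow_mul_le n _

lemma exists_abs_step_pow_sub_sub_le (n : ℕ) : ∃ C D, 0 ≤ C ∧ ∀ t : ℝ,
    |S.step (fun t _ => t ^ (n + 3)) t 0 - t ^ (n + 3) - D * t ^ (n + 1)| ≤ C * (1 + |t| ^ n) := by
  obtain ⟨C, hC, h⟩ := exists_abs_sum_pow_mul_le n
    fun j => S.moment (n + 3 - j) * (n + 3).choose j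
  refine ⟨C, S.moment 2 * (n + 3).choose (n + 1), hC, fun t => ?_⟩
  convert h t using 2
  rw [S.step_pow_add_two (n + 1), Finset.sum_range_succ, show n + 1 + 2 - (n + 1) = 2 by omega]
  ring

lemma firstPassage_one {B : ℝ} (hB : 0 ≤ B) : S.firstPassage B (fun _ _ => 1) = 1 := by
  have hstep : S.step (fun _ _ => 1) = fun _ _ => 1 := by
    ext
    simpa [step] using S.hasSum_prob.tsum_eq
  rw [S.firstPassage_eq_add_discounted_zero S.stepSummable_one hB, hstep]
  simp [discounted]

lemma discounted_one_add_pow_even_le {d C : ℝ} (hd : 0 < d) {r : ℕ} (hC : 1 ≤ C)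
    (h : ∀ B, 0 ≤ B → S.firstPassage B (fun t _ => t ^ (2 * r)) ≤ C * (1 + B) ^ r)
    {L : ℝ} (hL : 0 ≤ L) : S.discounted d (fun t => 1 + t ^ (2 * r)) L ≤
      (C + 1) * (1 + L) ^ r / (1 - Real.exp (-d * S.gap)) := by
  have heven : ∀ t : ℝ, 0 ≤ t ^ (2 * r) := (even_two_mul r).pow_nonneg
  have hmono : MonotoneOn (fun x : ℝ => (C + 1) * (1 + x) ^ r) (Set.Ici 0) :=
    fun x hx y hy hxy =>
      mul_le_mul_of_nonneg_left (monotoneOn_one_add_pow r hx hy hxy) (by linarith)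
  have hsum : S.StepSummable fun t _ => 1 + t ^ (2 * r) :=
    S.stepSummable_one.add (S.stepSummable_pow (2 * r))
  refine S.discounted_le_of_firstPassage_le (G := fun x => (C + 1) * (1 + x) ^ r) hd hsum
    (fun t => by linarith [heven t]) hmono ?_ (fun B hB => ?_) hL
  · simp only [add_zero, one_pow, mul_one]
    linarith [pow_le_one₀ (n := 2 * r) (le_refl (0 : ℝ)) zero_le_one]
  · have hadd : S.firstPassage B (fun t _ => 1 + t ^ (2 * r)) =
        S.firstPassage B (fun _ _ => 1) + S.firstPassage B (fun t _ => t ^ (2 * r)) :=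
      S.firstPassage_add S.stepSummable_one (S.stepSummable_pow (2 * r)) B
    rw [S.firstPassage_one hB] at hadd
    linarith [h B hB, one_le_pow₀ (n := r) (show 1 ≤ 1 + B by linarith)]

/-- The diffusive bound on even moments: Dynkin's formula bounds a moment at first passage by the
moment two degrees lower, summed over all epochs, at the cost of one factor `1 + B`. -/
theorem exists_firstPassage_pow_even_le (r : ℕ) : ∃ C, 1 ≤ C ∧ ∀ B, 0 ≤ B →
    S.firstPassage B (fun t _ => t ^ (2 * r)) ≤ C * (1 + B) ^ r := by
  induction r with
  | zero => exact ⟨1, le_rfl, fun B hB => by simp [S.firstPassage_one hB]⟩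
  | succ r ih =>
    obtain ⟨C, hC, h⟩ := ih
    obtain ⟨D, hD, hstep⟩ := S.exists_abs_step_pow_sub_le (2 * r)
    set θ := Real.exp (-1 * S.gap)
    have hθ : 0 < 1 - θ := sub_pos.2 (Real.exp_lt_one_iff.2 (by linarith [S.gap_pos]))
    have hpos : ∀ t : ℝ, 0 ≤ 1 + t ^ (2 * r) := fun t =>
      add_nonneg zero_le_one ((even_two_mul r).pow_nonneg t)
    refine ⟨D * ((C + 1) / (1 - θ)) + 1, by
      rw [le_add_iff_nonneg_left]; positivity, fun B hB => ?_⟩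
    have hcum : S.discounted 0 (fun t => 1 + t ^ (2 * r)) B ≤
        (1 + 1 * B) * ((C + 1) * (1 + B) ^ r / (1 - θ)) := by
      refine (le_abs_self _).trans (S.abs_discounted_zero_le zero_le_one hB fun x hx hxB => ?_)
      rw [abs_of_nonneg (S.discounted_nonneg 1 hpos x)]
      exact (S.discounted_one_add_pow_even_le one_pos hC h hx).trans (by gcongr)
    rw [mul_add, mul_one]
    calc S.firstPassage B (fun t _ => t ^ (2 * r + 2))
        = S.discounted 0
            (fun t => S.step (fun t _ => t ^ (2 * r + 2)) t 0 - t ^ (2 * r + 2)) B := by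
          simp [S.firstPassage_eq_add_discounted_zero (S.stepSummable_pow (2 * r + 2)) hB]
      _ ≤ D * S.discounted 0 (fun t => 1 + t ^ (2 * r)) B := by
          rw [← discounted_const_smul]
          refine S.discounted_mono 0 (fun t => (le_abs_self _).trans ?_) B
          exact (hstep t).trans_eq (by rw [(even_two_mul r).pow_abs]; rfl)
      _ ≤ D * ((1 + 1 * B) * ((C + 1) * (1 + B) ^ r / (1 - θ))) := by gcongr
      _ = D * ((C + 1) / (1 - θ)) * (1 + B) ^ (r + 1) := by ring
      _ ≤ (D * ((C + 1) / (1 - θ)) + 1) * (1 + B) ^ (r + 1) := by gcongr; linarith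

lemma exists_discounted_pow_even_le {d : ℝ} (hd : 0 < d) (r : ℕ) : ∃ K, 0 ≤ K ∧ ∀ L, 0 ≤ L →
    S.discounted d (fun t => t ^ (2 * r)) L ≤ K * √(1 + L) ^ (2 * r) := by
  obtain ⟨C, hC, h⟩ := S.exists_firstPassage_pow_even_le r
  have hθ : 0 < 1 - Real.exp (-d * S.gap) :=
    sub_pos.2 (Real.exp_lt_one_iff.2 (by nlinarith [mul_pos hd S.gap_pos]))
  refine ⟨(C + 1) / (1 - Real.exp (-d * S.gap)), by positivity, fun L hL => ?_⟩
  rw [sqrt_one_add_pow_two_mul hL, div_mul_eq_mul_div]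
  exact (S.discounted_mono d (fun t => le_add_of_nonneg_left zero_le_one) L).trans
    (S.discounted_one_add_pow_even_le hd hC h hL)

theorem exists_discounted_abs_pow_le {d : ℝ} (hd : 0 < d) (k : ℕ) : ∃ K, 0 ≤ K ∧ ∀ L, 0 ≤ L →
    S.discounted d (fun t => |t| ^ k) L ≤ K * √(1 + L) ^ k := by
  rcases Nat.even_or_odd' k with ⟨r, rfl | rfl⟩
  · simpa only [(even_two_mul r).pow_abs] using S.exists_discounted_pow_even_le hd r
  · obtain ⟨K, hK, h⟩ := S.exists_discounted_pow_even_le hd r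
    obtain ⟨K', hK', h'⟩ := S.exists_discounted_pow_even_le hd (r + 1)
    refine ⟨K' + K, by positivity, fun L hL => ?_⟩
    set s := √(1 + L)
    have hs : 0 < s := one_pos.trans_le (one_le_sqrt_one_add hL)
    -- AM-GM: `|t| ≤ t² / s + s`, with `s` of the order of the height.
    have hamgm : ∀ t : ℝ, |t| ≤ s⁻¹ * t ^ 2 + s := fun t => by
      rw [← sq_abs, inv_mul_eq_div, div_add' _ _ _ hs.ne', le_div_iff₀ hs]
      nlinarith [sq_nonneg (|t| - s), mul_nonneg (abs_nonneg t) hs.le]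
    have hpow : ∀ t : ℝ, |t| ^ (2 * r + 1) ≤
        (s⁻¹ • (fun t : ℝ => t ^ (2 * (r + 1))) + s • fun t : ℝ => t ^ (2 * r)) t := fun t => by
      have := mul_le_mul_of_nonneg_left (hamgm t) ((even_two_mul r).pow_nonneg t)
      calc |t| ^ (2 * r + 1) = t ^ (2 * r) * |t| := by rw [pow_succ, (even_two_mul r).pow_abs]
        _ ≤ t ^ (2 * r) * (s⁻¹ * t ^ 2 + s) := this
        _ = _ := by simp only [Pi.add_apply, Pi.smul_apply, smul_eq_mul]; ring
    calc S.discounted d (fun t => |t| ^ (2 * r + 1)) L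
        ≤ s⁻¹ * S.discounted d (fun t => t ^ (2 * (r + 1))) L +
            s * S.discounted d (fun t => t ^ (2 * r)) L := by
          rw [← discounted_const_smul, ← discounted_const_smul, ← discounted_add]
          exact S.discounted_mono d hpow L
      _ ≤ s⁻¹ * (K' * s ^ (2 * (r + 1))) + s * (K * s ^ (2 * r)) := by
          gcongr
          exacts [h' L hL, h L hL]
      _ = (K' + K) * s ^ (2 * r + 1) := by field_simp; ring

end Moments

section Overshoot

/-- The moments of the mark weighted by the exponential moment of the span. -/
def expMoment (k : ℕ) : ℝ := ∑' i, S.prob i * (Real.exp (S.rate * S.span i) * |S.mark i| ^ k)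

/-- The `k`-th absolute power of the height, weighted exponentially in the overshoot `x - B`. -/
def overshoot (k : ℕ) (B t x : ℝ) : ℝ := Real.exp (S.rate * (x - B)) * |t| ^ k

lemma expMoment_nonneg (k : ℕ) : 0 ≤ S.expMoment k := tsum_nonneg fun i =>
  mul_nonneg (S.prob_pos i).le (by positivity)

lemma overshoot_nonneg (k : ℕ) (B t x : ℝ) : 0 ≤ S.overshoot k B t x := by
  rw [overshoot]
  positivity

lemma abs_pow_le_overshoot (k : ℕ) {B x : ℝ} (t : ℝ) (hx : B ≤ x) :
    |t| ^ k ≤ S.overshoot k B t x :=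
  le_mul_of_one_le_left (by positivity)
    (Real.one_le_exp (mul_nonneg S.rate_pos.le (sub_nonneg.2 hx)))

lemma prob_mul_overshoot_le (k : ℕ) (B t x : ℝ) (i : ι) :
    S.prob i * S.overshoot k B (t + S.mark i) (x + S.span i) ≤
      Real.exp (S.rate * (x - B)) * 2 ^ (k - 1) *
        (|t| ^ k * (S.prob i * (Real.exp (S.rate * S.span i) * |S.mark i| ^ 0)) +
          S.prob i * (Real.exp (S.rate * S.span i) * |S.mark i| ^ k)) := by
  have hexp : Real.exp (S.rate * (x + S.span i - B)) =
      Real.exp (S.rate * (x - B)) * Real.exp (S.rate * S.span i) := by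
    rw [← Real.exp_add]
    ring_nf
  have hprob := (S.prob_pos i).le
  calc S.prob i * S.overshoot k B (t + S.mark i) (x + S.span i)
      ≤ S.prob i * (Real.exp (S.rate * (x - B)) * Real.exp (S.rate * S.span i) *
          (2 ^ (k - 1) * (|t| ^ k + |S.mark i| ^ k))) := by
        rw [overshoot, hexp]
        gcongr
        exact abs_add_pow_le _ _ _
    _ = _ := by ring

lemma hasSum_overshoot_bound (k : ℕ) (B t x : ℝ) :
    HasSum (fun i => Real.exp (S.rate * (x - B)) * 2 ^ (k - 1) *
        (|t| ^ k * (S.prob i * (Real.exp (S.rate * S.span i) * |S.mark i| ^ 0)) +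
          S.prob i * (Real.exp (S.rate * S.span i) * |S.mark i| ^ k)))
      (Real.exp (S.rate * (x - B)) * 2 ^ (k - 1) * (|t| ^ k * S.expMoment 0 + S.expMoment k)) :=
  (((S.summable_expMoment 0).hasSum.mul_left _).add (S.summable_expMoment k).hasSum).mul_left _

lemma stepSummable_overshoot (k : ℕ) (B : ℝ) : S.StepSummable (S.overshoot k B) := fun t x =>
  (S.hasSum_overshoot_bound k B t x).summable.of_nonneg_of_le
    (fun i => mul_nonneg (S.prob_pos i).le (S.overshoot_nonneg k B _ _))
    (S.prob_mul_overshoot_le k B t x)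

lemma step_overshoot_le (k : ℕ) (B t x : ℝ) : S.step (S.overshoot k B) t x ≤
    Real.exp (S.rate * (x - B)) * 2 ^ (k - 1) * (|t| ^ k * S.expMoment 0 + S.expMoment k) :=
  ((S.stepSummable_overshoot k B t x).tsum_le_tsum (S.prob_mul_overshoot_le k B t x)
    (S.hasSum_overshoot_bound k B t x).summable).trans_eq (S.hasSum_overshoot_bound k B t x).tsum_eq

lemma firstPassage_overshoot_le (k : ℕ) (B : ℝ) : S.firstPassage B (S.overshoot k B) ≤
    2 ^ (k - 1) * (S.expMoment 0 * S.discounted S.rate (fun t => |t| ^ k) B +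
      S.expMoment k * S.discounted S.rate (fun _ => 1) B) := by
  rw [discounted, discounted, Finset.mul_sum, Finset.mul_sum, ← Finset.sum_add_distrib,
    Finset.mul_sum]
  refine Finset.sum_le_sum fun w _ => ?_
  have hstep : S.step (fun t x => if B < x then S.overshoot k B t x else 0)
      (S.height w) (S.time w) ≤ S.step (S.overshoot k B) (S.height w) (S.time w) := by
    refine S.step_mono ((S.stepSummable_overshoot k B).ite _) (S.stepSummable_overshoot k B)
      (fun t x => ?_) _ _
    change (if B < x then S.overshoot k B t x else 0) ≤ S.overshoot k B t x
    split_ifs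
    exacts [le_rfl, S.overshoot_nonneg k B t x]
  refine (mul_le_mul_of_nonneg_left (hstep.trans (S.step_overshoot_le k B _ _))
    (S.wordProb_pos w).le).trans_eq ?_
  rw [show -S.rate * (B - S.time w) = S.rate * (S.time w - B) by ring]
  ring

theorem exists_firstPassage_overshoot_le (k : ℕ) : ∃ K, ∀ B, 0 ≤ B →
    S.firstPassage B (S.overshoot k B) ≤ K * √(1 + B) ^ k := by
  obtain ⟨K, -, h⟩ := S.exists_discounted_abs_pow_le S.rate_pos k
  obtain ⟨K₀, hK₀, h₀⟩ := S.exists_discounted_abs_pow_le S.rate_pos 0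
  simp only [pow_zero, mul_one] at h₀
  have hm := S.expMoment_nonneg k
  have hm₀ := S.expMoment_nonneg 0
  refine ⟨2 ^ (k - 1) * (S.expMoment 0 * K + S.expMoment k * K₀), fun B hB => ?_⟩
  have hs : 1 ≤ √(1 + B) ^ k := one_le_pow₀ (one_le_sqrt_one_add hB)
  calc S.firstPassage B (S.overshoot k B)
      ≤ 2 ^ (k - 1) * (S.expMoment 0 * (K * √(1 + B) ^ k) + S.expMoment k * K₀) := by
        refine (S.firstPassage_overshoot_le k B).trans ?_
        gcongr
        exacts [h B hB, h₀ B hB]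
    _ ≤ 2 ^ (k - 1) * (S.expMoment 0 * (K * √(1 + B) ^ k) +
          S.expMoment k * (K₀ * √(1 + B) ^ k)) := by
        gcongr
        exact le_mul_of_one_le_right hK₀ hs
    _ = _ := by ring

lemma exists_firstPassage_abs_pow_le (k : ℕ) : ∃ K, ∀ B, 0 ≤ B →
    S.firstPassage B (fun t _ => |t| ^ k) ≤ K * √(1 + B) ^ k := by
  obtain ⟨K, h⟩ := S.exists_firstPassage_overshoot_le k
  exact ⟨K, fun B hB => (S.firstPassage_mono (S.stepSummable_abs_pow k)
    (S.stepSummable_overshoot k B) fun t x hx => S.abs_pow_le_overshoot k t hx.le).trans (h B hB)⟩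

end Overshoot

section Mass

/-- The mean number of renewal epochs up to `L`, discounted at rate `d` by the time left. -/
def mass (d L : ℝ) : ℝ := S.discounted d (fun _ => 1) L

lemma mass_nonneg (d L : ℝ) : 0 ≤ S.mass d L := S.discounted_nonneg d (fun _ => zero_le_one) L

lemma exists_mass_le {d : ℝ} (hd : 0 < d) : ∃ K, 0 ≤ K ∧ ∀ L, S.mass d L ≤ K := by
  obtain ⟨K, hK, h⟩ := S.exists_discounted_abs_pow_le hd 0
  simp only [pow_zero, mul_one] at h
  refine ⟨K, hK, fun L => (le_or_gt 0 L).elim (h L) fun hL => ?_⟩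
  rwa [mass, S.discounted_of_neg d _ hL]

lemma mass_renewal (d L : ℝ) : S.mass d L =
    (if 0 ≤ L then Real.exp (-d * L) else 0) + ∑' i, S.prob i * S.mass d (L - S.span i) := by
  rw [mass, discounted_renewal]
  simp only [mul_one, mass]

lemma mass_le_exp_mul_mass (d : ℝ) {x y : ℝ} (h : x ≤ y) :
    S.mass d x ≤ Real.exp (d * (y - x)) * S.mass d y := by
  simp only [mass, discounted, mul_one, Finset.mul_sum]
  refine (Finset.sum_le_sum fun u _ => ?_).trans
    (Finset.sum_le_sum_of_subset_of_nonneg (S.words_mono h) fun u _ _ =>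
      mul_nonneg (Real.exp_pos _).le (mul_nonneg (S.wordProb_pos u).le (Real.exp_pos _).le))
  rw [mul_left_comm, ← Real.exp_add]
  exact (congrArg (fun z => S.wordProb u * Real.exp z) (by ring)).le

lemma span_mem_asymptoticPeriods {d : ℝ} (hd : 0 < d) (i : ι) :
    S.span i ∈ asymptoticPeriods (S.mass d) := by
  obtain ⟨K, -, hK⟩ := S.exists_mass_le hd
  have hexp : Tendsto (fun L => if 0 ≤ L then Real.exp (-d * L) else 0) atTop (𝓝 0) := by
    refine (Real.tendsto_exp_atBot.comp
      (tendsto_id.const_mul_atTop_of_neg (neg_neg_of_pos hd))).congr' ?_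
    filter_upwards [eventually_ge_atTop 0] with L hL using (if_pos hL).symm
  exact tendsto_sub_of_renewal S.prob_pos S.hasSum_prob
    (fun L => (abs_of_nonneg (S.mass_nonneg d L)).trans_le (hK L)) (S.mass_renewal d) hexp i

theorem eventually_abs_mass_sub_le {d : ℝ} (hd : 0 < d)
    (hdense : Dense (AddSubgroup.closure (Set.range S.span) : Set ℝ)) {ε : ℝ} (hε : 0 < ε) :
    ∀ᶠ R in atTop, ∀ y, 0 ≤ y → |S.mass d (R - y) - S.mass d R| ≤ ε * Real.exp (S.rate * y) := by
  obtain ⟨K, -, hK⟩ := S.exists_mass_le hd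
  have hperiods : Dense (asymptoticPeriods (S.mass d) : Set ℝ) :=
    hdense.mono ((AddSubgroup.closure_le _).2
      (Set.range_subset_iff.2 (S.span_mem_asymptoticPeriods hd)))
  have hslow : IsSlowlyDecreasing (S.mass d) := isSlowlyDecreasing_of_le_exp_mul hd.le
    (S.mass_nonneg d) hK fun _ _ h => S.mass_le_exp_mul_mass d h
  have hgrowth : Tendsto (fun C => ε * Real.exp (S.rate * C)) atTop atTop :=
    (Real.tendsto_exp_atTop.comp (tendsto_id.const_mul_atTop S.rate_pos)).const_mul_atTop hε
  obtain ⟨C, hC⟩ := (hgrowth.eventually_ge_atTop K).exists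
  filter_upwards [hslow.eventually_abs_sub_le hperiods C hε] with R hR y hy
  rcases le_total y C with hyC | hCy
  · rw [abs_sub_comm]
    exact (hR y ⟨hy, hyC⟩).trans
      (le_mul_of_one_le_right hε.le (Real.one_le_exp (mul_nonneg S.rate_pos.le hy)))
  · refine (abs_sub_le_of_nonneg_of_le (S.mass_nonneg d _) (hK _) (S.mass_nonneg d _) (hK _)).trans
      (hC.trans ?_)
    have := S.rate_pos
    gcongr

lemma one_le_mul_mass_rate {B : ℝ} (hB : 0 ≤ B) : 1 ≤ 2 * S.expMoment 0 * S.mass S.rate B := by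
  calc 1 = S.firstPassage B (fun _ _ => 1) := (S.firstPassage_one hB).symm
    _ ≤ S.firstPassage B (S.overshoot 0 B) :=
        S.firstPassage_mono S.stepSummable_one (S.stepSummable_overshoot 0 B) fun t x hx => by
          simpa using S.abs_pow_le_overshoot 0 t hx.le
    _ ≤ 2 ^ (0 - 1) * (S.expMoment 0 * S.mass S.rate B + S.expMoment 0 * S.mass S.rate B) := by
        simpa only [pow_zero, mass] using S.firstPassage_overshoot_le 0 B
    _ = 2 * S.expMoment 0 * S.mass S.rate B := by ring

lemma mass_le_add {d e C : ℝ} (hd : 0 ≤ d) (he : 0 ≤ e) (L : ℝ) : S.mass e L ≤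
    Real.exp (d * C) * S.mass d L + Real.exp (-(e / 2 * C)) * S.mass (e / 2) L := by
  simp only [mass, discounted, mul_one, Finset.mul_sum, ← Finset.sum_add_distrib]
  refine Finset.sum_le_sum fun u hu => ?_
  rw [mul_left_comm (Real.exp _), mul_left_comm (Real.exp (-(e / 2 * C))), ← mul_add,
    ← Real.exp_add, ← Real.exp_add]
  refine mul_le_mul_of_nonneg_left ?_ (S.wordProb_pos u).le
  have hy : 0 ≤ L - S.time u := sub_nonneg.2 (S.mem_words.1 hu)
  rcases le_total (L - S.time u) C with h | h
  · refine le_add_of_le_of_nonneg (Real.exp_le_exp.2 ?_) (Real.exp_pos _).le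
    nlinarith [mul_nonneg hd (sub_nonneg.2 h), mul_nonneg he hy]
  · refine le_add_of_nonneg_of_le (Real.exp_pos _).le (Real.exp_le_exp.2 ?_)
    nlinarith [mul_nonneg he (sub_nonneg.2 h)]

/-- Some epoch is close to `L` since the overshoot over `L` has a bounded mean. -/
theorem exists_pos_le_mass {d : ℝ} (hd : 0 ≤ d) : ∃ c, 0 < c ∧ ∀ L, 0 ≤ L → c ≤ S.mass d L := by
  obtain ⟨K, -, h⟩ := S.exists_mass_le (half_pos S.rate_pos)
  have hE : 0 < S.expMoment 0 := by
    refine (S.expMoment_nonneg 0).lt_of_ne' fun h0 => ?_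
    have := S.one_le_mul_mass_rate le_rfl
    rw [h0, mul_zero, zero_mul] at this
    exact absurd this (by norm_num)
  have hdecay : Tendsto (fun C => Real.exp (-(S.rate / 2 * C)) * (4 * S.expMoment 0 * K)) atTop
      (𝓝 (0 * (4 * S.expMoment 0 * K))) :=
    (Real.tendsto_exp_neg_atTop_nhds_zero.comp
      (tendsto_id.const_mul_atTop (half_pos S.rate_pos))).mul_const _
  rw [zero_mul] at hdecay
  obtain ⟨C, hC⟩ := (hdecay.eventually_le_const one_pos).exists
  refine ⟨1 / (4 * S.expMoment 0 * Real.exp (d * C)), by positivity, fun L hL => ?_⟩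
  rw [div_le_iff₀ (by positivity)]
  have hrate : 2 * S.expMoment 0 * S.mass S.rate L ≤ 2 * S.expMoment 0 *
      (Real.exp (d * C) * S.mass d L + Real.exp (-(S.rate / 2 * C)) * K) := by
    gcongr
    exact (S.mass_le_add hd S.rate_pos.le L).trans (by gcongr; exact h L)
  linarith [S.one_le_mul_mass_rate hL]

lemma inv_mass_isBigO_one {d : ℝ} (hd : 0 ≤ d) :
    (fun L => (S.mass d L)⁻¹) =O[atTop] fun _ => (1 : ℝ) := by
  obtain ⟨c, hc, h⟩ := S.exists_pos_le_mass hd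
  refine IsBigO.of_bound c⁻¹ ?_
  filter_upwards [eventually_ge_atTop 0] with L hL
  rw [norm_one, mul_one, norm_inv, Real.norm_of_nonneg (hc.le.trans (h L hL))]
  exact inv_anti₀ hc (h L hL)

end Mass

section OddMoments

variable {d : ℝ} {k : ℕ}

lemma exists_discounted_one_add_abs_pow_le (hd : 0 < d) (k : ℕ) : ∃ K, 0 ≤ K ∧ ∀ L, 0 ≤ L →
    S.discounted d (fun t => 1 + |t| ^ k) L ≤ K * √(1 + L) ^ k := by
  obtain ⟨K, hK, h⟩ := S.exists_discounted_abs_pow_le hd k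
  obtain ⟨K₀, hK₀, h₀⟩ := S.exists_mass_le hd
  refine ⟨K₀ + K, by positivity, fun L hL => ?_⟩
  calc S.discounted d (fun t => 1 + |t| ^ k) L
      = S.mass d L + S.discounted d (fun t => |t| ^ k) L := S.discounted_add d _ _ L
    _ ≤ K₀ * √(1 + L) ^ k + K * √(1 + L) ^ k :=
        add_le_add ((h₀ L).trans (le_mul_of_one_le_right hK₀
          (one_le_pow₀ (one_le_sqrt_one_add hL)))) (h L hL)
    _ = (K₀ + K) * √(1 + L) ^ k := by ring

lemma exists_discounted_zero_one_add_abs_pow_le (k : ℕ) : ∃ K, ∀ B, 0 ≤ B →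
    S.discounted 0 (fun t => 1 + |t| ^ k) B ≤ K * √(1 + B) ^ (k + 2) := by
  obtain ⟨K, hK, h⟩ := S.exists_discounted_one_add_abs_pow_le one_pos k
  refine ⟨K, fun B hB => ?_⟩
  calc S.discounted 0 (fun t => 1 + |t| ^ k) B
      ≤ (1 + 1 * B) * (K * √(1 + B) ^ k) := by
        refine (le_abs_self _).trans (S.abs_discounted_zero_le zero_le_one hB fun x hx hxB => ?_)
        rw [abs_of_nonneg (S.discounted_nonneg 1 (fun t => by positivity) x)]
        exact (h x hx).trans (by gcongr)
    _ = K * √(1 + B) ^ (k + 2) := by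
        rw [pow_add, Real.sq_sqrt (by linarith)]
        ring

lemma discounted_zero_pow_isLittleO (hd : 0 < d) (hk : k ≠ 0)
    (h : S.discounted d (fun t => t ^ k) =o[atTop] fun L => √(1 + L) ^ k) :
    S.discounted 0 (fun t => t ^ k) =o[atTop] fun B => √(1 + B) ^ (k + 2) := by
  rw [isLittleO_iff]
  intro c hc
  obtain ⟨K, hK, hbound⟩ := S.exists_discounted_abs_pow_le hd k
  set ε := c / (2 * (1 + d))
  obtain ⟨L₀, hL₀⟩ := eventually_atTop.1 (h.def (show 0 < ε by positivity))
  have hlarge := ((tendsto_sqrt_one_add_pow hk).const_mul_atTop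
    (show 0 < ε by positivity)).eventually_ge_atTop (K * √(1 + L₀) ^ k)
  filter_upwards [eventually_ge_atTop 0, hlarge] with B hB hBL₀
  have hunif : ∀ x, 0 ≤ x → x ≤ B →
      |S.discounted d (fun t => t ^ k) x| ≤ ε * √(1 + B) ^ k := by
    intro x hx hxB
    rcases le_total L₀ x with hx₀ | hx₀
    · have := hL₀ x hx₀
      rw [Real.norm_eq_abs, Real.norm_of_nonneg (by positivity)] at this
      exact this.trans (by gcongr)
    · calc |S.discounted d (fun t => t ^ k) x| ≤ K * √(1 + x) ^ k :=
            (S.abs_discounted_le d (fun t => (abs_pow t k).le) x).trans (hbound x hx)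
        _ ≤ K * √(1 + L₀) ^ k := by gcongr
        _ ≤ ε * √(1 + B) ^ k := hBL₀
  rw [Real.norm_eq_abs, Real.norm_of_nonneg (by positivity), pow_add, Real.sq_sqrt (by linarith)]
  calc |S.discounted 0 (fun t => t ^ k) B| ≤ (1 + d * B) * (ε * √(1 + B) ^ k) :=
        S.abs_discounted_zero_le hd.le hB hunif
    _ ≤ (1 + d) * (1 + B) * (2 * ε * √(1 + B) ^ k) := by
        gcongr
        · nlinarith
        · linarith [show 0 < ε by positivity]
    _ = c * (√(1 + B) ^ k * (1 + B)) := by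
        simp only [ε]
        field_simp

/-- In the drift of `t ^ (k + 3)` the term of degree `k + 2` vanishes with the mean mark, and that
of degree `k + 1` is controlled by assumption. -/
theorem firstPassage_pow_isLittleO (hd : 0 < d)
    (h : S.discounted d (fun t => t ^ (k + 1)) =o[atTop] fun L => √(1 + L) ^ (k + 1)) :
    (fun B => S.firstPassage B fun t _ => t ^ (k + 3)) =o[atTop] fun B => √(1 + B) ^ (k + 3) := by
  obtain ⟨C, D, hC, hdrift⟩ := S.exists_abs_step_pow_sub_sub_le k
  obtain ⟨K, hsum⟩ := S.exists_discounted_zero_one_add_abs_pow_le k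
  set ψ : ℝ → ℝ := fun t => S.step (fun t _ => t ^ (k + 3)) t 0 - t ^ (k + 3) - D * t ^ (k + 1)
  have hrest : S.discounted 0 ψ =O[atTop] fun B => √(1 + B) ^ (k + 2) := by
    refine IsBigO.of_bound (C * K) ?_
    filter_upwards [eventually_ge_atTop 0] with B hB
    rw [Real.norm_eq_abs, Real.norm_of_nonneg (by positivity), mul_assoc]
    calc |S.discounted 0 ψ B| ≤ S.discounted 0 (C • fun t => 1 + |t| ^ k) B :=
          S.abs_discounted_le 0 hdrift B
      _ = C * S.discounted 0 (fun t => 1 + |t| ^ k) B := S.discounted_const_smul 0 C _ B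
      _ ≤ C * (K * √(1 + B) ^ (k + 2)) := mul_le_mul_of_nonneg_left (hsum B hB) hC
  refine (((S.discounted_zero_pow_isLittleO hd k.succ_ne_zero h).const_mul_left D).add
    (hrest.trans_isLittleO (sqrt_one_add_pow_isLittleO (Nat.lt_succ_self _)))).congr' ?_
    EventuallyEq.rfl
  filter_upwards [eventually_ge_atTop 0] with B hB
  have hψ : (fun t => S.step (fun t _ => t ^ (k + 3)) t 0 - t ^ (k + 3)) =
      D • (fun t => t ^ (k + 1)) + ψ := by
    ext t
    simp [ψ]
  rw [S.firstPassage_eq_add_discounted_zero (S.stepSummable_pow (k + 3)) hB, hψ, discounted_add,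
    discounted_const_smul, zero_pow (by omega), zero_add]

lemma exists_abs_discounted_add_pow_sub_le (hd : 0 < d) (k : ℕ) {R : ℝ} (hR : 0 ≤ R) :
    ∃ C, ∀ t L, L ≤ R →
      |S.discounted d (fun s => (t + s) ^ (k + 1)) L - t ^ (k + 1) * S.mass d L| ≤
        C * (1 + |t| ^ k) := by
  obtain ⟨K, hK, h⟩ := S.exists_discounted_one_add_abs_pow_le hd (k + 1)
  refine ⟨2 ^ (k + 1) * (K * √(1 + R) ^ (k + 1)), fun t L hL => ?_⟩
  have hbound : S.discounted d (fun s => 1 + |s| ^ (k + 1)) L ≤ K * √(1 + R) ^ (k + 1) := by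
    rcases lt_or_ge L 0 with hneg | hpos
    · rw [S.discounted_of_neg d _ hneg]
      positivity
    · exact (h L hpos).trans (by gcongr)
  have hsplit : (fun s => (t + s) ^ (k + 1)) =
      (fun s => (t + s) ^ (k + 1) - t ^ (k + 1)) + t ^ (k + 1) • fun _ => 1 := by
    ext s
    simp
  rw [hsplit, discounted_add, discounted_const_smul, ← mass, add_sub_cancel_right]
  calc |S.discounted d (fun s => (t + s) ^ (k + 1) - t ^ (k + 1)) L|
      ≤ S.discounted d ((2 ^ (k + 1) * (1 + |t| ^ k)) • fun s => 1 + |s| ^ (k + 1)) L :=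
        S.abs_discounted_le d (abs_add_pow_succ_sub_le t · k) L
    _ ≤ 2 ^ (k + 1) * (1 + |t| ^ k) * (K * √(1 + R) ^ (k + 1)) := by
        rw [discounted_const_smul]
        gcongr
    _ = 2 ^ (k + 1) * (K * √(1 + R) ^ (k + 1)) * (1 + |t| ^ k) := by ring

/-- Past its first epoch after `B`, the process forgets all of its height but the leading power,
and, `mass` varying slowly, its overshoot over `B`. -/
lemma exists_abs_discounted_sub_le (hd : 0 < d) (k : ℕ) {R ε : ℝ} (hR : 0 ≤ R)
    (hslow : ∀ y, 0 ≤ y → |S.mass d (R - y) - S.mass d R| ≤ ε * Real.exp (S.rate * y)) :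
    ∃ C, ∀ B, 0 ≤ B →
      |S.discounted d (fun t => t ^ (k + 1)) (B + R) -
          (S.mass d R * S.firstPassage B (fun t _ => t ^ (k + 1)) +
            Real.exp (-d * R) * S.discounted d (fun t => t ^ (k + 1)) B)| ≤
        C * (1 + S.firstPassage B fun t _ => |t| ^ k) +
          ε * S.firstPassage B (S.overshoot (k + 1) B) := by
  obtain ⟨C, h⟩ := S.exists_abs_discounted_add_pow_sub_le hd k hR
  refine ⟨C, fun B hB => ?_⟩
  have hpast : S.StepSummable _ := S.stepSummable_discounted d (fun t => t ^ (k + 1)) (B + R)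
  have hlead := (S.stepSummable_pow (k + 1)).const_smul (-S.mass d R)
  have hlower := (S.stepSummable_one.add (S.stepSummable_abs_pow k)).const_smul C
  have hover := (S.stepSummable_overshoot (k + 1) B).const_smul ε
  have hcompare := S.abs_firstPassage_le (hpast.add hlead) (hlower.add hover) (B := B)
    fun t x hx => by
      have hmass := hslow (x - B) (by linarith)
      rw [show R - (x - B) = B + R - x by ring] at hmass
      have hmass' := mul_le_mul_of_nonneg_left hmass (abs_nonneg (t ^ (k + 1)))
      rw [← abs_mul] at hmass'
      refine le_trans ?_ (add_le_add (h t (B + R - x) (by linarith)) hmass') |>.trans_eq ?_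
      · refine le_trans (le_of_eq ?_) (abs_add_le _ _)
        simp only [Pi.add_apply, Pi.smul_apply, smul_eq_mul]
        ring_nf
      · simp only [Pi.add_apply, Pi.smul_apply, smul_eq_mul, overshoot, abs_pow]
        ring
  simp only [S.firstPassage_add hpast hlead, S.firstPassage_add hlower hover,
    S.firstPassage_add S.stepSummable_one (S.stepSummable_abs_pow k), S.firstPassage_one hB,
    firstPassage_const_smul] at hcompare
  rw [S.discounted_eq_firstPassage_add d _ hB (show B ≤ B + R by linarith), add_sub_cancel_left]
  convert hcompare using 2
  ring

lemma one_add_firstPassage_abs_pow_isLittleO (k : ℕ) :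
    (fun B => 1 + S.firstPassage B fun t _ => |t| ^ k) =o[atTop] fun B => √(1 + B) ^ (k + 1) := by
  obtain ⟨K, h⟩ := S.exists_firstPassage_abs_pow_le k
  have hbigO : (fun B => 1 + S.firstPassage B fun t _ => |t| ^ k) =O[atTop]
      fun B => √(1 + B) ^ k := by
    refine IsBigO.of_bound (1 + K) ?_
    filter_upwards [eventually_ge_atTop 0] with B hB
    have hnonneg : |S.firstPassage B fun t _ => |t| ^ k| ≤ S.firstPassage B fun t _ => |t| ^ k :=
      S.abs_firstPassage_le (S.stepSummable_abs_pow k) (S.stepSummable_abs_pow k)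
        fun t x _ => (abs_of_nonneg (by positivity)).le
    rw [Real.norm_of_nonneg (by linarith [(abs_nonneg _).trans hnonneg]),
      Real.norm_of_nonneg (by positivity), add_mul, one_mul]
    exact add_le_add (one_le_pow₀ (one_le_sqrt_one_add hB)) (h B hB)
  exact hbigO.trans_isLittleO (sqrt_one_add_pow_isLittleO k.lt_succ_self)

lemma exists_abs_discounted_add_sub_le (hd : 0 < d)
    (hdense : Dense (AddSubgroup.closure (Set.range S.span) : Set ℝ)) (k : ℕ) {c : ℝ}
    (hc : 0 < c) : ∃ R C, 0 ≤ R ∧ ∀ B, 0 ≤ B →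
      |S.discounted d (fun t => t ^ (k + 1)) (B + R) -
          S.mass d R * S.firstPassage B (fun t _ => t ^ (k + 1))| ≤
        C * (1 + S.firstPassage B fun t _ => |t| ^ k) + c * √(1 + B) ^ (k + 1) := by
  obtain ⟨K, hover⟩ := S.exists_firstPassage_overshoot_le (k + 1)
  obtain ⟨K', -, hdisc⟩ := S.exists_discounted_abs_pow_le hd (k + 1)
  obtain ⟨ε, hε, hεK⟩ := exists_pos_mul_lt (half_pos hc) K
  have hdecay : Tendsto (fun R => Real.exp (-d * R) * K') atTop (𝓝 (0 * K')) :=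
    (Real.tendsto_exp_atBot.comp
      (tendsto_id.const_mul_atTop_of_neg (neg_neg_of_pos hd))).mul_const _
  rw [zero_mul] at hdecay
  obtain ⟨R, hR, hslow, hRK⟩ := ((eventually_ge_atTop 0).and
    ((S.eventually_abs_mass_sub_le hd hdense hε).and
      (hdecay.eventually_le_const (half_pos hc)))).exists
  obtain ⟨C, hsplit⟩ := S.exists_abs_discounted_sub_le hd k hR hslow
  refine ⟨R, C, hR, fun B hB => ?_⟩
  have hbefore : |Real.exp (-d * R) * S.discounted d (fun t => t ^ (k + 1)) B| ≤
      c / 2 * √(1 + B) ^ (k + 1) := by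
    rw [abs_mul, Real.abs_exp]
    calc Real.exp (-d * R) * |S.discounted d (fun t => t ^ (k + 1)) B|
        ≤ Real.exp (-d * R) * (K' * √(1 + B) ^ (k + 1)) := by
          gcongr
          exact (S.abs_discounted_le d (fun t => (abs_pow t (k + 1)).le) B).trans (hdisc B hB)
      _ ≤ c / 2 * √(1 + B) ^ (k + 1) := by
          rw [← mul_assoc]
          gcongr
  have hovershoot : ε * S.firstPassage B (S.overshoot (k + 1) B) ≤ c / 2 * √(1 + B) ^ (k + 1) :=
    calc _ ≤ ε * (K * √(1 + B) ^ (k + 1)) := by gcongr; exact hover B hB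
      _ = K * ε * √(1 + B) ^ (k + 1) := by ring
      _ ≤ c / 2 * √(1 + B) ^ (k + 1) := by gcongr
  have hB' := hsplit B hB
  rw [abs_le] at hbefore hB' ⊢
  constructor <;> linarith

theorem discounted_pow_isLittleO (hd : 0 < d)
    (hdense : Dense (AddSubgroup.closure (Set.range S.span) : Set ℝ))
    (h : (fun B => S.firstPassage B fun t _ => t ^ (k + 1)) =o[atTop]
      fun B => √(1 + B) ^ (k + 1)) :
    S.discounted d (fun t => t ^ (k + 1)) =o[atTop] fun L => √(1 + L) ^ (k + 1) := by
  rw [isLittleO_iff]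
  intro c hc
  have hc3 : 0 < c / 3 := by positivity
  obtain ⟨R, C, hR, hsplit⟩ := S.exists_abs_discounted_add_sub_le hd hdense k hc3
  suffices hB : ∀ᶠ B in atTop, |S.discounted d (fun t => t ^ (k + 1)) (B + R)| ≤
      c * √(1 + (B + R)) ^ (k + 1) by
    filter_upwards [(tendsto_atTop_add_const_right atTop (-R) tendsto_id).eventually hB] with L hL
    rw [Real.norm_eq_abs, Real.norm_of_nonneg (by positivity)]
    simpa only [id_eq, neg_add_cancel_right] using hL
  filter_upwards [eventually_ge_atTop 0, (h.const_mul_left (S.mass d R)).def hc3,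
    ((S.one_add_firstPassage_abs_pow_isLittleO k).const_mul_left C).def hc3]
    with B hB hmean hlower
  rw [Real.norm_eq_abs, Real.norm_of_nonneg (by positivity)] at hmean hlower
  have hmono : c * √(1 + B) ^ (k + 1) ≤ c * √(1 + (B + R)) ^ (k + 1) := by
    gcongr
    linarith
  have hB' := hsplit B hB
  rw [abs_le] at hmean hlower hB' ⊢
  constructor <;> linarith

lemma firstPassage_pow_one {B : ℝ} (hB : 0 ≤ B) : S.firstPassage B (fun t _ => t ^ 1) = 0 := by
  rw [S.firstPassage_eq_add_discounted_zero (S.stepSummable_pow 1) hB]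
  simp only [S.step_pow_one, sub_self]
  simp [discounted]

theorem discounted_odd_pow_isLittleO (hd : 0 < d)
    (hdense : Dense (AddSubgroup.closure (Set.range S.span) : Set ℝ)) (hk : Odd k) :
    S.discounted d (fun t => t ^ k) =o[atTop] fun L => √(1 + L) ^ k := by
  obtain ⟨r, rfl⟩ := hk
  induction r with
  | zero =>
    refine S.discounted_pow_isLittleO (k := 0) hd hdense ((isLittleO_zero _ _).congr' ?_ .rfl)
    filter_upwards [eventually_ge_atTop 0] with B hB
    exact (S.firstPassage_pow_one hB).symm
  | succ r ih => exact S.discounted_pow_isLittleO hd hdense (S.firstPassage_pow_isLittleO hd ih)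

end OddMoments

end MarkedRenewal

lemma exists_abs_one_sub_mul_pow_le (m : ℝ) {a : ℝ} (ha : 0 < a) (k : ℕ) :
    ∃ C, ∀ x, 0 ≤ x → |1 - m * x| ^ k ≤ C * Real.exp (a * x) := by
  refine ⟨(1 + |m| / (a / (k + 1))) ^ k, fun x hx => ?_⟩
  have hone : |1 - m * x| ≤ (1 + |m| / (a / (k + 1))) * Real.exp (a / (k + 1) * x) := by
    calc |1 - m * x| ≤ 1 + |m| * x := by
          simpa [abs_mul, abs_of_nonneg hx] using abs_sub 1 (m * x)
      _ = 1 + |m| / (a / (k + 1)) * (a / (k + 1) * x) := by field_simp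
      _ ≤ (1 + |m| / (a / (k + 1))) * (1 + a / (k + 1) * x) := by
          have : 0 ≤ |m| / (a / (k + 1)) := by positivity
          have : 0 ≤ a / (k + 1) * x := by positivity
          linarith
      _ ≤ _ := by
          gcongr
          linarith [Real.add_one_le_exp (a / (k + 1) * x)]
  calc |1 - m * x| ^ k ≤ ((1 + |m| / (a / (k + 1))) * Real.exp (a / (k + 1) * x)) ^ k := by gcongr
    _ = (1 + |m| / (a / (k + 1))) ^ k * Real.exp (k / (k + 1) * (a * x)) := by
        rw [mul_pow, ← Real.exp_nat_mul]
        ring_nf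
    _ ≤ (1 + |m| / (a / (k + 1))) ^ k * Real.exp (a * x) := by
        refine mul_le_mul_of_nonneg_left (Real.exp_le_exp.2 ?_) (by positivity)
        have hfrac : (k : ℝ) / (k + 1) ≤ 1 := div_le_one_of_le₀ (by linarith) (by positivity)
        exact mul_le_of_le_one_left (by positivity) hfrac

section DenseLog

variable {P : Set ℕ} {q : ℚ}

lemma exists_rat_eq_exp_of_mem_closure_log (hP : ∀ n ∈ P, n ≠ 0) {x : ℝ}
    (hx : x ∈ AddSubgroup.closure (Set.range fun n : P => Real.log (n : ℕ))) :
    ∃ q : ℚ, Real.exp x = q := by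
  induction hx using AddSubgroup.closure_induction with
  | mem x hx =>
    obtain ⟨n, rfl⟩ := hx
    have := (Nat.pos_of_ne_zero (hP n n.2))
    exact ⟨(n : ℕ), by simp [Real.exp_log (Nat.cast_pos.2 this)]⟩
  | zero => exact ⟨1, by simp⟩
  | add x y _ _ hx hy =>
    obtain ⟨p, hp⟩ := hx
    obtain ⟨q, hq⟩ := hy
    exact ⟨p * q, by rw [Real.exp_add, hp, hq, Rat.cast_mul]⟩
  | neg x _ hx =>
    obtain ⟨p, hp⟩ := hx
    exact ⟨p⁻¹, by rw [Real.exp_neg, hp, Rat.cast_inv]⟩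

lemma exists_natCast_eq_of_pow_eq_natCast (hq : 0 ≤ q) {k n : ℕ} (hk : k ≠ 0)
    (h : q ^ k = n) : ∃ d : ℕ, (d : ℚ) = q := by
  have hden : q.den = 1 := by
    have := congrArg Rat.den h
    rw [Rat.den_natCast, Rat.den_pow] at this
    exact (pow_eq_one_iff.1 this).resolve_right hk
  lift q.num to ℕ using Rat.num_nonneg.2 hq with d hd
  exact ⟨d, by rw [← Rat.coe_int_num_of_den_eq_one hden, ← hd, Int.cast_natCast]⟩

lemma exists_pow_eq_of_log_mem_zmultiples {a : ℝ} (ha : 0 ≤ a) (hq : Real.exp a = q) {n : ℕ}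
    (hn : 2 ≤ n) (h : Real.log n ∈ AddSubgroup.zmultiples a) : ∃ k : ℕ, 1 ≤ k ∧ q ^ k = n := by
  obtain ⟨z, hz⟩ := AddSubgroup.mem_zmultiples_iff.1 h
  have hlog : 0 < Real.log n := Real.log_pos (by exact_mod_cast hn)
  have hz0 : 0 < z := by
    by_contra! hz0
    rw [← hz, zsmul_eq_mul] at hlog
    exact hlog.not_ge (mul_nonpos_of_nonpos_of_nonneg (by exact_mod_cast hz0) ha)
  lift z to ℕ using hz0.le
  refine ⟨z, by exact_mod_cast hz0, ?_⟩
  have : (q : ℝ) ^ z = n := by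
    rw [← hq, ← Real.exp_nat_mul, ← nsmul_eq_mul, ← natCast_zsmul, hz,
      Real.exp_log (by positivity)]
  exact_mod_cast this

theorem dense_closure_range_log (hP : ∀ n ∈ P, 2 ≤ n)
    (hnp : ∀ d : ℕ, 2 ≤ d → ¬ P ⊆ {n : ℕ | ∃ k : ℕ, 1 ≤ k ∧ n = d ^ k}) :
    Dense (AddSubgroup.closure (Set.range fun n : P => Real.log (n : ℕ)) : Set ℝ) := by
  refine (AddSubgroup.dense_or_cyclic _).resolve_right ?_
  rintro ⟨a, ha⟩
  obtain ⟨b, hb, hlog⟩ : ∃ b, 0 ≤ b ∧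
      AddSubgroup.closure (Set.range fun n : P => Real.log (n : ℕ)) = AddSubgroup.zmultiples b := by
    rw [ha, ← AddSubgroup.zmultiples_eq_closure]
    rcases le_total 0 a with h | h
    exacts [⟨a, h, rfl⟩, ⟨-a, neg_nonneg.2 h, AddSubgroup.zmultiples_neg.symm⟩]
  obtain ⟨q, hq⟩ := exists_rat_eq_exp_of_mem_closure_log (fun n hn => by linarith [hP n hn])
    (hlog ▸ AddSubgroup.mem_zmultiples b)
  have hpow : ∀ n ∈ P, ∃ k : ℕ, 1 ≤ k ∧ q ^ k = n := fun n hn =>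
    exists_pow_eq_of_log_mem_zmultiples hb hq (hP n hn)
      (hlog ▸ AddSubgroup.subset_closure ⟨⟨n, hn⟩, rfl⟩)
  obtain ⟨n, hn, -⟩ := Set.not_subset.1 (hnp 2 le_rfl)
  obtain ⟨k, hk, hqk⟩ := hpow n hn
  have hq0 : 0 ≤ q := by exact_mod_cast hq ▸ (Real.exp_pos b).le
  obtain ⟨d, rfl⟩ := exists_natCast_eq_of_pow_eq_natCast hq0 (by omega) hqk
  have hpow' : ∀ n ∈ P, ∃ k : ℕ, 1 ≤ k ∧ n = d ^ k := fun n hn => by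
    obtain ⟨k, hk, h⟩ := hpow n hn
    exact ⟨k, hk, by exact_mod_cast h.symm⟩
  refine hnp d ?_ hpow'
  by_contra! hd
  have hle : n ≤ 1 := by
    rw [show n = d ^ k by exact_mod_cast hqk.symm]
    exact pow_le_one' (by omega) k
  linarith [hP n hn]

end DenseLog

section DirichletRenewal

variable {P : Set ℕ} {r ρ : ℝ}

lemma hasSum_rpow_of_Pval_eq_one (hρ : Pval P ρ = 1) :
    HasSum (fun n : P => ((n : ℕ) : ℝ) ^ (-ρ)) 1 := by
  refine hρ ▸ Summable.hasSum (of_not_not fun h => ?_)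
  rw [Pval, tsum_eq_zero_of_not_summable h] at hρ
  exact zero_ne_one hρ

lemma summable_rpow_mul_exp_mul_abs_pow (hP : ∀ n ∈ P, 2 ≤ n) (hr : r < ρ)
    (hsum : Summable fun n : P => ((n : ℕ) : ℝ) ^ (-r)) (m : ℝ) (k : ℕ) :
    Summable fun n : P => ((n : ℕ) : ℝ) ^ (-ρ) *
      (Real.exp ((ρ - r) / 2 * Real.log (n : ℕ)) * |1 - m * Real.log (n : ℕ)| ^ k) := by
  obtain ⟨C, hC⟩ := exists_abs_one_sub_mul_pow_le m (half_pos (sub_pos.2 hr)) k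
  refine (hsum.mul_left C).of_nonneg_of_le (fun n => by positivity) fun n => ?_
  have hn : (0 : ℝ) < (n : ℕ) := Nat.cast_pos.2 (by linarith [hP n n.2])
  calc _ ≤ ((n : ℕ) : ℝ) ^ (-ρ) * (Real.exp ((ρ - r) / 2 * Real.log (n : ℕ)) *
        (C * Real.exp ((ρ - r) / 2 * Real.log (n : ℕ)))) := by
          gcongr
          exact hC _ (Real.log_natCast_nonneg _)
    _ = C * ((n : ℕ) : ℝ) ^ (-r) := by
        rw [Real.rpow_def_of_pos hn, Real.rpow_def_of_pos hn, mul_left_comm _ C,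
          mul_left_comm _ C, ← Real.exp_add, ← Real.exp_add]
        ring_nf

lemma summable_rpow_mul_log (hP : ∀ n ∈ P, 2 ≤ n) (hr : r < ρ)
    (hsum : Summable fun n : P => ((n : ℕ) : ℝ) ^ (-r)) :
    Summable fun n : P => ((n : ℕ) : ℝ) ^ (-ρ) * Real.log (n : ℕ) := by
  have hmoment := summable_rpow_mul_exp_mul_abs_pow hP hr hsum 0 0
  simp only [pow_zero, mul_one] at hmoment
  have ha : 0 < (ρ - r) / 2 := half_pos (sub_pos.2 hr)
  refine (hmoment.mul_left ((ρ - r) / 2)⁻¹).of_nonneg_of_le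
    (fun n => mul_nonneg (by positivity) (Real.log_natCast_nonneg _)) fun n => ?_
  rw [mul_left_comm]
  gcongr
  rw [le_inv_mul_iff₀ ha]
  linarith [Real.add_one_le_exp ((ρ - r) / 2 * Real.log (n : ℕ))]

lemma Pderiv1_neg (hP : ∀ n ∈ P, 2 ≤ n) (hr : r < ρ)
    (hsum : Summable fun n : P => ((n : ℕ) : ℝ) ^ (-r)) (hne : P.Nonempty) : Pderiv1 P ρ < 0 := by
  obtain ⟨n, hn⟩ := hne
  have hn1 : (1 : ℝ) < n := by exact_mod_cast hP n hn
  refine neg_neg_of_pos ((summable_rpow_mul_log hP hr hsum).tsum_pos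
    (fun n => mul_nonneg (by positivity) (Real.log_natCast_nonneg _)) ⟨n, hn⟩
    (mul_pos (Real.rpow_pos_of_pos (by linarith) _) (Real.log_pos hn1)))

lemma hasSum_rpow_mul_one_sub (hP : ∀ n ∈ P, 2 ≤ n) (hr : r < ρ)
    (hsum : Summable fun n : P => ((n : ℕ) : ℝ) ^ (-r)) (hρ : Pval P ρ = 1) :
    HasSum (fun n : P => ((n : ℕ) : ℝ) ^ (-ρ) * (1 - -1 / Pderiv1 P ρ * Real.log (n : ℕ))) 0 := by
  have hprob := hasSum_rpow_of_Pval_eq_one hρ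
  have hne : P.Nonempty := by
    by_contra! hempty
    subst hempty
    simp [Pval] at hρ
  have hdiff := hprob.sub ((summable_rpow_mul_log hP hr hsum).hasSum.mul_left (-1 / Pderiv1 P ρ))
  rw [← neg_neg (∑' n : P, _), ← Pderiv1, mul_neg,
    div_mul_cancel₀ _ (Pderiv1_neg hP hr hsum hne).ne, neg_neg, sub_self] at hdiff
  exact hdiff.congr_fun fun n => by ring

/-- The marked renewal process whose letters are the elements of `P`, drawn with probability
`n ^ (-ρ)`, taking time `log n` and marked by `1 - μ log n`, where `μ = -1 / 𝒫'(ρ)`. The words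
read up to time `log N` are then the factorizations over `P` of the integers up to `N`. The
exponent `r < ρ`, at which the Dirichlet series still converges, only enters through `rate`. -/
def dirichletRenewal (hP : ∀ n ∈ P, 2 ≤ n) (hr : r < ρ)
    (hsum : Summable fun n : P => ((n : ℕ) : ℝ) ^ (-r)) (hρ : Pval P ρ = 1) : MarkedRenewal P where
  prob n := ((n : ℕ) : ℝ) ^ (-ρ)
  span n := Real.log (n : ℕ)
  mark n := 1 - -1 / Pderiv1 P ρ * Real.log (n : ℕ)
  gap := Real.log 2
  rate := (ρ - r) / 2
  prob_pos n := Real.rpow_pos_of_pos (Nat.cast_pos.2 (by linarith [hP n n.2])) _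
  gap_pos := Real.log_pos one_lt_two
  gap_le_span n := Real.log_le_log two_pos (by exact_mod_cast hP n n.2)
  finite_span_le B := by
    refine Set.Finite.of_injOn (t := Set.Iic ⌊Real.exp B⌋₊) (fun n hn => ?_)
      Subtype.val_injective.injOn (Set.finite_Iic _)
    exact Nat.le_floor ((Real.log_le_iff_le_exp (Nat.cast_pos.2 (by linarith [hP n n.2]))).1 hn)
  hasSum_prob := hasSum_rpow_of_Pval_eq_one hρ
  hasSum_mark := hasSum_rpow_mul_one_sub hP hr hsum hρ
  rate_pos := half_pos (sub_pos.2 hr)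
  summable_expMoment := summable_rpow_mul_exp_mul_abs_pow hP hr hsum _

/-- The integer factorized by the word `w` over `P`. -/
def wordProduct (w : List P) : ℕ := (w.map (↑)).prod

@[simp] lemma wordProduct_nil : wordProduct ([] : List P) = 1 := rfl

@[simp] lemma wordProduct_cons (n : P) (w : List P) :
    wordProduct (n :: w) = n * wordProduct w := by
  simp [wordProduct]

lemma wordProduct_pos (hP : ∀ n ∈ P, 2 ≤ n) (w : List P) : 0 < wordProduct w :=
  List.prod_pos fun _ h => by
    obtain ⟨n, -, rfl⟩ := List.mem_map.1 h
    linarith [hP n n.2]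

lemma af_eq_card_list (P : Set ℕ) (m n : ℕ) :
    af P m n = Nat.card {w : List P // w.length = m ∧ wordProduct w = n} := by
  refine Nat.card_eq_of_bijective
    (fun t => ⟨List.ofFn fun i => (⟨t.1 i, t.2.1 i⟩ : P), List.length_ofFn, ?_⟩)
    ⟨fun t t' h => ?_, ?_⟩
  · rw [wordProduct, List.map_ofFn, List.prod_ofFn]
    exact t.2.2
  · ext i
    exact congrArg Subtype.val (congrFun (List.ofFn_injective (congrArg Subtype.val h)) i)
  · rintro ⟨w, rfl, hw⟩
    refine ⟨⟨fun i => w.get i, fun i => (w.get i).2, ?_⟩, Subtype.ext (List.ofFn_get w)⟩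
    rw [← hw, wordProduct, ← List.prod_ofFn]
    congr 1
    conv_rhs => rw [← List.ofFn_get w, List.map_ofFn]
    rfl

lemma tsum_af_mul {n : ℕ} {V : Finset (List P)} (hV : ∀ w, w ∈ V ↔ wordProduct w = n)
    (g : ℕ → ℝ) : ∑' m, (af P m n : ℝ) * g m = ∑ w ∈ V, g w.length := by
  have hcard : ∀ m, af P m n = (V.filter fun w => w.length = m).card := fun m => by
    rw [af_eq_card_list, ← Nat.card_eq_finsetCard]
    exact Nat.card_congr (Equiv.subtypeEquivRight fun w => by
      rw [Finset.mem_filter, hV, and_comm])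
  rw [Finset.sum_comp, tsum_eq_sum (s := V.image List.length)]
  · simp only [hcard, nsmul_eq_mul]
  · intro m hm
    have hlength : ∀ w ∈ V, ¬w.length = m := fun w hw h => hm (h ▸ Finset.mem_image_of_mem _ hw)
    rw [hcard, Finset.filter_false_of_mem hlength]
    simp

variable (hP : ∀ n ∈ P, 2 ≤ n) (hr : r < ρ)
  (hsum : Summable fun n : P => ((n : ℕ) : ℝ) ^ (-r)) (hρ : Pval P ρ = 1)

lemma time_dirichletRenewal (w : List P) :
    (dirichletRenewal hP hr hsum hρ).time w = Real.log (wordProduct w) := by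
  induction w with
  | nil => simp
  | cons n w ih =>
    have := hP n n.2
    have := wordProduct_pos hP w
    rw [MarkedRenewal.time_cons, ih, wordProduct_cons, Nat.cast_mul,
      Real.log_mul (by positivity) (by positivity), dirichletRenewal]

lemma height_dirichletRenewal (w : List P) : (dirichletRenewal hP hr hsum hρ).height w =
    w.length - -1 / Pderiv1 P ρ * Real.log (wordProduct w) := by
  rw [← time_dirichletRenewal hP hr hsum hρ]
  induction w with
  | nil => simp
  | cons n w ih =>
    rw [MarkedRenewal.height_cons, MarkedRenewal.time_cons, ih, List.length_cons]
    simp only [dirichletRenewal]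
    push_cast
    ring

lemma wordProb_dirichletRenewal (w : List P) : (dirichletRenewal hP hr hsum hρ).wordProb w =
    Real.exp (-ρ * (dirichletRenewal hP hr hsum hρ).time w) := by
  induction w with
  | nil => simp
  | cons n w ih =>
    have := hP n n.2
    rw [MarkedRenewal.wordProb_cons, MarkedRenewal.time_cons, ih, mul_add, Real.exp_add]
    simp only [dirichletRenewal]
    rw [Real.rpow_def_of_pos (by positivity), mul_comm (Real.log _)]

lemma mem_words_dirichletRenewal {N : ℕ} (hN : N ≠ 0) (w : List P) :
    w ∈ (dirichletRenewal hP hr hsum hρ).words (Real.log N) ↔ wordProduct w ≤ N := by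
  have := wordProduct_pos hP w
  rw [MarkedRenewal.mem_words, time_dirichletRenewal,
    Real.log_le_log_iff (by positivity) (by positivity), Nat.cast_le]

lemma rpow_mul_discounted_dirichletRenewal (φ : ℝ → ℝ) {N : ℕ} (hN : N ≠ 0) :
    (N : ℝ) ^ ρ * (dirichletRenewal hP hr hsum hρ).discounted ρ φ (Real.log N) =
      ∑ w ∈ (dirichletRenewal hP hr hsum hρ).words (Real.log N),
        φ ((dirichletRenewal hP hr hsum hρ).height w) := by
  rw [MarkedRenewal.discounted, Finset.mul_sum, Real.rpow_def_of_pos (by positivity)]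
  refine Finset.sum_congr rfl fun w _ => ?_
  rw [wordProb_dirichletRenewal, ← mul_assoc, ← mul_assoc, ← Real.exp_add, ← Real.exp_add]
  ring_nf
  rw [Real.exp_zero, one_mul]

theorem sum_Icc_tsum_af_mul (φ : ℝ → ℝ) {N : ℕ} (hN : N ≠ 0) :
    ∑ n ∈ Finset.Icc 1 N, ∑' m : ℕ, (af P m n : ℝ) * φ (m - -1 / Pderiv1 P ρ * Real.log n) =
      (N : ℝ) ^ ρ * (dirichletRenewal hP hr hsum hρ).discounted ρ φ (Real.log N) := by
  rw [rpow_mul_discounted_dirichletRenewal hP hr hsum hρ φ hN,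
    ← Finset.sum_fiberwise_of_maps_to (t := Finset.Icc 1 N) (g := wordProduct) fun w hw =>
      Finset.mem_Icc.2 ⟨wordProduct_pos hP w, (mem_words_dirichletRenewal hP hr hsum hρ hN w).1 hw⟩]
  refine Finset.sum_congr rfl fun n hn => ?_
  rw [tsum_af_mul (V := ((dirichletRenewal hP hr hsum hρ).words (Real.log N)).filter
    fun w => wordProduct w = n) (fun w => ?_) fun m => φ (m - -1 / Pderiv1 P ρ * Real.log n)]
  · refine Finset.sum_congr rfl fun w hw => ?_
    rw [height_dirichletRenewal, (Finset.mem_filter.1 hw).2]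
  · rw [Finset.mem_filter, mem_words_dirichletRenewal hP hr hsum hρ hN]
    exact and_iff_right_of_imp fun h => h ▸ (Finset.mem_Icc.1 hn).2

lemma sum_bCoef_eq_rpow_mul_discounted (k : ℕ) {N : ℕ} (hN : N ≠ 0) :
    ∑ n ∈ Finset.Icc 1 N, bCoef P (-1 / Pderiv1 P ρ) k n =
      (N : ℝ) ^ ρ * (dirichletRenewal hP hr hsum hρ).discounted ρ (fun t => t ^ k) (Real.log N) :=
  sum_Icc_tsum_af_mul hP hr hsum hρ (fun t => t ^ k) hN

lemma Acum_eq_rpow_mul_mass {N : ℕ} (hN : N ≠ 0) :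
    Acum P N = (N : ℝ) ^ ρ * (dirichletRenewal hP hr hsum hρ).mass ρ (Real.log N) := by
  simpa only [Acum, aTot, MarkedRenewal.mass, mul_one] using
    sum_Icc_tsum_af_mul hP hr hsum hρ (fun _ => 1) hN

end DirichletRenewal

/-- **Odd central moments relative to `μ log ν_N` are negligible.** Under the stated
assumptions, including non-periodicity, for every odd `k ≥ 1`,
`Σ_{n ≤ N} b_k(n) = o(N^ρ (log N)^{k/2})`; equivalently,
`(1/A(N)) Σ_{n ≤ N} b_k(n) = o((log N)^{k/2})`. -/
theorem odd_moment_negligible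
    (P : Set ℕ) (hP : ∀ n ∈ P, 2 ≤ n) (hP2 : P.Nontrivial)
    (hκ : 1 < PvalE P (kappa P))
    (ρ : ℝ) (hρ0 : 0 < ρ) (hρκ : kappa P < (ρ : EReal)) (hρ1 : Pval P ρ = 1)
    (μ : ℝ) (hμ : μ = -1 / Pderiv1 P ρ)
    (hnp : ∀ d : ℕ, 2 ≤ d → ¬ P ⊆ {n : ℕ | ∃ k : ℕ, 1 ≤ k ∧ n = d ^ k})
    (k : ℕ) (hk : Odd k) :
    ((fun N : ℕ => ∑ n ∈ Finset.Icc 1 N, bCoef P μ k n)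
      =o[atTop] fun N : ℕ => (N : ℝ) ^ ρ * (Real.log N) ^ ((k : ℝ) / 2)) ∧
    ((fun N : ℕ => (∑ n ∈ Finset.Icc 1 N, bCoef P μ k n) / Acum P N)
      =o[atTop] fun N : ℕ => (Real.log N) ^ ((k : ℝ) / 2)) := by
  subst hμ
  obtain ⟨_, ⟨r, rfl, hsum⟩, hr⟩ := sInf_lt_iff.1 hρκ
  let S := dirichletRenewal hP (EReal.coe_lt_coe_iff.1 hr) hsum hρ1
  have hlog : Tendsto (fun N : ℕ => Real.log N) atTop atTop :=
    Real.tendsto_log_atTop.comp tendsto_natCast_atTop_atTop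
  have hmoment : (fun N : ℕ => S.discounted ρ (fun t => t ^ k) (Real.log N)) =o[atTop]
      fun N : ℕ => Real.log N ^ ((k : ℝ) / 2) :=
    ((S.discounted_odd_pow_isLittleO hρ0 (dense_closure_range_log hP hnp) hk).trans_isBigO
      (sqrt_one_add_pow_isBigO k)).comp_tendsto hlog
  have hmass : (fun N : ℕ => (S.mass ρ (Real.log N))⁻¹) =O[atTop] fun _ => (1 : ℝ) :=
    (S.inv_mass_isBigO_one hρ0.le).comp_tendsto hlog
  have hb : (fun N : ℕ => ∑ n ∈ Finset.Icc 1 N, bCoef P (-1 / Pderiv1 P ρ) k n) =ᶠ[atTop]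
      fun N : ℕ => (N : ℝ) ^ ρ * S.discounted ρ (fun t => t ^ k) (Real.log N) :=
    (eventually_ne_atTop 0).mono fun N => sum_bCoef_eq_rpow_mul_discounted hP _ hsum hρ1 k
  refine ⟨((isBigO_refl _ _).mul_isLittleO hmoment).congr' hb.symm .rfl,
    ((hmoment.mul_isBigO hmass).congr' ?_ (.of_eq (by simp)))⟩
  filter_upwards [hb, eventually_ne_atTop 0] with N hbN hN
  rw [hbN, Acum_eq_rpow_mul_mass hP _ hsum hρ1 hN, mul_div_mul_left _ _ (by positivity),
    div_eq_mul_inv]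
end
end

section
/- Under the stated assumptions including non-periodicity, for every odd integer k ≥ 1, Σ_{1≤n≤N} b_k(n) (log n)^{k/2} = o(A(N) (log N)^{k}) as N → ∞. -/
open scoped BigOperators ENNReal
open Filter Asymptotics

noncomputable section

/-!
The twisted sums `S(θ, N) = ∑_{n ≤ N} ∑_m a_m(n) e^{θ (m - μ log n)}` generate the sums
`∑_{n ≤ N} b_k(n)`. Splitting off the first factor of each tuple gives
`S(θ, N) = 1 + ∑_{p ∈ 𝒫} e^{θ (1 - μ log p)} S(θ, N / p)`. If `w(θ)` is defined near `0` by
`𝒫(w(θ)) = e^{-θ}`, `w(0) = ρ`, then `z θ t = e^{-(w(θ) - μ θ) t} S(θ, e^t)` solves a renewal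
equation with steps `log p` and probability weights `e^θ p^{-w(θ)}`. Non-periodicity says that the
steps lie in no lattice, and the renewal theorem, uniformly in `θ` near `0`, gives `z θ t → C > 0`
as `(θ, t) → (0, ∞)`.

By the choice of `μ`, `w(θ) - μ θ = ρ + c θ² + o(θ²)`. With `θ = x / √log N` this yields
`N^{-ρ} S(x / √log N, N) → C e^{c x²}`: the moment generating function of `(m - μ log n) / √log N`
under the weights `N^{-ρ} a_m(n)` has an even limit. So the odd moments tend to `0`, that is
`∑_{n ≤ N} b_k(n) = o(N^ρ (log N)^{k/2})` for odd `k`, while `N^{-ρ} A(N) → C`; Abel summation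
inserts the factor `(log n)^{k/2}`.
-/

open scoped Topology
open MeasureTheory

theorem eq_of_hasSum_weighted {ι : Type*} {q y : ι → ℝ} {M : ℝ} (hq : ∀ i, 0 < q i)
    (hq1 : HasSum q 1) (hy : HasSum (fun i ↦ q i * y i) M)
    (hM : (∀ i, y i ≤ M) ∨ ∀ i, M ≤ y i) (i : ι) : y i = M := by
  have hzero : HasSum (fun i ↦ q i * (M - y i)) 0 := by
    simpa [mul_sub] using (hq1.mul_right M).sub hy
  have hterm : q i * (M - y i) = 0 := by
    rcases hM with hM | hM
    · exact congrFun ((hasSum_zero_iff_of_nonneg fun j ↦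
        mul_nonneg (hq j).le (sub_nonneg.2 (hM j))).1 hzero) i
    · refine neg_eq_zero.1 (congrFun ((hasSum_zero_iff_of_nonneg fun j ↦ ?_).1
        (by simpa using hzero.neg)) i)
      exact neg_nonneg.2 (mul_nonpos_of_nonneg_of_nonpos (hq j).le (sub_nonpos.2 (hM j)))
  linarith [(mul_eq_zero.1 hterm).resolve_left (hq i).ne']

theorem tendsto_of_extreme_mapClusterPt {X : Type*} {f : X → ℝ} {l : Filter X} [l.NeBot]
    {a b c : ℝ} (hf : ∀ᶠ x in l, f x ∈ Set.Icc a b)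
    (hc : ∀ M, MapClusterPt M l f →
      (∀ y, MapClusterPt y l f → y ≤ M) ∨ (∀ y, MapClusterPt y l f → M ≤ y) → M = c) :
    Tendsto f l (𝓝 c) := by
  set S := {y | MapClusterPt y l f}
  have hSsub : S ⊆ Set.Icc a b := fun y hy ↦
    isClosed_Icc.mem_of_mapClusterPt hy hf
  have hScompact : IsCompact S :=
    isCompact_Icc.of_isClosed_subset isClosed_setOfPred_clusterPt hSsub
  have hSne : S.Nonempty :=
    let ⟨y, _, hy⟩ := isCompact_Icc.exists_mapClusterPt (tendsto_principal.2 hf)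
    ⟨y, hy⟩
  obtain ⟨M, hMS, hM⟩ := hScompact.exists_isGreatest hSne
  obtain ⟨m, hmS, hm⟩ := hScompact.exists_isLeast hSne
  have hMc : M = c := hc M hMS (.inl fun y hy ↦ hM hy)
  have hmc : m = c := hc m hmS (.inr fun y hy ↦ hm hy)
  refine isCompact_Icc.tendsto_nhds_of_unique_mapClusterPt hf fun y _ hy ↦ ?_
  exact le_antisymm (hMc ▸ hM hy) (hmc ▸ hm hy)

/-- A set of reals whose gaps shrink to zero at `+∞`. -/
def AsymptoticallyDense (S : Set ℝ) : Prop :=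
  ∀ δ > 0, ∃ a, ∀ y ≥ a, ∃ s ∈ S, y ≤ s ∧ s ≤ y + δ

theorem AsymptoticallyDense.tendsto_atTop {S : Set ℝ} (hS : AsymptoticallyDense S) {Z : ℝ → ℝ}
    {ρ M : ℝ} (hρ : 0 ≤ ρ) (hZ : ∀ s s', s ≤ s' → Z s' ≤ Real.exp (ρ * (s' - s)) * Z s)
    (hM : 0 ≤ M) (hZS : ∀ s ∈ S, Z s = M) : Tendsto Z atTop (𝓝 M) := by
  have bound (σ : ℝ) : Tendsto (fun δ : ℝ ↦ Real.exp (σ * δ) * M) (𝓝[>] 0) (𝓝 M) := by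
    have : Tendsto (fun δ : ℝ ↦ Real.exp (σ * δ) * M) (𝓝 0) (𝓝 (Real.exp (σ * 0) * M)) :=
      Continuous.tendsto (by fun_prop) 0
    simpa using this.mono_left nhdsWithin_le_nhds
  refine tendsto_order.2 ⟨fun u hu ↦ ?_, fun u hu ↦ ?_⟩
  · obtain ⟨δ, hδu, hδ⟩ :=
      (((bound (-ρ)).eventually (lt_mem_nhds hu)).and self_mem_nhdsWithin).exists
    obtain ⟨a, ha⟩ := hS δ hδ
    filter_upwards [eventually_ge_atTop a] with y hy
    obtain ⟨s, hs, hys, hsy⟩ := ha y hy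
    refine hδu.trans_le ?_
    have hle := hZ y s hys
    rw [hZS s hs] at hle
    calc Real.exp (-ρ * δ) * M ≤ Real.exp (-(ρ * (s - y))) * M := by
          gcongr; nlinarith
      _ ≤ Z y := by rwa [Real.exp_neg, inv_mul_le_iff₀ (Real.exp_pos _)]
  · obtain ⟨δ, hδu, hδ⟩ :=
      (((bound ρ).eventually (gt_mem_nhds hu)).and self_mem_nhdsWithin).exists
    obtain ⟨a, ha⟩ := hS δ hδ
    filter_upwards [eventually_ge_atTop (a + δ)] with y hy
    obtain ⟨s, hs, hys, hsy⟩ := ha (y - δ) (by linarith)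
    refine lt_of_le_of_lt ?_ hδu
    calc Z y ≤ Real.exp (ρ * (y - s)) * M := hZS s hs ▸ hZ s y (by linarith)
      _ ≤ Real.exp (ρ * δ) * M := by gcongr; linarith

theorem exists_sub_of_mem_addSubgroupClosure {G : Type*} [AddCommGroup G] {Λ : AddSubmonoid G}
    {x : G} (hx : x ∈ AddSubgroup.closure (Λ : Set G)) : ∃ a ∈ Λ, ∃ b ∈ Λ, a - b = x := by
  induction hx using AddSubgroup.closure_induction with
  | mem x hx => exact ⟨x, hx, 0, zero_mem _, sub_zero x⟩
  | zero => exact ⟨0, zero_mem _, 0, zero_mem _, sub_zero 0⟩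
  | add _ _ _ _ ihx ihy =>
    obtain ⟨a, ha, b, hb, rfl⟩ := ihx
    obtain ⟨c, hc, d, hd, rfl⟩ := ihy
    exact ⟨a + c, add_mem ha hc, b + d, add_mem hb hd, add_sub_add_comm a c b d⟩
  | neg _ _ ih =>
    obtain ⟨a, ha, b, hb, rfl⟩ := ih
    exact ⟨b, hb, a, ha, (neg_sub a b).symm⟩

theorem tendsto_mul_exp_div_mul_sum {X : Type*} {G : Filter X} {f : X → ℕ → ℝ} {r : X → ℝ}
    {c L M : ℝ} {n : ℕ} (hn : n ≠ 0) (hr : Tendsto r G (𝓝 c))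
    (hf : ∀ k, Tendsto (f · k) G (𝓝 M)) :
    Tendsto (fun x ↦ L / n * Real.exp (r x * (L / n)) * ∑ k ∈ Finset.range n, f x k) G
      (𝓝 (L * Real.exp (c * L / n) * M)) := by
  have hexp : Tendsto (fun x ↦ Real.exp (r x * (L / n))) G (𝓝 (Real.exp (c * (L / n)))) :=
    (Real.continuous_exp.tendsto _).comp (hr.mul_const _)
  have hsum : Tendsto (fun x ↦ ∑ k ∈ Finset.range n, f x k) G (𝓝 (n * M)) := by
    simpa using tendsto_finsetSum (Finset.range n) fun k _ ↦ hf k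
  convert (hexp.const_mul (L / n)).mul hsum using 2
  rw [mul_div_assoc]
  field_simp

theorem tendsto_mul_exp_div_mul_atTop (c L M : ℝ) :
    Tendsto (fun n : ℕ ↦ L * Real.exp (c * L / n) * M) atTop (𝓝 (L * M)) := by
  have hexp : Tendsto (fun n : ℕ ↦ Real.exp (c * L / n)) atTop (𝓝 (Real.exp 0)) :=
    (Real.continuous_exp.tendsto _).comp (tendsto_const_div_atTop_nhds_zero_nat _)
  simpa using (hexp.const_mul L).mul_const M
theorem AsymptoticallyDense.of_dense_closure {Λ : AddSubmonoid ℝ} (hΛ : ∀ s ∈ Λ, 0 ≤ s)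
    (hdense : Dense (AddSubgroup.closure (Λ : Set ℝ) : Set ℝ)) :
    AsymptoticallyDense (Λ : Set ℝ) := by
  intro δ hδ
  obtain ⟨h, hh, hpos, hlt⟩ := hdense.exists_between hδ
  obtain ⟨t₁, ht₁, t₂, ht₂, rfl⟩ := exists_sub_of_mem_addSubgroupClosure hh
  set h := t₁ - t₂
  have hs : 0 < t₂ + t₁ := by linarith [hΛ t₂ ht₂]
  -- The sums `(n - j) • (t₂ + t₁) + j • (2 • t₁)` climb from `n • (t₂ + t₁)` in steps of size `h`,
  -- and for large `n` they get past `(n + 1) • (t₂ + t₁)`.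
  set s := t₂ + t₁
  refine ⟨s * (s / h + 1), fun y hy ↦ ?_⟩
  have hy0 : 0 ≤ y := le_trans (by positivity) hy
  set n := ⌊y / s⌋₊
  have hny : n * s ≤ y := (le_div_iff₀ hs).1 (Nat.floor_le (by positivity))
  have hyn : y < (n + 1) * s := (div_lt_iff₀ hs).1 (Nat.lt_floor_add_one _)
  have hsn : s ≤ n * h := by
    rw [← div_le_iff₀ hpos]
    have : s * (s / h + 1) < s * (n + 1) := by linarith
    linarith [lt_of_mul_lt_mul_left this hs.le]
  set j := ⌈(y - n * s) / h⌉₊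
  have hjy : y - n * s ≤ j * h := (div_le_iff₀ hpos).1 (Nat.le_ceil _)
  have hyj : j * h < y - n * s + h := by
    have hceil : (j : ℝ) < (y - n * s) / h + 1 :=
      Nat.ceil_lt_add_one (div_nonneg (by linarith) hpos.le)
    calc j * h < ((y - n * s) / h + 1) * h := by gcongr
      _ = y - n * s + h := by field_simp
  have hjn : j ≤ n := Nat.ceil_le.2 ((div_le_iff₀ hpos).2 (by linarith))
  have hsum : j • (2 • t₁) + (n - j) • s = n * s + j * h := by
    simp only [nsmul_eq_mul, Nat.cast_sub hjn, s, h]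
    push_cast
    ring
  refine ⟨j • (2 • t₁) + (n - j) • s, add_mem (nsmul_mem (nsmul_mem ht₁ 2) j)
    (nsmul_mem (add_mem ht₂ ht₁) _), ?_⟩
  rw [hsum]
  constructor <;> linarith

theorem exists_rat_exp_eq_of_mem_closure_log {P : Set ℕ} (hP : ∀ n ∈ P, 0 < n) {x : ℝ}
    (hx : x ∈ AddSubgroup.closure (Set.range fun p : P ↦ Real.log (p : ℕ))) :
    ∃ r : ℚ, 0 < r ∧ Real.exp x = r := by
  induction hx using AddSubgroup.closure_induction with
  | mem _ hx =>
    obtain ⟨p, rfl⟩ := hx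
    have hp : 0 < (p : ℕ) := hP p p.2
    exact ⟨(p : ℕ), by exact_mod_cast hp, by simp [Real.exp_log (Nat.cast_pos.2 hp)]⟩
  | zero => exact ⟨1, one_pos, by simp⟩
  | add _ _ _ _ ihx ihy =>
    obtain ⟨r, hr, hxr⟩ := ihx
    obtain ⟨r', hr', hyr⟩ := ihy
    exact ⟨r * r', mul_pos hr hr', by rw [Real.exp_add, hxr, hyr, Rat.cast_mul]⟩
  | neg _ _ ih =>
    obtain ⟨r, hr, hxr⟩ := ih
    exact ⟨r⁻¹, inv_pos.2 hr, by rw [Real.exp_neg, hxr, Rat.cast_inv]⟩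

theorem exists_nat_eq_of_rat_pow_eq {r : ℚ} (hr : 0 ≤ r) {k n : ℕ} (hk : k ≠ 0)
    (h : r ^ k = n) : ∃ d : ℕ, r = d := by
  have hden : r.den = 1 := by
    have : (r ^ k).den = 1 := by rw [h, Rat.den_natCast]
    rw [Rat.den_pow] at this
    exact (Nat.pow_eq_one.1 this).resolve_right hk
  obtain ⟨d, hd⟩ := Int.eq_ofNat_of_zero_le (Rat.num_nonneg.2 hr)
  refine ⟨d, ?_⟩
  rw [← Rat.coe_int_num_of_den_eq_one hden, hd]
  simp

/-- If the logarithms generate a cyclic group, the exponential of its positive generator is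
rational with a power in `ℕ`, hence a natural number `d`, and `P` consists of powers of `d`. -/
theorem dense_closure_log {P : Set ℕ} (hP : ∀ n ∈ P, 2 ≤ n) (hne : P.Nonempty)
    (hpow : ∀ d : ℕ, 2 ≤ d → ¬P ⊆ {n | ∃ k : ℕ, 1 ≤ k ∧ n = d ^ k}) :
    Dense (AddSubgroup.closure (Set.range fun p : P ↦ Real.log (p : ℕ)) : Set ℝ) := by
  set H := AddSubgroup.closure (Set.range fun p : P ↦ Real.log (p : ℕ))
  have hlog_mem {p : ℕ} (hp : p ∈ P) : Real.log p ∈ H :=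
    AddSubgroup.subset_closure ⟨⟨p, hp⟩, rfl⟩
  have hlog_pos {p : ℕ} (hp : p ∈ P) : 0 < Real.log p :=
    Real.log_pos (by exact_mod_cast hP p hp)
  refine H.dense_or_cyclic.resolve_right fun ⟨g₀, hg₀⟩ ↦ ?_
  rw [← AddSubgroup.zmultiples_eq_closure, ← zmultiples_abs] at hg₀
  set g := |g₀|
  obtain ⟨r, hr, hgr⟩ := exists_rat_exp_eq_of_mem_closure_log (P := P)
    (fun n hn ↦ two_pos.trans_le (hP n hn)) (hg₀ ▸ AddSubgroup.mem_zmultiples g : g ∈ H)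
  have hPpow {p : ℕ} (hp : p ∈ P) : ∃ k : ℕ, 1 ≤ k ∧ r ^ k = p := by
    obtain ⟨n, hn⟩ := AddSubgroup.mem_zmultiples_iff.1 (hg₀ ▸ hlog_mem hp)
    have hn0 : 0 < n := by
      have hpos := hlog_pos hp
      rw [← hn, zsmul_eq_mul] at hpos
      exact_mod_cast pos_of_mul_pos_left hpos (abs_nonneg g₀)
    obtain ⟨k, rfl⟩ := Int.eq_ofNat_of_zero_le hn0.le
    refine ⟨k, by omega, ?_⟩
    have : (r : ℝ) ^ k = p := by
      rw [← hgr, ← Real.exp_nat_mul, ← Real.exp_log (Nat.cast_pos.2 (two_pos.trans_le (hP p hp))),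
        ← hn]
      simp
    exact_mod_cast this
  obtain ⟨p, hp⟩ := hne
  obtain ⟨k, hk, hrp⟩ := hPpow hp
  obtain ⟨d, rfl⟩ := exists_nat_eq_of_rat_pow_eq hr.le (Nat.one_le_iff_ne_zero.1 hk) hrp
  have hd : 2 ≤ d := by
    by_contra! hlt
    have : d = 1 := by
      have : 0 < d := by exact_mod_cast hr
      omega
    rw [this, Nat.cast_one, one_pow] at hrp
    have : 1 = p := by exact_mod_cast hrp
    exact absurd (hP p hp) (by omega)
  refine hpow d hd fun n hn ↦ ?_
  obtain ⟨j, hj, hjn⟩ := hPpow hn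
  exact ⟨j, hj, by exact_mod_cast hjn.symm⟩

theorem asymptoticallyDense_closure_log {P : Set ℕ} (hP : ∀ n ∈ P, 2 ≤ n) (hne : P.Nonempty)
    (hpow : ∀ d : ℕ, 2 ≤ d → ¬P ⊆ {n | ∃ k : ℕ, 1 ≤ k ∧ n = d ^ k}) :
    AsymptoticallyDense
      (AddSubmonoid.closure (Set.range fun p : P ↦ Real.log (p : ℕ)) : Set ℝ) := by
  refine .of_dense_closure (fun s hs ↦ ?_)
    ((dense_closure_log hP hne hpow).mono (AddSubgroup.closure_mono AddSubmonoid.subset_closure))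
  induction hs using AddSubmonoid.closure_induction with
  | mem _ hx => obtain ⟨p, rfl⟩ := hx; exact Real.log_natCast_nonneg p
  | zero => exact le_rfl
  | add _ _ _ _ ihx ihy => exact add_nonneg ihx ihy

theorem exists_contDiffAt_local_right_inverse {f : ℝ → ℝ} {f' a : ℝ} {n : WithTop ℕ∞}
    (hf : ContDiffAt ℝ n f a) (hf' : HasDerivAt f f' a) (hne : f' ≠ 0) (hn : n ≠ 0) :
    ∃ g : ℝ → ℝ, ContDiffAt ℝ n g (f a) ∧ g (f a) = a ∧ HasDerivAt g f'⁻¹ (f a) ∧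
      ∀ᶠ y in 𝓝 (f a), f (g y) = y := by
  have hequiv := (hf.hasStrictDerivAt' hf' hn).hasStrictFDerivAt_equiv hne
  exact ⟨hf.localInverse hequiv.hasFDerivAt hn, hf.to_localInverse hequiv.hasFDerivAt hn,
    hf.localInverse_apply_image hequiv.hasFDerivAt hn,
    ((hf.hasStrictDerivAt' hf' hn).to_localInverse hne).hasDerivAt,
    (hf.hasStrictDerivAt' hf' hn).eventually_right_inverse hne⟩

theorem exists_isLittleO_sub_sq {f : ℝ → ℝ} {a : ℝ} (hf : ContDiffAt ℝ 2 f a)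
    (hf' : HasDerivAt f 0 a) :
    ∃ c : ℝ, (fun x ↦ f x - f a - c * (x - a) ^ 2) =o[𝓝 a] fun x ↦ (x - a) ^ 2 := by
  obtain ⟨u, hu, hfu⟩ := hf.contDiffOn (m := 2) le_rfl (by simp)
  obtain ⟨ε, hε, hball⟩ := Metric.mem_nhds_iff.1 hu
  have ha : a ∈ Metric.ball a ε := Metric.mem_ball_self hε
  have htaylor := taylor_isLittleO (n := 2) (convex_ball a ε) ha (by simpa using hfu.mono hball)
  rw [Metric.isOpen_ball.nhdsWithin_eq ha] at htaylor
  have hderiv : derivWithin f (Metric.ball a ε) a = 0 := by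
    rw [derivWithin_of_isOpen Metric.isOpen_ball ha, hf'.deriv]
  refine ⟨2⁻¹ * iteratedDerivWithin 2 f (Metric.ball a ε) a, htaylor.congr_left fun x ↦ ?_⟩
  rw [taylorWithinEval_succ, taylorWithinEval_succ, taylor_within_zero_eval,
    iteratedDerivWithin_one, hderiv]
  simp only [CharP.cast_eq_zero, zero_add, Nat.factorial_zero, Nat.cast_one, mul_one, inv_one,
    pow_one, one_mul, smul_eq_mul, mul_zero, add_zero, Nat.factorial_one, Nat.reduceAdd]
  ring

section PowerSeries

variable {X : Type*} {l : Filter X} {c : X → ℕ → ℝ} {F : X → ℝ → ℝ} {K : ℝ}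

theorem abs_coeff_zero_le {c : ℕ → ℝ} {x s K : ℝ} (hx : x ∈ Set.Ioo (0 : ℝ) 1)
    (hc : ∀ j, |c j| ≤ K) (hs : HasSum (fun j ↦ c j * x ^ j) s) :
    |c 0| ≤ |s| + K * x / (1 - x) := by
  have htail : HasSum (fun j ↦ c (j + 1) * x ^ (j + 1)) (s - c 0) := by
    simpa using (hasSum_nat_add_iff' 1).2 hs
  have hgeom : HasSum (fun j : ℕ ↦ K * x * x ^ j) (K * x / (1 - x)) :=
    (hasSum_geometric_of_lt_one hx.1.le hx.2).mul_left _
  have hbound : |s - c 0| ≤ K * x / (1 - x) := by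
    rw [← htail.tsum_eq, ← Real.norm_eq_abs]
    refine tsum_of_norm_bounded hgeom fun j ↦ ?_
    rw [Real.norm_eq_abs, abs_mul, abs_of_pos (pow_pos hx.1 _), mul_assoc, ← pow_succ']
    exact mul_le_mul_of_nonneg_right (hc _) (pow_pos hx.1 _).le
  rw [abs_sub_comm] at hbound
  linarith [abs_sub_abs_le_abs_sub (c 0) s]

theorem tendsto_coeff_zero_of_hasSum_pow (hK : ∀ᶠ a in l, ∀ j, |c a j| ≤ K)
    (hc : ∀ a, ∀ x ∈ Set.Ioo (0 : ℝ) 1, HasSum (fun j ↦ c a j * x ^ j) (F a x))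
    (hF : ∀ x ∈ Set.Ioo (0 : ℝ) 1, Tendsto (F · x) l (𝓝 0)) :
    Tendsto (c · 0) l (𝓝 0) := by
  rw [Metric.tendsto_nhds]
  intro ε hε
  have hsmall : Tendsto (fun x : ℝ ↦ K * x / (1 - x)) (𝓝[>] 0) (𝓝 0) := by
    have : ContinuousAt (fun x : ℝ ↦ K * x / (1 - x)) 0 := by
      fun_prop (disch := norm_num)
    simpa using this.tendsto.mono_left nhdsWithin_le_nhds
  obtain ⟨x, hxε, hx⟩ := ((hsmall.eventually (gt_mem_nhds (half_pos hε))).and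
    (Ioo_mem_nhdsGT zero_lt_one)).exists
  filter_upwards [hK, (Metric.tendsto_nhds.1 (hF x hx)) (ε / 2) (half_pos hε)] with a hKa hFa
  rw [Real.dist_0_eq_abs] at hFa ⊢
  linarith [abs_coeff_zero_le hx hKa (hc a x hx)]

theorem tendsto_coeff_of_hasSum_pow (hK : ∀ᶠ a in l, ∀ j, |c a j| ≤ K)
    (hc : ∀ a, ∀ x ∈ Set.Ioo (0 : ℝ) 1, HasSum (fun j ↦ c a j * x ^ j) (F a x))
    (hF : ∀ x ∈ Set.Ioo (0 : ℝ) 1, Tendsto (F · x) l (𝓝 0)) (j : ℕ) :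
    Tendsto (c · j) l (𝓝 0) := by
  induction j generalizing c F with
  | zero => exact tendsto_coeff_zero_of_hasSum_pow hK hc hF
  | succ _ ih =>
    refine ih (c := fun a j ↦ c a (j + 1)) (F := fun a x ↦ (F a x - c a 0) / x)
      (hK.mono fun _ ha _ ↦ ha _) (fun a x hx ↦ ?_) fun x hx ↦ ?_
    · have htail : HasSum (fun j ↦ c a (j + 1) * x ^ (j + 1)) (F a x - c a 0) := by
        simpa using (hasSum_nat_add_iff' 1).2 (hc a x hx)
      refine (htail.div_const x).congr_fun fun _ ↦ ?_
      rw [pow_succ, ← mul_assoc, mul_div_cancel_right₀ _ hx.1.ne']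
    · simpa using ((hF x hx).sub (tendsto_coeff_zero_of_hasSum_pow hK hc hF)).div_const x

end PowerSeries

section OddMoments

variable {X α : Type*} {l : Filter X} {s : X → Finset α} {W u : X → α → ℝ}

theorem tendsto_odd_moment_of_sinh (hW : ∀ x a, 0 ≤ W x a) {K : ℝ}
    (hcosh : ∀ᶠ x in l, ∑ a ∈ s x, W x a * (2 * Real.cosh (u x a)) ≤ K)
    (hsinh : ∀ y, Tendsto (fun x ↦ ∑ a ∈ s x, W x a * Real.sinh (y * u x a)) l (𝓝 0)) (j : ℕ) :
    Tendsto (fun x ↦ ∑ a ∈ s x, W x a * u x a ^ (2 * j + 1)) l (𝓝 0) := by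
  -- Substituting `y = √v`, the odd moments are the coefficients of a power series in `v`.
  have hcoeff := tendsto_coeff_of_hasSum_pow (l := l) (K := K)
    (c := fun x j ↦ ∑ a ∈ s x, W x a * (u x a ^ (2 * j + 1) / (2 * j + 1).factorial))
    (F := fun x v ↦ (∑ a ∈ s x, W x a * Real.sinh (√v * u x a)) / √v)
    ?_ ?_ (fun v _ ↦ by simpa using (hsinh √v).div_const √v) j
  · have := hcoeff.mul_const ((2 * j + 1).factorial : ℝ)
    rw [zero_mul] at this
    refine this.congr fun x ↦ ?_
    rw [Finset.sum_mul]
    exact Finset.sum_congr rfl fun a _ ↦ by field_simp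
  · filter_upwards [hcosh] with x hx j
    refine (Finset.abs_sum_le_sum_abs _ _).trans ((Finset.sum_le_sum fun a _ ↦ ?_).trans hx)
    rw [abs_mul, abs_of_nonneg (hW x a), abs_div, abs_pow, Nat.abs_cast]
    refine mul_le_mul_of_nonneg_left ?_ (hW x a)
    calc |u x a| ^ (2 * j + 1) / (2 * j + 1).factorial ≤ Real.exp |u x a| :=
          Real.pow_div_factorial_le_exp _ (abs_nonneg _) _
      _ ≤ 2 * Real.cosh |u x a| := by
          rw [Real.cosh_eq]; linarith [Real.exp_pos (-|u x a|)]
      _ = 2 * Real.cosh (u x a) := by rw [Real.cosh_abs]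
  · intro x v hv
    have hsqrt : 0 < √v := Real.sqrt_pos.2 hv.1
    simp only [Finset.sum_mul, Finset.sum_div]
    refine hasSum_sum fun a _ ↦ ?_
    refine (((Real.hasSum_sinh (√v * u x a)).mul_left (W x a)).div_const √v).congr_fun fun i ↦ ?_
    rw [mul_pow, pow_succ √v, pow_mul, Real.sq_sqrt hv.1.le]
    field_simp

theorem tendsto_odd_moment (hW : ∀ x a, 0 ≤ W x a) {G : ℝ → ℝ}
    (hG : ∀ y, Tendsto (fun x ↦ ∑ a ∈ s x, W x a * Real.exp (y * u x a)) l (𝓝 (G y)))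
    (hEven : Function.Even G) {k : ℕ} (hk : Odd k) :
    Tendsto (fun x ↦ ∑ a ∈ s x, W x a * u x a ^ k) l (𝓝 0) := by
  have hcosh : Tendsto (fun x ↦ ∑ a ∈ s x, W x a * (2 * Real.cosh (u x a))) l
      (𝓝 (G 1 + G (-1))) := by
    refine ((hG 1).add (hG (-1))).congr fun x ↦ ?_
    simp only [← Finset.sum_add_distrib, Real.cosh_eq]
    exact Finset.sum_congr rfl fun a _ ↦ by ring_nf
  have hsinh (y : ℝ) : Tendsto (fun x ↦ ∑ a ∈ s x, W x a * Real.sinh (y * u x a)) l (𝓝 0) := by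
    have := ((hG y).sub (hG (-y))).div_const 2
    rw [hEven, sub_self, zero_div] at this
    refine this.congr fun x ↦ ?_
    simp only [← Finset.sum_sub_distrib, Finset.sum_div, Real.sinh_eq]
    exact Finset.sum_congr rfl fun a _ ↦ by ring_nf
  obtain ⟨j, rfl⟩ := hk
  exact tendsto_odd_moment_of_sinh hW
    ((hcosh.eventually (gt_mem_nhds (lt_add_one _))).mono fun _ hx ↦ hx.le) hsinh j

end OddMoments

section AbelSummation

variable {b g h : ℕ → ℝ}

theorem abs_sum_mul_le_of_abs_sum_le (hg : Monotone g) (hg0 : 0 ≤ g 0) {M : ℝ} {N : ℕ}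
    (hM : ∀ n ≤ N, |∑ i ∈ Finset.Icc 1 n, b i| ≤ M) :
    |∑ i ∈ Finset.Icc 1 N, b i * g i| ≤ 2 * M * g N := by
  set B : ℕ → ℝ := fun n ↦ ∑ i ∈ Finset.Icc 1 n, b i
  have hpos (n : ℕ) : 0 ≤ g n := hg0.trans (hg n.zero_le)
  have hM0 : 0 ≤ M := (abs_nonneg _).trans (hM 0 N.zero_le)
  have hdiff : ∀ n ≤ N, |∑ i ∈ Finset.Icc 1 n, b i * g i - B n * g n| ≤ M * g n := by
    intro n
    induction n with
    | zero => simpa [B] using mul_nonneg hM0 hg0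
    | succ n ih =>
      intro hn
      have hstep : ∑ i ∈ Finset.Icc 1 (n + 1), b i * g i - B (n + 1) * g (n + 1) =
          (∑ i ∈ Finset.Icc 1 n, b i * g i - B n * g n) - B n * (g (n + 1) - g n) := by
        simp only [B, Finset.sum_Icc_succ_top (Nat.le_add_left 1 n)]
        ring
      have hinc : 0 ≤ g (n + 1) - g n := sub_nonneg.2 (hg n.le_succ)
      calc _ ≤ |∑ i ∈ Finset.Icc 1 n, b i * g i - B n * g n| + |B n * (g (n + 1) - g n)| := by
            rw [hstep]; exact abs_sub _ _
        _ ≤ M * g n + M * (g (n + 1) - g n) := by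
            rw [abs_mul, abs_of_nonneg hinc]
            exact add_le_add (ih (by omega)) (mul_le_mul_of_nonneg_right (hM n (by omega)) hinc)
        _ = M * g (n + 1) := by ring
  calc |∑ i ∈ Finset.Icc 1 N, b i * g i|
      ≤ |∑ i ∈ Finset.Icc 1 N, b i * g i - B N * g N| + |B N * g N| := by
        simpa using abs_add_le (∑ i ∈ Finset.Icc 1 N, b i * g i - B N * g N) (B N * g N)
    _ ≤ M * g N + M * g N := by
        rw [abs_mul, abs_of_nonneg (hpos N)]
        exact add_le_add (hdiff N le_rfl) (mul_le_mul_of_nonneg_right (hM N le_rfl) (hpos N))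
    _ = 2 * M * g N := by ring

theorem eventually_forall_le_of_isLittleO {B : ℕ → ℝ} (hh : Monotone h)
    (htop : Tendsto h atTop atTop) (hB : B =o[atTop] h) {ε : ℝ} (hε : 0 < ε) :
    ∀ᶠ N in atTop, ∀ n ≤ N, |B n| ≤ ε * h N := by
  obtain ⟨N₀, hN₀⟩ := eventually_atTop.1 ((hB.bound hε).and (htop.eventually_ge_atTop 0))
  obtain ⟨C, hC⟩ := ((Finset.range N₀).image fun n ↦ |B n|).bddAbove
  filter_upwards [htop.eventually_ge_atTop (C / ε)] with N hCN n hn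
  rcases lt_or_ge n N₀ with hlt | hge
  · have : |B n| ≤ C := hC (by simpa using ⟨n, hlt, rfl⟩)
    exact this.trans ((div_le_iff₀' hε).1 hCN)
  · obtain ⟨hBn, hpos⟩ := hN₀ n hge
    rw [Real.norm_eq_abs, Real.norm_of_nonneg hpos] at hBn
    exact hBn.trans (mul_le_mul_of_nonneg_left (hh hn) hε.le)

theorem isLittleO_sum_mul_of_isLittleO_sum (hg : Monotone g) (hg0 : 0 ≤ g 0) (hh : Monotone h)
    (htop : Tendsto h atTop atTop)
    (hb : (fun N ↦ ∑ n ∈ Finset.Icc 1 N, b n) =o[atTop] h) :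
    (fun N ↦ ∑ n ∈ Finset.Icc 1 N, b n * g n) =o[atTop] fun N ↦ h N * g N := by
  refine isLittleO_iff.2 fun ε hε ↦ ?_
  filter_upwards [eventually_forall_le_of_isLittleO hh htop hb (half_pos hε),
    htop.eventually_ge_atTop 0] with N hN hpos
  have hgN : 0 ≤ g N := hg0.trans (hg N.zero_le)
  rw [Real.norm_eq_abs, Real.norm_of_nonneg (mul_nonneg hpos hgN)]
  calc _ ≤ 2 * (ε / 2 * h N) * g N := abs_sum_mul_le_of_abs_sum_le hg hg0 hN
    _ = ε * (h N * g N) := by ring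

end AbelSummation

/-- `z` solves the renewal equation with steps `ℓ i`, probability weights `q i` and input
`t ↦ exp (-lam * t)` on `[0, ∞)`, and decays at most at the exponential rate `lam`, in the sense
that `exp (lam * t) * z t` is monotone. -/
structure IsRenewalSolution {ι : Type*} (ℓ q : ι → ℝ) (lam : ℝ) (z : ℝ → ℝ) : Prop where
  weight_nonneg : ∀ i, 0 ≤ q i
  hasSum_weight : HasSum q 1
  eq_zero_of_neg : ∀ t < 0, z t = 0
  monotone_exp_mul : Monotone fun t ↦ Real.exp (lam * t) * z t
  renewal : ∀ t, 0 ≤ t → z t = Real.exp (-lam * t) + ∑' i, q i * z (t - ℓ i)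

namespace IsRenewalSolution

variable {ι : Type*} {ℓ q : ι → ℝ} {lam : ℝ} {z : ℝ → ℝ}

theorem nonneg (hz : IsRenewalSolution ℓ q lam z) (t : ℝ) : 0 ≤ z t := by
  have hle : Real.exp (lam * min t (-1)) * z (min t (-1)) ≤ Real.exp (lam * t) * z t :=
    hz.monotone_exp_mul (min_le_left t (-1))
  rw [hz.eq_zero_of_neg _ ((min_le_right t (-1)).trans_lt (by norm_num)), mul_zero] at hle
  exact nonneg_of_mul_nonneg_right hle (Real.exp_pos _)

theorem le_exp_mul (hz : IsRenewalSolution ℓ q lam z) {x y : ℝ} (hxy : x ≤ y) :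
    z x ≤ Real.exp (lam * (y - x)) * z y := by
  have hle : Real.exp (lam * x) * z x ≤ Real.exp (lam * y) * z y := hz.monotone_exp_mul hxy
  rwa [mul_sub, Real.exp_sub, div_mul_eq_mul_div, le_div_iff₀' (Real.exp_pos _)]

theorem intervalIntegrable (hz : IsRenewalSolution ℓ q lam z) (a b : ℝ) :
    IntervalIntegrable z volume a b := by
  have hcont : ContinuousOn (fun t ↦ Real.exp (-(lam * t))) (Set.uIcc a b) := by fun_prop
  refine (hz.monotone_exp_mul.intervalIntegrable.continuousOn_mul hcont).congr fun t _ ↦ ?_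
  rw [← mul_assoc, ← Real.exp_add, neg_add_cancel, Real.exp_zero, one_mul]

theorem le_exp_mul_of_le (hz : IsRenewalSolution ℓ q lam z) (hlam : 0 ≤ lam) {x t : ℝ}
    (hxt : x ≤ t) : z x ≤ Real.exp (lam * t) * z t := by
  rcases lt_or_ge x 0 with hx | hx
  · rw [hz.eq_zero_of_neg x hx]
    exact mul_nonneg (Real.exp_pos _).le (hz.nonneg t)
  · refine (hz.le_exp_mul hxt).trans (mul_le_mul_of_nonneg_right ?_ (hz.nonneg t))
    gcongr
    linarith

theorem mul_exp_mul_le_integral (hz : IsRenewalSolution ℓ q lam z) (hlam : 0 ≤ lam) (u : ℝ)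
    {h : ℝ} (hh : 0 ≤ h) : h * (Real.exp (-(lam * h)) * z u) ≤ ∫ x in u..u + h, z x := by
  have hle : ∫ _ in u..u + h, Real.exp (-(lam * h)) * z u ≤ ∫ x in u..u + h, z x := by
    refine intervalIntegral.integral_mono_on (by linarith) intervalIntegrable_const
      (hz.intervalIntegrable _ _) fun x hx ↦ ?_
    rw [Real.exp_neg, inv_mul_le_iff₀ (Real.exp_pos _)]
    refine (hz.le_exp_mul hx.1).trans (mul_le_mul_of_nonneg_right ?_ (hz.nonneg x))
    gcongr
    linarith [hx.2]
  rwa [intervalIntegral.integral_const, smul_eq_mul, add_sub_cancel_left] at hle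

theorem integral_le_mul_exp_mul (hz : IsRenewalSolution ℓ q lam z) (hlam : 0 ≤ lam) (u : ℝ)
    {h : ℝ} (hh : 0 ≤ h) :
    ∫ x in u..u + h, z x ≤ h * (Real.exp (lam * h) * z (u + h)) := by
  have hle : ∫ x in u..u + h, z x ≤ ∫ _ in u..u + h, Real.exp (lam * h) * z (u + h) := by
    refine intervalIntegral.integral_mono_on (by linarith) (hz.intervalIntegrable _ _)
      intervalIntegrable_const fun x hx ↦ ?_
    refine (hz.le_exp_mul hx.2).trans (mul_le_mul_of_nonneg_right ?_ (hz.nonneg _))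
    gcongr
    linarith [hx.1]
  rwa [intervalIntegral.integral_const, smul_eq_mul, add_sub_cancel_left] at hle

theorem sum_le_integral (hz : IsRenewalSolution ℓ q lam z) (hlam : 0 ≤ lam) (t : ℝ) {h : ℝ}
    (hh : 0 ≤ h) (n : ℕ) :
    h * Real.exp (-(lam * h)) * ∑ k ∈ Finset.range n, z (t - (k + 1) * h) ≤
      ∫ x in (t - n * h)..t, z x := by
  induction n with
  | zero => simp
  | succ n ih =>
    rw [Finset.sum_range_succ, mul_add, ← intervalIntegral.integral_add_adjacent_intervals
      (hz.intervalIntegrable _ (t - n * h)) (hz.intervalIntegrable _ _), add_comm]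
    have hcell := hz.mul_exp_mul_le_integral hlam (t - (n + 1) * h) hh
    rw [← mul_assoc, show t - (n + 1) * h + h = t - n * h by ring] at hcell
    exact add_le_add (by exact_mod_cast hcell) ih

theorem integral_le_sum (hz : IsRenewalSolution ℓ q lam z) (hlam : 0 ≤ lam) (t : ℝ) {h : ℝ}
    (hh : 0 ≤ h) (n : ℕ) :
    ∫ x in (t - n * h)..t, z x ≤
      h * Real.exp (lam * h) * ∑ k ∈ Finset.range n, z (t - k * h) := by
  induction n with
  | zero => simp
  | succ n ih =>
    rw [Finset.sum_range_succ, mul_add, ← intervalIntegral.integral_add_adjacent_intervals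
      (hz.intervalIntegrable _ (t - n * h)) (hz.intervalIntegrable _ _),
      add_comm (∫ x in _..(t - n * h), z x)]
    have hcell := hz.integral_le_mul_exp_mul hlam (t - (n + 1) * h) hh
    rw [← mul_assoc, show t - (n + 1) * h + h = t - n * h by ring] at hcell
    exact add_le_add ih (by exact_mod_cast hcell)

theorem hasSum_integral_shift [Countable ι] (hz : IsRenewalSolution ℓ q lam z) (hlam : 0 ≤ lam)
    (hℓ : ∀ i, 0 ≤ ℓ i) {t : ℝ} (ht : 0 ≤ t) :
    HasSum (fun i ↦ ∫ x in 0..t, q i * z (x - ℓ i)) (∫ x in 0..t, ∑' i, q i * z (x - ℓ i)) := by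
  set B := Real.exp (lam * t) * z t
  have hsum : Summable fun i ↦ q i * B := hz.hasSum_weight.summable.mul_right B
  have hterm_nonneg (i : ι) (x : ℝ) : 0 ≤ q i * z (x - ℓ i) :=
    mul_nonneg (hz.weight_nonneg i) (hz.nonneg _)
  have hterm_le {x : ℝ} (hx : x ∈ Set.uIoc 0 t) (i : ι) : q i * z (x - ℓ i) ≤ q i * B := by
    rw [Set.uIoc_of_le ht] at hx
    exact mul_le_mul_of_nonneg_left
      (hz.le_exp_mul_of_le hlam (by linarith [hx.2, hℓ i])) (hz.weight_nonneg i)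
  refine intervalIntegral.hasSum_integral_of_dominated_convergence (fun i _ ↦ q i * B)
    (fun i ↦ ?_) (fun i ↦ .of_forall fun x hx ↦ ?_) (.of_forall fun _ _ ↦ hsum)
    intervalIntegrable_const (.of_forall fun x hx ↦ ?_)
  · have : IntervalIntegrable (fun x ↦ q i * z (x - ℓ i)) volume 0 t := by
      simpa using
        ((hz.intervalIntegrable (0 - ℓ i) (t - ℓ i)).comp_sub_right (ℓ i)).const_mul (q i)
    rw [Set.uIoc_of_le ht]
    exact this.1.aestronglyMeasurable
  · rw [Real.norm_of_nonneg (hterm_nonneg i x)]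
    exact hterm_le hx i
  · exact (Summable.of_nonneg_of_le (hterm_nonneg · x) (hterm_le hx) hsum).hasSum

/-- Integrating the renewal equation over `[0, t]`, each `∫ x in 0..t, z (x - ℓ i)` differs from
`∫ x in 0..t, z x` only by the last window of length `ℓ i`. -/
theorem hasSum_integral [Countable ι] (hz : IsRenewalSolution ℓ q lam z) (hlam : 0 < lam)
    (hℓ : ∀ i, 0 ≤ ℓ i) {t : ℝ} (ht : 0 ≤ t) :
    HasSum (fun i ↦ q i * ∫ x in (t - ℓ i)..t, z x) ((1 - Real.exp (-lam * t)) / lam) := by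
  have hint := hz.intervalIntegrable
  have hrhs : ∫ x in 0..t, ∑' i, q i * z (x - ℓ i) =
      (∫ x in 0..t, z x) - (1 - Real.exp (-lam * t)) / lam := by
    have hexp : ∫ x in 0..t, Real.exp (-lam * x) = (1 - Real.exp (-lam * t)) / lam := by
      rw [intervalIntegral.integral_comp_mul_left Real.exp (neg_ne_zero.2 hlam.ne'), integral_exp,
        mul_zero, Real.exp_zero, smul_eq_mul, inv_neg]
      ring
    rw [← hexp, ← intervalIntegral.integral_sub (hint _ _)
      (Continuous.intervalIntegrable (by fun_prop) _ _)]
    refine intervalIntegral.integral_congr fun x hx ↦ ?_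
    rw [Set.uIcc_of_le ht] at hx
    exact eq_sub_of_add_eq' (hz.renewal x hx.1).symm
  have hwindow (i : ι) : q i * ∫ x in (t - ℓ i)..t, z x =
      q i * (∫ x in 0..t, z x) - ∫ x in 0..t, q i * z (x - ℓ i) := by
    have hneg : ∫ x in (0 - ℓ i)..0, z x = 0 := by
      rw [intervalIntegral.integral_of_le (by linarith [hℓ i]), integral_Ioc_eq_integral_Ioo]
      exact setIntegral_eq_zero_of_forall_eq_zero fun x hx ↦ hz.eq_zero_of_neg x hx.2
    rw [intervalIntegral.integral_const_mul, intervalIntegral.integral_comp_sub_right,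
      ← intervalIntegral.integral_add_adjacent_intervals (hint (0 - ℓ i) 0) (hint 0 (t - ℓ i)),
      hneg, ← intervalIntegral.integral_add_adjacent_intervals (hint 0 (t - ℓ i)) (hint _ t)]
    ring
  simp_rw [hwindow]
  simpa [hrhs] using
    (hz.hasSum_weight.mul_right (∫ x in 0..t, z x)).sub (hz.hasSum_integral_shift hlam.le hℓ ht)

theorem le_exp_div [Countable ι] (hz : IsRenewalSolution ℓ q lam z) (hlam : 0 < lam) {ℓ₀ : ℝ}
    (hℓ₀ : 0 < ℓ₀) (hℓ : ∀ i, ℓ₀ ≤ ℓ i) (t : ℝ) :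
    z t ≤ Real.exp (lam * ℓ₀) / (lam * ℓ₀) := by
  rcases lt_or_ge t 0 with ht | ht
  · rw [hz.eq_zero_of_neg t ht]
    positivity
  have hwindow : ∫ x in t..t + ℓ₀, z x ≤ (1 - Real.exp (-lam * (t + ℓ₀))) / lam := by
    refine hasSum_le (fun i ↦ mul_le_mul_of_nonneg_left ?_ (hz.weight_nonneg i))
      (by simpa using hz.hasSum_weight.mul_right (∫ x in t..t + ℓ₀, z x))
      (hz.hasSum_integral hlam (fun i ↦ hℓ₀.le.trans (hℓ i)) (by linarith : 0 ≤ t + ℓ₀))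
    exact intervalIntegral.integral_mono_interval (by linarith [hℓ i]) (by linarith) le_rfl
      (.of_forall fun x ↦ hz.nonneg x) (hz.intervalIntegrable _ _)
  have hle : ℓ₀ * (Real.exp (-(lam * ℓ₀)) * z t) ≤ 1 / lam :=
    calc _ ≤ (1 - Real.exp (-lam * (t + ℓ₀))) / lam :=
          (hz.mul_exp_mul_le_integral hlam.le t hℓ₀.le).trans hwindow
      _ ≤ 1 / lam := by gcongr; linarith [Real.exp_pos (-lam * (t + ℓ₀))]
  rw [Real.exp_neg, ← div_eq_inv_mul, ← mul_div_assoc, div_le_div_iff₀ (Real.exp_pos _) hlam] at hle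
  rw [le_div_iff₀ (mul_pos hlam hℓ₀)]
  linarith

end IsRenewalSolution

/-- A family of renewal solutions `z θ` whose weights `q θ i` and rates `lam θ` converge along `F`
to `q₀ i > 0` and `ρ > 0`; `ℓ₀` and `Q` are the bounds that make the convergence uniform. -/
structure IsRenewalFamily {Θ ι : Type*} (F : Filter Θ) (ℓ₀ : ℝ) (ℓ : ι → ℝ) (q : Θ → ι → ℝ)
    (q₀ Q : ι → ℝ) (lam : Θ → ℝ) (ρ : ℝ) (z : Θ → ℝ → ℝ) : Prop where
  step_bound_pos : 0 < ℓ₀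
  le_step : ∀ i, ℓ₀ ≤ ℓ i
  weight_limit_pos : ∀ i, 0 < q₀ i
  tendsto_weight : ∀ i, Tendsto (q · i) F (𝓝 (q₀ i))
  weight_le : ∀ᶠ θ in F, ∀ i, q θ i ≤ Q i
  summable_mul_step : Summable fun i ↦ Q i * ℓ i
  rate_pos : 0 < ρ
  tendsto_rate : Tendsto lam F (𝓝 ρ)
  isRenewalSolution : ∀ᶠ θ in F, IsRenewalSolution ℓ (q θ) (lam θ) (z θ)

/-- `Z` describes the solutions seen backwards from time `t`, in the limit of `(θ, t)` along `G`:
it is the pointwise limit of `s ↦ z θ (t - s)`. -/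
def HasProfile {Θ : Type*} (z : Θ → ℝ → ℝ) (G : Filter (Θ × ℝ)) (Z : ℝ → ℝ) : Prop :=
  ∀ s, Tendsto (fun x ↦ z x.1 (x.2 - s)) G (𝓝 (Z s))

section TimeShift

variable {Θ : Type*} {F : Filter Θ} {z : Θ → ℝ → ℝ} {G : Filter (Θ × ℝ)} {Z : ℝ → ℝ}

theorem tendsto_shift_time (hG : G ≤ F ×ˢ atTop) (s : ℝ) :
    Tendsto (fun x : Θ × ℝ ↦ (x.1, x.2 - s)) G (F ×ˢ atTop) :=
  (tendsto_fst.mono_left hG).prodMk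
    ((tendsto_snd.mono_left hG).atTop_add (tendsto_const_nhds (x := -s)))

theorem HasProfile.mapClusterPt [G.NeBot] (hZ : HasProfile z G Z) (hG : G ≤ F ×ˢ atTop) (s : ℝ) :
    MapClusterPt (Z s) (F ×ˢ atTop) fun x ↦ z x.1 x.2 :=
  ((hZ s).mapClusterPt).of_comp (tendsto_shift_time hG s)

theorem HasProfile.exists_const [G.NeBot] (hZ : HasProfile z G Z) (hG : G ≤ F ×ˢ atTop) {M : ℝ}
    (hM : Tendsto Z atTop (𝓝 M)) :
    ∃ G' : Filter (Θ × ℝ), G'.NeBot ∧ G' ≤ F ×ˢ atTop ∧ HasProfile z G' fun _ ↦ M := by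
  refine ⟨atTop.bind fun a : ℝ ↦ G.map fun x ↦ (x.1, x.2 - a), ?_, ?_, fun s ↦ ?_⟩
  · rw [← frequently_true_iff_neBot]
    intro h
    simp only [eventually_bind, eventually_map] at h
    obtain ⟨_, ha⟩ := h.exists
    exact ha.exists.choose_spec trivial
  · exact fun V hV ↦ mem_bind'.2 (Eventually.of_forall fun a ↦ tendsto_shift_time hG a hV)
  · refine tendsto_iff_forall_eventually_mem.2 fun V hV ↦ ?_
    have hshift := (tendsto_atTop_add_const_right atTop s tendsto_id).eventually
      (hM.eventually (eventually_mem_nhds_iff.2 hV))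
    refine eventually_bind.2 (hshift.mono fun a ha ↦ eventually_map.2 ?_)
    simpa only [sub_sub] using (hZ (a + s)).eventually_mem ha

end TimeShift

namespace IsRenewalFamily

variable {Θ ι : Type*} {F : Filter Θ} {ℓ₀ : ℝ} {ℓ : ι → ℝ} {q : Θ → ι → ℝ} {q₀ Q : ι → ℝ}
  {lam : Θ → ℝ} {ρ : ℝ} {z : Θ → ℝ → ℝ} {G : Filter (Θ × ℝ)} {Z : ℝ → ℝ} {M : ℝ}

theorem step_pos (h : IsRenewalFamily F ℓ₀ ℓ q q₀ Q lam ρ z) (i : ι) : 0 < ℓ i :=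
  h.step_bound_pos.trans_le (h.le_step i)

theorem weight_limit_le [F.NeBot] (h : IsRenewalFamily F ℓ₀ ℓ q q₀ Q lam ρ z) (i : ι) :
    q₀ i ≤ Q i :=
  le_of_tendsto (h.tendsto_weight i) (h.weight_le.mono fun _ hθ ↦ hθ i)

theorem weight_bound_nonneg [F.NeBot] (h : IsRenewalFamily F ℓ₀ ℓ q q₀ Q lam ρ z) (i : ι) :
    0 ≤ Q i :=
  (h.weight_limit_pos i).le.trans (h.weight_limit_le i)

theorem summable_weight_bound [F.NeBot] (h : IsRenewalFamily F ℓ₀ ℓ q q₀ Q lam ρ z) :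
    Summable Q := by
  refine .of_nonneg_of_le h.weight_bound_nonneg (fun i ↦ ?_) (h.summable_mul_step.mul_left ℓ₀⁻¹)
  rw [← div_eq_inv_mul, le_div_iff₀ h.step_bound_pos]
  exact mul_le_mul_of_nonneg_left (h.le_step i) (h.weight_bound_nonneg i)

theorem tendsto_tsum_weight_mul [F.NeBot] (h : IsRenewalFamily F ℓ₀ ℓ q q₀ Q lam ρ z)
    (hG : G ≤ F ×ˢ atTop) {f : Θ × ℝ → ι → ℝ} {f₀ B : ι → ℝ}
    (hB : Summable fun i ↦ Q i * B i) (hfB : ∀ᶠ x in G, ∀ i, f x i ∈ Set.Icc 0 (B i))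
    (hf : ∀ i, Tendsto (f · i) G (𝓝 (f₀ i))) :
    Tendsto (fun x ↦ ∑' i, q x.1 i * f x i) G (𝓝 (∑' i, q₀ i * f₀ i)) := by
  have hfst : Tendsto Prod.fst G F := tendsto_fst.mono_left hG
  refine tendsto_tsum_of_dominated_convergence hB
    (fun i ↦ ((h.tendsto_weight i).comp hfst).mul (hf i)) ?_
  filter_upwards [hfB, hfst.eventually h.weight_le, hfst.eventually h.isRenewalSolution]
    with x hfx hQx hx i
  rw [Real.norm_of_nonneg (mul_nonneg (hx.weight_nonneg i) (hfx i).1)]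
  exact mul_le_mul (hQx i) (hfx i).2 (hfx i).1 (h.weight_bound_nonneg i)

theorem hasSum_weight_limit [F.NeBot] (h : IsRenewalFamily F ℓ₀ ℓ q q₀ Q lam ρ z) :
    HasSum q₀ 1 := by
  have hlim : Tendsto (fun θ ↦ ∑' i, q θ i) F (𝓝 (∑' i, q₀ i)) := by
    refine tendsto_tsum_of_dominated_convergence h.summable_weight_bound h.tendsto_weight ?_
    filter_upwards [h.weight_le, h.isRenewalSolution] with θ hQ hθ i
    rw [Real.norm_of_nonneg (hθ.weight_nonneg i)]
    exact hQ i
  have hone : ∑' i, q₀ i = 1 := by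
    refine tendsto_nhds_unique hlim (tendsto_const_nhds.congr' ?_)
    filter_upwards [h.isRenewalSolution] with θ hθ using hθ.hasSum_weight.tsum_eq.symm
  exact hone ▸ (Summable.of_nonneg_of_le (fun i ↦ (h.weight_limit_pos i).le) h.weight_limit_le
    h.summable_weight_bound).hasSum

theorem eventually_rate_pos (h : IsRenewalFamily F ℓ₀ ℓ q q₀ Q lam ρ z) : ∀ᶠ θ in F, 0 < lam θ :=
  h.tendsto_rate.eventually (lt_mem_nhds h.rate_pos)

theorem exists_bound [Countable ι] (h : IsRenewalFamily F ℓ₀ ℓ q q₀ Q lam ρ z) :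
    ∃ K, ∀ᶠ θ in F, ∀ t, z θ t ∈ Set.Icc 0 K := by
  have hρℓ₀ : ρ * ℓ₀ ≠ 0 := (mul_pos h.rate_pos h.step_bound_pos).ne'
  have hlim : Tendsto (fun θ ↦ Real.exp (lam θ * ℓ₀) / (lam θ * ℓ₀)) F
      (𝓝 (Real.exp (ρ * ℓ₀) / (ρ * ℓ₀))) :=
    (Real.continuous_exp.tendsto _ |>.comp (h.tendsto_rate.mul_const ℓ₀)).div
      (h.tendsto_rate.mul_const ℓ₀) hρℓ₀
  refine ⟨Real.exp (ρ * ℓ₀) / (ρ * ℓ₀) + 1, ?_⟩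
  filter_upwards [hlim.eventually (gt_mem_nhds (lt_add_one _)), h.eventually_rate_pos,
    h.isRenewalSolution] with θ hθ hlam hz t
  exact ⟨hz.nonneg t, (hz.le_exp_div hlam h.step_bound_pos h.le_step t).trans hθ.le⟩

theorem tendsto_exp_neg_rate_mul (h : IsRenewalFamily F ℓ₀ ℓ q q₀ Q lam ρ z)
    (hG : G ≤ F ×ˢ atTop) : Tendsto (fun x ↦ Real.exp (-lam x.1 * x.2)) G (𝓝 0) := by
  have htop : Tendsto (fun x : Θ × ℝ ↦ lam x.1 * x.2) G atTop :=
    (h.tendsto_rate.comp (tendsto_fst.mono_left hG)).pos_mul_atTop h.rate_pos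
      (tendsto_snd.mono_left hG)
  simpa only [neg_mul, Function.comp_def] using Real.tendsto_exp_neg_atTop_nhds_zero.comp htop

theorem exists_profile [Countable ι] (h : IsRenewalFamily F ℓ₀ ℓ q q₀ Q lam ρ z)
    {U : Ultrafilter (Θ × ℝ)} (hU : (U : Filter (Θ × ℝ)) ≤ F ×ˢ atTop) :
    ∃ Z, HasProfile z (U : Filter (Θ × ℝ)) Z := by
  obtain ⟨K, hK⟩ := h.exists_bound
  have hlim (s : ℝ) : ∃ y, Tendsto (fun x : Θ × ℝ ↦ z x.1 (x.2 - s)) U (𝓝 y) := by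
    obtain ⟨y, _, hy⟩ := isCompact_Icc.ultrafilter_le_nhds
      (U.map fun x ↦ z x.1 (x.2 - s)) (le_principal_iff.2
        (((tendsto_fst.mono_left hU).eventually hK).mono fun x hx ↦ hx (x.2 - s)))
    exact ⟨y, hy⟩
  choose Z hZ using hlim
  exact ⟨Z, hZ⟩

theorem profile_le_exp_mul [G.NeBot] (h : IsRenewalFamily F ℓ₀ ℓ q q₀ Q lam ρ z)
    (hG : G ≤ F ×ˢ atTop) (hZ : HasProfile z G Z) {s s' : ℝ} (hs : s ≤ s') :
    Z s' ≤ Real.exp (ρ * (s' - s)) * Z s := by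
  have hfst : Tendsto Prod.fst G F := tendsto_fst.mono_left hG
  have hexp : Tendsto (fun x : Θ × ℝ ↦ Real.exp (lam x.1 * (s' - s))) G
      (𝓝 (Real.exp (ρ * (s' - s)))) :=
    (Real.continuous_exp.tendsto _).comp ((h.tendsto_rate.comp hfst).mul_const _)
  refine le_of_tendsto_of_tendsto (hZ s') (hexp.mul (hZ s)) ?_
  filter_upwards [hfst.eventually h.isRenewalSolution] with x hx
  have := hx.le_exp_mul (sub_le_sub_left hs x.2)
  rwa [sub_sub_sub_cancel_left] at this

section Profile

variable [F.NeBot] [G.NeBot]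

theorem hasSum_profile [Countable ι] (h : IsRenewalFamily F ℓ₀ ℓ q q₀ Q lam ρ z)
    (hG : G ≤ F ×ˢ atTop) (hZ : HasProfile z G Z) (s : ℝ) :
    HasSum (fun i ↦ q₀ i * Z (s + ℓ i)) (Z s) := by
  obtain ⟨K, hK⟩ := h.exists_bound
  have hGK : ∀ᶠ x in G, ∀ t, z x.1 t ∈ Set.Icc 0 K := (tendsto_fst.mono_left hG).eventually hK
  have hZK (t : ℝ) : Z t ∈ Set.Icc 0 K :=
    isClosed_Icc.mem_of_tendsto (hZ t) (hGK.mono fun x hx ↦ hx _)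
  have hshift := tendsto_shift_time hG s
  have hlim := (h.tendsto_exp_neg_rate_mul le_rfl).comp hshift |>.add
    (h.tendsto_tsum_weight_mul hG (f := fun x i ↦ z x.1 (x.2 - s - ℓ i))
      (h.summable_weight_bound.mul_right K) (hGK.mono fun x hx i ↦ hx _)
      fun i ↦ by simpa only [sub_sub] using hZ (s + ℓ i))
  have hsol := hshift.eventually ((tendsto_fst.eventually h.isRenewalSolution).and
    (tendsto_snd.eventually (eventually_ge_atTop 0)))
  have htsum : ∑' i, q₀ i * Z (s + ℓ i) = Z s := by
    rw [zero_add] at hlim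
    refine tendsto_nhds_unique (hlim.congr' ?_) (hZ s)
    filter_upwards [hsol] with x hx using (hx.1.renewal _ hx.2).symm
  refine htsum ▸ (Summable.of_nonneg_of_le
    (fun i ↦ mul_nonneg (h.weight_limit_pos i).le (hZK _).1) (fun i ↦ ?_)
    (h.hasSum_weight_limit.summable.mul_right K)).hasSum
  exact mul_le_mul_of_nonneg_left (hZK _).2 (h.weight_limit_pos i).le

theorem profile_eq_of_extreme [Countable ι] (h : IsRenewalFamily F ℓ₀ ℓ q q₀ Q lam ρ z)
    (hG : G ≤ F ×ˢ atTop) (hZ : HasProfile z G Z) (hZ0 : Z 0 = M)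
    (hM : (∀ y, MapClusterPt y (F ×ˢ atTop) (fun x ↦ z x.1 x.2) → y ≤ M) ∨
      ∀ y, MapClusterPt y (F ×ˢ atTop) (fun x ↦ z x.1 x.2) → M ≤ y)
    {s : ℝ} (hs : s ∈ AddSubmonoid.closure (Set.range ℓ)) : Z s = M := by
  induction hs using AddSubmonoid.closure_induction_right with
  | zero => exact hZ0
  | add_right s _ _ hi ih =>
    obtain ⟨i, rfl⟩ := hi
    refine eq_of_hasSum_weighted (y := fun i ↦ Z (s + ℓ i)) h.weight_limit_pos
      h.hasSum_weight_limit (ih ▸ h.hasSum_profile hG hZ s) ?_ i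
    exact hM.imp (fun hM i ↦ hM _ (hZ.mapClusterPt hG _)) fun hM i ↦ hM _ (hZ.mapClusterPt hG _)

end Profile

/-- The window is cut into `n` cells of length `L / n`, on each of which `z` varies by a factor of
at most `exp (lam θ * L / n)`. -/
theorem tendsto_integral_of_hasProfile_const (h : IsRenewalFamily F ℓ₀ ℓ q q₀ Q lam ρ z)
    (hG : G ≤ F ×ˢ atTop) (hZ : HasProfile z G fun _ ↦ M) {L : ℝ} (hL : 0 ≤ L) :
    Tendsto (fun x ↦ ∫ t in (x.2 - L)..x.2, z x.1 t) G (𝓝 (L * M)) := by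
  have hfst : Tendsto Prod.fst G F := tendsto_fst.mono_left hG
  have hlam : Tendsto (fun x : Θ × ℝ ↦ lam x.1) G (𝓝 ρ) := h.tendsto_rate.comp hfst
  have hsol := hfst.eventually (h.isRenewalSolution.and h.eventually_rate_pos)
  refine tendsto_order.2 ⟨fun u hu ↦ ?_, fun u hu ↦ ?_⟩
  · obtain ⟨n, hun, hn⟩ := (((tendsto_mul_exp_div_mul_atTop (-ρ) L M).eventually
      (lt_mem_nhds hu)).and (eventually_ne_atTop 0)).exists
    filter_upwards [(tendsto_mul_exp_div_mul_sum hn hlam.neg fun k ↦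
      hZ ((k + 1) * (L / n))).eventually (lt_mem_nhds hun), hsol] with x hx hz
    refine hx.trans_le ?_
    have := hz.1.sum_le_integral hz.2.le x.2 (h := L / n) (by positivity) n
    rwa [mul_div_cancel₀ _ (Nat.cast_ne_zero.2 hn), ← neg_mul] at this
  · obtain ⟨n, hun, hn⟩ := (((tendsto_mul_exp_div_mul_atTop ρ L M).eventually
      (gt_mem_nhds hu)).and (eventually_ne_atTop 0)).exists
    filter_upwards [(tendsto_mul_exp_div_mul_sum hn hlam fun k ↦
      hZ (k * (L / n))).eventually (gt_mem_nhds hun), hsol] with x hx hz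
    refine lt_of_le_of_lt ?_ hx
    have := hz.1.integral_le_sum hz.2.le x.2 (h := L / n) (by positivity) n
    rwa [mul_div_cancel₀ _ (Nat.cast_ne_zero.2 hn)] at this

theorem hasProfile_const_eq [Countable ι] [F.NeBot] [G.NeBot]
    (h : IsRenewalFamily F ℓ₀ ℓ q q₀ Q lam ρ z) (hG : G ≤ F ×ˢ atTop)
    (hZ : HasProfile z G fun _ ↦ M) : M = 1 / (ρ * ∑' i, q₀ i * ℓ i) := by
  obtain ⟨K, hK⟩ := h.exists_bound
  have hfst : Tendsto Prod.fst G F := tendsto_fst.mono_left hG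
  have hsol := hfst.eventually (h.isRenewalSolution.and h.eventually_rate_pos)
  have hwindow : Tendsto (fun x ↦ ∑' i, q x.1 i * ∫ t in (x.2 - ℓ i)..x.2, z x.1 t) G
      (𝓝 (∑' i, q₀ i * (ℓ i * M))) := by
    refine h.tendsto_tsum_weight_mul hG (B := fun i ↦ ℓ i * K)
      (by simpa only [mul_assoc] using h.summable_mul_step.mul_right K) ?_
      fun i ↦ h.tendsto_integral_of_hasProfile_const hG hZ (h.step_pos i).le
    filter_upwards [hsol, hfst.eventually hK] with x hz hxK i
    have hle : x.2 - ℓ i ≤ x.2 := sub_le_self _ (h.step_pos i).le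
    refine ⟨intervalIntegral.integral_nonneg hle fun t _ ↦ (hxK t).1, ?_⟩
    simpa using intervalIntegral.integral_mono_on hle (hz.1.intervalIntegrable _ _)
      intervalIntegrable_const fun t _ ↦ (hxK t).2
  have hinput : Tendsto (fun x ↦ (1 - Real.exp (-lam x.1 * x.2)) / lam x.1) G (𝓝 (1 / ρ)) := by
    simpa [Function.comp_def, Pi.div_def] using ((h.tendsto_exp_neg_rate_mul hG).const_sub 1)
      |>.div (h.tendsto_rate.comp hfst) h.rate_pos.ne'
  have hbalance : (∑' i, q₀ i * ℓ i) * M = 1 / ρ := by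
    simp_rw [← mul_assoc, tsum_mul_right] at hwindow
    refine tendsto_nhds_unique hwindow (hinput.congr' ?_)
    filter_upwards [hsol, (tendsto_snd.mono_left hG).eventually (eventually_ge_atTop 0)]
      with x hz ht
    exact (hz.1.hasSum_integral hz.2 (fun i ↦ (h.step_pos i).le) ht).tsum_eq.symm
  have hmean : ∑' i, q₀ i * ℓ i ≠ 0 := fun h0 ↦ by
    rw [h0, zero_mul] at hbalance
    exact (one_div_pos.2 h.rate_pos).ne hbalance
  rw [← div_div, ← hbalance, mul_div_cancel_left₀ _ hmean]

/-- A profile through an extreme cluster value `M` is harmonic for the weights `q₀`, hence equal to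
`M` on the semigroup generated by the steps, which is dense near `∞`. So seen from far back it is
constant, and the integrated renewal equation determines the constant. -/
theorem tendsto [Countable ι] [F.NeBot] (h : IsRenewalFamily F ℓ₀ ℓ q q₀ Q lam ρ z)
    (hdense : AsymptoticallyDense (AddSubmonoid.closure (Set.range ℓ) : Set ℝ)) :
    Tendsto (fun x ↦ z x.1 x.2) (F ×ˢ atTop) (𝓝 (1 / (ρ * ∑' i, q₀ i * ℓ i))) := by
  obtain ⟨K, hK⟩ := h.exists_bound
  refine tendsto_of_extreme_mapClusterPt ((tendsto_fst.eventually hK).mono fun x hx ↦ hx x.2)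
    fun M hM hextreme ↦ ?_
  obtain ⟨U, hU, hUM⟩ := mapClusterPt_iff_ultrafilter.1 hM
  obtain ⟨Z, hZ⟩ := h.exists_profile hU
  have hZ0 : Z 0 = M := tendsto_nhds_unique (by simpa only [sub_zero] using hZ 0) hUM
  have hM0 : 0 ≤ M := ge_of_tendsto hUM
    (((tendsto_fst.mono_left hU).eventually hK).mono fun x hx ↦ (hx x.2).1)
  obtain ⟨G, hG, hGle, hGM⟩ := hZ.exists_const hU <|
    hdense.tendsto_atTop h.rate_pos.le (fun _ _ ↦ h.profile_le_exp_mul hU hZ) hM0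
      fun _ ↦ h.profile_eq_of_extreme hU hZ hZ0 hextreme
  exact h.hasProfile_const_eq hGle hGM

end IsRenewalFamily

section Factorizations

variable {P : Set ℕ} {m n N : ℕ}

theorem finite_factorizations (P : Set ℕ) (m : ℕ) (hn : n ≠ 0) :
    Finite {t : Fin m → ℕ // (∀ i, t i ∈ P) ∧ ∏ i, t i = n} := by
  refine ((Set.Finite.pi' fun _ : Fin m ↦ Set.finite_Iic n).subset ?_).to_subtype
  rintro t ⟨-, rfl⟩ i
  exact Nat.le_of_dvd (Nat.pos_of_ne_zero hn) (Finset.dvd_prod_of_mem t (Finset.mem_univ i))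

theorem af_zero (P : Set ℕ) (n : ℕ) : af P 0 n = if n = 1 then 1 else 0 := by
  split_ifs with hn
  · exact Nat.card_eq_one_iff_unique.2 ⟨inferInstance, ⟨⟨finZeroElim, finZeroElim, by simp [hn]⟩⟩⟩
  · exact Nat.card_eq_zero.2 (.inl ⟨fun t ↦ hn (by simpa using t.2.2.symm)⟩)

theorem af_eq_zero_of_le (hP : ∀ p ∈ P, 2 ≤ p) (hn : n ≠ 0) (hnm : n ≤ m) : af P m n = 0 := by
  refine Nat.card_eq_zero.2 (.inl ⟨?_⟩)
  rintro ⟨t, htP, rfl⟩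
  have hpow : 2 ^ m ≤ ∏ i, t i := by
    simpa using Finset.prod_le_prod' fun i (_ : i ∈ Finset.univ) ↦ hP _ (htP i)
  exact (hpow.trans hnm).not_gt Nat.lt_two_pow_self

open Classical in
theorem af_succ (P : Set ℕ) (m : ℕ) (hn : n ≠ 0) :
    af P (m + 1) n = ∑ x ∈ n.divisorsAntidiagonal with x.1 ∈ P, af P m x.2 := by
  let e : {t : Fin (m + 1) → ℕ // (∀ i, t i ∈ P) ∧ ∏ i, t i = n} ≃
      Σ x : {x ∈ n.divisorsAntidiagonal | x.1 ∈ P},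
        {t : Fin m → ℕ // (∀ i, t i ∈ P) ∧ ∏ i, t i = x.1.2} :=
    { toFun t := ⟨⟨(t.1 0, ∏ i, t.1 (Fin.succ i)), by
          simpa [Fin.prod_univ_succ, hn, t.2.1 0] using t.2.2⟩,
        ⟨Fin.tail t.1, fun i ↦ t.2.1 _, rfl⟩⟩
      invFun x := ⟨Fin.cons x.1.1.1 x.2.1, by
        obtain ⟨⟨x, hx⟩, t, htP, ht⟩ := x
        simp only [Finset.mem_filter, Nat.mem_divisorsAntidiagonal] at hx
        exact ⟨Fin.cases hx.2 htP, by simpa [Fin.prod_univ_succ, ht] using hx.1.1⟩⟩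
      left_inv t := Subtype.ext (Fin.cons_self_tail t.1)
      right_inv := by
        rintro ⟨⟨⟨p, k⟩, hx⟩, t, htP, ht⟩
        obtain rfl : ∏ i, t i = k := ht
        rfl }
  have hfinite (x : {x ∈ n.divisorsAntidiagonal | x.1 ∈ P}) :
      Finite {t : Fin m → ℕ // (∀ i, t i ∈ P) ∧ ∏ i, t i = x.1.2} := by
    have hx := Nat.mem_divisorsAntidiagonal.1 (Finset.mem_filter.1 x.2).1
    exact finite_factorizations P m (right_ne_zero_of_mul (hx.1.trans_ne hx.2))
  rw [af, Nat.card_congr e, Nat.card_sigma]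
  exact Finset.sum_coe_sort {x ∈ n.divisorsAntidiagonal | x.1 ∈ P} fun x ↦ af P m x.2

theorem tsum_af_mul_s16 (hP : ∀ p ∈ P, 2 ≤ p) (hn : n ≠ 0) (hnN : n ≤ N) (φ : ℕ → ℝ) :
    ∑' m, (af P m n : ℝ) * φ m = ∑ m ∈ Finset.range N, (af P m n : ℝ) * φ m := by
  refine tsum_eq_sum fun m hm ↦ ?_
  rw [af_eq_zero_of_le hP hn (hnN.trans (by simpa using hm)), Nat.cast_zero, zero_mul]

end Factorizations

section TwistedSum

variable {P : Set ℕ} {μ θ : ℝ} {m n N M : ℕ}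

/-- The arithmetic function `e^{θ (1 - μ log n)}` supported on `P ∖ {0}`. Since `log` is additive,
its `m`-th convolution power is `a_m(n) e^{θ (m - μ log n)}`. -/
def twist (P : Set ℕ) (μ θ : ℝ) : ArithmeticFunction ℝ where
  toFun n := (P \ {0}).indicator (fun n ↦ Real.exp (θ * (1 - μ * Real.log n))) n
  map_zero' := by simp

theorem twist_apply_of_mem (hnP : n ∈ P) (hn : n ≠ 0) :
    twist P μ θ n = Real.exp (θ * (1 - μ * Real.log n)) := by
  simp [twist, hnP, hn]

theorem twist_apply_of_notMem (hnP : n ∉ P) : twist P μ θ n = 0 := by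
  simp [twist, hnP]

theorem twist_pow_apply (hn : n ≠ 0) :
    (twist P μ θ ^ m) n = af P m n * Real.exp (θ * (m - μ * Real.log n)) := by
  classical
  induction m generalizing n with
  | zero => by_cases hn1 : n = 1 <;> simp [af_zero, hn1]
  | succ m ih =>
    rw [pow_succ', ArithmeticFunction.mul_apply, af_succ P m hn, Nat.cast_sum, Finset.sum_mul,
      Finset.sum_filter]
    refine Finset.sum_congr rfl fun x hx ↦ ?_
    obtain ⟨rfl, -⟩ := Nat.mem_divisorsAntidiagonal.1 hx
    obtain ⟨h1, h2⟩ := mul_ne_zero_iff.1 hn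
    rw [ih h2]
    by_cases hxP : x.1 ∈ P
    · rw [if_pos hxP, twist_apply_of_mem hxP h1, mul_left_comm, ← Real.exp_add, Nat.cast_mul,
        Real.log_mul (Nat.cast_ne_zero.2 h1) (Nat.cast_ne_zero.2 h2)]
      push_cast
      ring_nf
    · rw [if_neg hxP, twist_apply_of_notMem hxP, zero_mul]

/-- The twist `S(θ, N) = ∑_{n ≤ N} ∑_m a_m(n) e^{θ (m - μ log n)}` of `A(N)`, the generating
function in `θ` of the sums `∑_{n ≤ N} b_k(n)`. -/
def twistedSum (P : Set ℕ) (μ θ : ℝ) (N : ℕ) : ℝ :=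
  ∑ n ∈ Finset.Ioc 0 N, ∑' m : ℕ, (af P m n : ℝ) * Real.exp (θ * (m - μ * Real.log n))

theorem twistedSum_zero_right (P : Set ℕ) (μ θ : ℝ) : twistedSum P μ θ 0 = 0 := by
  simp [twistedSum]

theorem monotone_twistedSum (P : Set ℕ) (μ θ : ℝ) : Monotone (twistedSum P μ θ) := fun _ _ h ↦
  Finset.sum_le_sum_of_subset_of_nonneg (Finset.Ioc_subset_Ioc_right h)
    fun _ _ _ ↦ tsum_nonneg fun _ ↦ by positivity

theorem twistedSum_zero_left (P : Set ℕ) (μ : ℝ) (N : ℕ) : twistedSum P μ 0 N = Acum P N := by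
  simp [twistedSum, Acum, aTot, ← Finset.Icc_add_one_left_eq_Ioc]

theorem twistedSum_eq_sum_range (hP : ∀ p ∈ P, 2 ≤ p) (hNM : N ≤ M) :
    twistedSum P μ θ N = ∑ m ∈ Finset.range M, ∑ n ∈ Finset.Ioc 0 N, (twist P μ θ ^ m) n := by
  rw [Finset.sum_comm]
  refine Finset.sum_congr rfl fun n hn ↦ ?_
  obtain ⟨hn0, hnN⟩ := Finset.mem_Ioc.1 hn
  rw [tsum_af_mul_s16 hP hn0.ne' (hnN.trans hNM) fun m ↦ Real.exp (θ * (m - μ * Real.log n))]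
  exact Finset.sum_congr rfl fun m _ ↦ (twist_pow_apply hn0.ne').symm

theorem twistedSum_eq_one_add (hP : ∀ p ∈ P, 2 ≤ p) (hN : N ≠ 0) :
    twistedSum P μ θ N =
      1 + ∑ p ∈ Finset.Ioc 0 N, twist P μ θ p * twistedSum P μ θ (N / p) := by
  have hone : ∑ n ∈ Finset.Ioc 0 N, (1 : ArithmeticFunction ℝ) n = 1 := by
    simp [ArithmeticFunction.one_apply, Nat.one_le_iff_ne_zero, hN]
  rw [twistedSum_eq_sum_range hP N.le_succ, Finset.sum_range_succ', pow_zero, hone, add_comm]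
  simp_rw [pow_succ', ArithmeticFunction.sum_Ioc_mul_eq_sum_sum]
  rw [Finset.sum_comm]
  refine congrArg _ (Finset.sum_congr rfl fun p _ ↦ ?_)
  rw [← Finset.mul_sum, twistedSum_eq_sum_range hP (Nat.div_le_self N p)]

end TwistedSum

section DirichletSeries

variable {P : Set ℕ} {s : ℝ}

theorem term_indicator_one (h0 : 0 ∉ P) (s : ℝ) (n : ℕ) :
    LSeries.term (P.indicator 1) s n =
      ((P.indicator (fun n : ℕ ↦ (n : ℝ) ^ (-s)) n : ℝ) : ℂ) := by
  by_cases hn : n ∈ P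
  · have hn0 : n ≠ 0 := ne_of_mem_of_not_mem hn h0
    simp [LSeries.term_of_ne_zero hn0, hn, Complex.ofReal_cpow, Complex.cpow_neg]
  · simp [LSeries.term_def, hn]

theorem term_logMul_indicator_one (h0 : 0 ∉ P) (s : ℝ) (n : ℕ) :
    LSeries.term (LSeries.logMul (P.indicator 1)) s n =
      ((P.indicator (fun n : ℕ ↦ (n : ℝ) ^ (-s) * Real.log n) n : ℝ) : ℂ) := by
  by_cases hn : n ∈ P
  · have hn0 : n ≠ 0 := ne_of_mem_of_not_mem hn h0
    simp [LSeries.term_of_ne_zero hn0, hn, Complex.ofReal_cpow, Complex.cpow_neg, LSeries.logMul,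
      Complex.natCast_log, div_eq_inv_mul]
  · simp [LSeries.term_def, LSeries.logMul, hn]

theorem lseriesSummable_indicator_one_iff (h0 : 0 ∉ P) :
    LSeriesSummable (P.indicator 1) s ↔ Summable fun n : P ↦ ((n : ℕ) : ℝ) ^ (-s) := by
  simp_rw [LSeriesSummable, funext (term_indicator_one h0 s), Complex.summable_ofReal]
  exact (summable_subtype_iff_indicator (f := fun n : ℕ ↦ (n : ℝ) ^ (-s))).symm

theorem abscissaOfAbsConv_indicator_one (h0 : 0 ∉ P) :
    LSeries.abscissaOfAbsConv (P.indicator 1) = kappa P := by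
  simp only [LSeries.abscissaOfAbsConv, kappa, lseriesSummable_indicator_one_iff h0]
  congr 1
  ext x
  simp [eq_comm, and_comm]

theorem ofReal_Pval (h0 : 0 ∉ P) (s : ℝ) : (Pval P s : ℂ) = LSeries (P.indicator 1) s := by
  simp_rw [LSeries, funext (term_indicator_one h0 s), ← Complex.ofReal_tsum, Pval]
  rw [tsum_subtype P fun n : ℕ ↦ (n : ℝ) ^ (-s)]

theorem ofReal_Pderiv1 (h0 : 0 ∉ P) (s : ℝ) :
    (Pderiv1 P s : ℂ) = -LSeries (LSeries.logMul (P.indicator 1)) s := by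
  simp_rw [LSeries, funext (term_logMul_indicator_one h0 s), ← Complex.ofReal_tsum, Pderiv1]
  rw [tsum_subtype P fun n : ℕ ↦ (n : ℝ) ^ (-s) * Real.log n, Complex.ofReal_neg]

theorem abscissaOfAbsConv_indicator_one_lt (h0 : 0 ∉ P) (hs : kappa P < s) :
    LSeries.abscissaOfAbsConv (P.indicator 1) < (s : ℂ).re := by
  rwa [abscissaOfAbsConv_indicator_one h0, Complex.ofReal_re]

theorem summable_rpow_neg_mul_log (h0 : 0 ∉ P) (hs : kappa P < s) :
    Summable fun n : P ↦ ((n : ℕ) : ℝ) ^ (-s) * Real.log (n : ℕ) := by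
  have hsum := LSeriesSummable_logMul_of_lt_re (abscissaOfAbsConv_indicator_one_lt h0 hs)
  simp_rw [LSeriesSummable, funext (term_logMul_indicator_one h0 s), Complex.summable_ofReal]
    at hsum
  exact summable_subtype_iff_indicator.2 hsum

theorem Pval_eq_re_LSeries (h0 : 0 ∉ P) :
    Pval P = fun s : ℝ ↦ (LSeries (P.indicator 1) s).re :=
  funext fun s ↦ by rw [← ofReal_Pval h0, Complex.ofReal_re]

theorem contDiffAt_Pval (h0 : 0 ∉ P) (hs : kappa P < s) {n : WithTop ℕ∞} :
    ContDiffAt ℝ n (Pval P) s := by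
  rw [Pval_eq_re_LSeries h0]
  exact (LSeries_analyticOnNhd _ _
    (abscissaOfAbsConv_indicator_one_lt h0 hs)).contDiffAt.real_of_complex

theorem hasDerivAt_Pval (h0 : 0 ∉ P) (hs : kappa P < s) :
    HasDerivAt (Pval P) (Pderiv1 P s) s := by
  have hderiv :=
    (LSeries_hasDerivAt (abscissaOfAbsConv_indicator_one_lt h0 hs)).real_of_complex
  rwa [← ofReal_Pderiv1 h0, Complex.ofReal_re, ← Pval_eq_re_LSeries h0] at hderiv

theorem Pderiv1_neg_s16 (hP : ∀ n ∈ P, 2 ≤ n) (hne : P.Nonempty) (hs : kappa P < s) :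
    Pderiv1 P s < 0 := by
  have hterm (n : P) : 0 < ((n : ℕ) : ℝ) ^ (-s) * Real.log (n : ℕ) := by
    have hn : (1 : ℝ) < (n : ℕ) := by exact_mod_cast hP n n.2
    exact mul_pos (Real.rpow_pos_of_pos (by linarith) _) (Real.log_pos hn)
  obtain ⟨p, hp⟩ := hne
  exact neg_neg_of_pos <| (summable_rpow_neg_mul_log (fun h ↦ by simpa using hP 0 h) hs).tsum_pos
    (fun n ↦ (hterm n).le) ⟨p, hp⟩ (hterm _)

theorem exists_Pval_eq_exp_neg (h0 : 0 ∉ P) (hs : kappa P < s) (hs1 : Pval P s = 1)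
    (hderiv : Pderiv1 P s ≠ 0) :
    ∃ w : ℝ → ℝ, ContDiffAt ℝ 2 w 0 ∧ w 0 = s ∧ HasDerivAt w (-1 / Pderiv1 P s) 0 ∧
      ∀ᶠ θ in 𝓝 0, Pval P (w θ) = Real.exp (-θ) := by
  have hne : Pval P s ≠ 0 := hs1 ▸ one_ne_zero
  have hlog : HasDerivAt (fun x ↦ -Real.log (Pval P x)) (-Pderiv1 P s) s := by
    have := ((hasDerivAt_Pval h0 hs).log hne).neg
    rwa [hs1, div_one] at this
  obtain ⟨w, hw, hws, hw', hinv⟩ := exists_contDiffAt_local_right_inverse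
    ((contDiffAt_Pval h0 hs).log hne).neg hlog (neg_ne_zero.2 hderiv) two_ne_zero
  simp only [hs1, Real.log_one, neg_zero] at hw hws hw' hinv
  refine ⟨w, hw, hws, by rwa [neg_div, one_div, ← inv_neg], ?_⟩
  have hpos : ∀ᶠ θ in 𝓝 0, 0 < Pval P (w θ) := by
    have hcont : ContinuousAt (Pval P) (w 0) :=
      hws.symm ▸ (hasDerivAt_Pval h0 hs).continuousAt
    refine (hcont.comp hw.continuousAt).eventually (lt_mem_nhds ?_)
    simp [hws, hs1]
  filter_upwards [hinv, hpos] with θ hθ hpos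
  rw [← neg_eq_iff_eq_neg.1 hθ, Real.exp_log hpos]

end DirichletSeries

section Renewal

variable {P : Set ℕ} {μ θ w : ℝ}

/-- The normalization `e^{-(w - μ θ) t} S(θ, e^t)` of the twisted sum, which solves a renewal
equation on `[0, ∞)` if `𝒫(w) = e^{-θ}`. -/
def normalizedTwistedSum (P : Set ℕ) (μ θ w t : ℝ) : ℝ :=
  Real.exp (-(w - μ * θ) * t) * twistedSum P μ θ ⌊Real.exp t⌋₊

theorem normalizedTwistedSum_sub_log {p : ℕ} (hp : p ≠ 0) (t : ℝ) :
    normalizedTwistedSum P μ θ w (t - Real.log p) =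
      Real.exp (-(w - μ * θ) * (t - Real.log p)) * twistedSum P μ θ (⌊Real.exp t⌋₊ / p) := by
  rw [normalizedTwistedSum, Real.exp_sub, Real.exp_log (by positivity), Nat.floor_div_natCast]

theorem mul_normalizedTwistedSum_sub_log {p : ℕ} (hp : p ∈ P) (hp0 : p ≠ 0) (t : ℝ) :
    Real.exp θ * (p : ℝ) ^ (-w) * normalizedTwistedSum P μ θ w (t - Real.log p) =
      Real.exp (-(w - μ * θ) * t) * (twist P μ θ p * twistedSum P μ θ (⌊Real.exp t⌋₊ / p)) := by
  rw [normalizedTwistedSum_sub_log hp0, twist_apply_of_mem hp hp0, ← mul_assoc, ← mul_assoc,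
    Real.rpow_def_of_pos (by positivity), ← Real.exp_add, ← Real.exp_add, ← Real.exp_add]
  ring_nf

theorem normalizedTwistedSum_renewal (hP : ∀ p ∈ P, 2 ≤ p) (w : ℝ) {t : ℝ} (ht : 0 ≤ t) :
    normalizedTwistedSum P μ θ w t = Real.exp (-(w - μ * θ) * t) +
      ∑' p : P, Real.exp θ * ((p : ℕ) : ℝ) ^ (-w) *
        normalizedTwistedSum P μ θ w (t - Real.log (p : ℕ)) := by
  have hN : ⌊Real.exp t⌋₊ ≠ 0 := (Nat.floor_pos.2 (Real.one_le_exp ht)).ne'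
  have hP0 {p : ℕ} (hp : p ∈ P) : p ≠ 0 := (two_pos.trans_le (hP p hp)).ne'
  rw [normalizedTwistedSum, twistedSum_eq_one_add hP hN, mul_add, mul_one, Finset.mul_sum,
    tsum_subtype P fun p : ℕ ↦
      Real.exp θ * (p : ℝ) ^ (-w) * normalizedTwistedSum P μ θ w (t - Real.log p),
    tsum_eq_sum (s := Finset.Ioc 0 ⌊Real.exp t⌋₊)]
  · refine congrArg _ (Finset.sum_congr rfl fun p _ ↦ ?_)
    by_cases hp : p ∈ P
    · rw [Set.indicator_of_mem hp, mul_normalizedTwistedSum_sub_log hp (hP0 hp)]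
    · rw [Set.indicator_of_notMem hp, twist_apply_of_notMem hp, zero_mul, mul_zero]
  · refine fun p hpN ↦ Set.indicator_apply_eq_zero.2 fun hp ↦ ?_
    have hlt : ⌊Real.exp t⌋₊ < p := by
      simpa [Nat.pos_of_ne_zero (hP0 hp)] using hpN
    rw [mul_normalizedTwistedSum_sub_log hp (hP0 hp), Nat.div_eq_of_lt hlt, twistedSum_zero_right,
      mul_zero, mul_zero]

theorem hasSum_exp_mul_rpow_neg (hw : Pval P w = Real.exp (-θ)) :
    HasSum (fun p : P ↦ Real.exp θ * ((p : ℕ) : ℝ) ^ (-w)) 1 := by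
  have hsum : Summable fun p : P ↦ ((p : ℕ) : ℝ) ^ (-w) := by
    by_contra h
    exact (Real.exp_pos (-θ)).ne' (hw.symm.trans (tsum_eq_zero_of_not_summable h))
  have hmul := hsum.hasSum.mul_left (Real.exp θ)
  rwa [← Pval, hw, ← Real.exp_add, add_neg_cancel, Real.exp_zero] at hmul

theorem isRenewalSolution_normalizedTwistedSum (hP : ∀ p ∈ P, 2 ≤ p)
    (hw : Pval P w = Real.exp (-θ)) :
    IsRenewalSolution (fun p : P ↦ Real.log (p : ℕ))
      (fun p ↦ Real.exp θ * ((p : ℕ) : ℝ) ^ (-w)) (w - μ * θ)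
      (normalizedTwistedSum P μ θ w) where
  weight_nonneg p := by positivity
  hasSum_weight := hasSum_exp_mul_rpow_neg hw
  eq_zero_of_neg t ht := by
    rw [normalizedTwistedSum, Nat.floor_eq_zero.2 (Real.exp_lt_one_iff.2 ht), twistedSum_zero_right,
      mul_zero]
  monotone_exp_mul := by
    simp_rw [normalizedTwistedSum, ← mul_assoc, ← Real.exp_add, neg_mul, add_neg_cancel,
      Real.exp_zero, one_mul]
    exact (monotone_twistedSum P μ θ).comp (Nat.floor_mono.comp Real.exp_monotone)
  renewal _ ht := normalizedTwistedSum_renewal hP w ht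

theorem isRenewalFamily_normalizedTwistedSum (hP : ∀ p ∈ P, 2 ≤ p) {ρ s : ℝ} (hρ : 0 < ρ)
    (hs : kappa P < s) (hsρ : s < ρ) (μ : ℝ) {w : ℝ → ℝ} (hw : Tendsto w (𝓝 0) (𝓝 ρ))
    (hPw : ∀ᶠ θ in 𝓝 0, Pval P (w θ) = Real.exp (-θ)) :
    IsRenewalFamily (𝓝 0) (Real.log 2) (fun p : P ↦ Real.log (p : ℕ))
      (fun θ p ↦ Real.exp θ * ((p : ℕ) : ℝ) ^ (-w θ)) (fun p ↦ ((p : ℕ) : ℝ) ^ (-ρ))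
      (fun p ↦ Real.exp 1 * ((p : ℕ) : ℝ) ^ (-s)) (fun θ ↦ w θ - μ * θ) ρ
      fun θ ↦ normalizedTwistedSum P μ θ (w θ) := by
  have hpos (p : P) : (0 : ℝ) < (p : ℕ) := Nat.cast_pos.2 (two_pos.trans_le (hP p p.2))
  refine
    { step_bound_pos := Real.log_pos one_lt_two
      le_step p := Real.log_le_log two_pos (by exact_mod_cast hP p p.2)
      weight_limit_pos p := Real.rpow_pos_of_pos (hpos p) _
      tendsto_weight p := ?_
      weight_le := ?_
      summable_mul_step := ?_
      rate_pos := hρ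
      tendsto_rate := by simpa using hw.sub ((continuous_const_mul μ).tendsto 0)
      isRenewalSolution := hPw.mono fun θ ↦ isRenewalSolution_normalizedTwistedSum hP }
  · simpa using (Real.continuous_exp.tendsto 0).mul
      (tendsto_const_nhds.rpow hw.neg (.inl (hpos p).ne'))
  · filter_upwards [hw.eventually (lt_mem_nhds hsρ), gt_mem_nhds zero_lt_one] with θ hsw hθ p
    have : 1 ≤ ((p : ℕ) : ℝ) := by exact_mod_cast one_le_two.trans (hP p p.2)
    gcongr
  · simpa only [mul_assoc] using
      (summable_rpow_neg_mul_log (fun h ↦ by simpa using hP 0 h) hs).mul_left (Real.exp 1)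

/-- The limit `C = -1 / (ρ 𝒫'(ρ))` of `N^{-ρ} A(N)`. -/
def growthConst (P : Set ℕ) (ρ : ℝ) : ℝ := 1 / (ρ * -Pderiv1 P ρ)

theorem growthConst_pos (hP : ∀ p ∈ P, 2 ≤ p) (hne : P.Nonempty) {ρ : ℝ} (hρ : 0 < ρ)
    (hρκ : kappa P < ρ) : 0 < growthConst P ρ :=
  one_div_pos.2 (mul_pos hρ (neg_pos.2 (Pderiv1_neg_s16 hP hne hρκ)))

theorem tendsto_normalizedTwistedSum (hP : ∀ p ∈ P, 2 ≤ p) (hne : P.Nonempty)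
    (hpow : ∀ d : ℕ, 2 ≤ d → ¬P ⊆ {n | ∃ k : ℕ, 1 ≤ k ∧ n = d ^ k}) {ρ : ℝ} (hρ : 0 < ρ)
    (hρκ : kappa P < ρ) (μ : ℝ) {w : ℝ → ℝ} (hw : Tendsto w (𝓝 0) (𝓝 ρ))
    (hPw : ∀ᶠ θ in 𝓝 0, Pval P (w θ) = Real.exp (-θ)) :
    Tendsto (fun x : ℝ × ℝ ↦ normalizedTwistedSum P μ x.1 (w x.1) x.2) (𝓝 0 ×ˢ atTop)
      (𝓝 (growthConst P ρ)) := by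
  obtain ⟨s, hs, hsρ⟩ := EReal.lt_iff_exists_real_btwn.1 hρκ
  rw [growthConst, Pderiv1, neg_neg]
  exact (isRenewalFamily_normalizedTwistedSum hP hρ hs (EReal.coe_lt_coe_iff.1 hsρ) μ hw
    hPw).tendsto (asymptoticallyDense_closure_log hP hne hpow)

end Renewal

section Asymptotics

variable {P : Set ℕ} {ρ μ : ℝ}

theorem tendsto_log_natCast_atTop : Tendsto (fun N : ℕ ↦ Real.log N) atTop atTop :=
  Real.tendsto_log_atTop.comp tendsto_natCast_atTop_atTop

theorem monotone_log_natCast : Monotone fun n : ℕ ↦ Real.log n := fun m n hmn ↦ by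
  rcases m.eq_zero_or_pos with rfl | hm
  · simpa using Real.log_natCast_nonneg n
  · exact Real.log_le_log (Nat.cast_pos.2 hm) (Nat.cast_le.2 hmn)

theorem tendsto_apply_div_sqrt_mul_of_isLittleO {f : ℝ → ℝ} (hf : f =o[𝓝 0] fun θ ↦ θ ^ 2)
    (x : ℝ) : Tendsto (fun t ↦ f (x / √t) * t) atTop (𝓝 0) := by
  have hθ : Tendsto (fun t ↦ x / √t) atTop (𝓝 0) := Real.tendsto_sqrt_atTop.const_div_atTop x
  refine (isLittleO_one_iff ℝ).1 (((hf.comp_tendsto hθ).mul_isBigO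
    (isBigO_refl (fun t : ℝ ↦ t) atTop)).trans_isBigO ?_)
  refine (isBigO_const_const (x ^ 2) one_ne_zero atTop).congr' ?_ .rfl
  filter_upwards [eventually_gt_atTop 0] with t ht
  rw [Function.comp_apply, div_pow, Real.sq_sqrt ht.le, div_mul_cancel₀ _ ht.ne']

theorem tendsto_rpow_neg_mul_twistedSum {w : ℝ → ℝ} {c C : ℝ}
    (hw : (fun θ ↦ w θ - μ * θ - ρ - c * θ ^ 2) =o[𝓝 0] fun θ ↦ θ ^ 2)
    (hlim : Tendsto (fun x : ℝ × ℝ ↦ normalizedTwistedSum P μ x.1 (w x.1) x.2) (𝓝 0 ×ˢ atTop)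
      (𝓝 C)) (x : ℝ) :
    Tendsto (fun N : ℕ ↦ (N : ℝ) ^ (-ρ) * twistedSum P μ (x / √(Real.log N)) N) atTop
      (𝓝 (Real.exp (c * x ^ 2) * C)) := by
  have hlog := tendsto_log_natCast_atTop
  have hθ : Tendsto (fun N : ℕ ↦ x / √(Real.log N)) atTop (𝓝 0) :=
    (Real.tendsto_sqrt_atTop.comp hlog).const_div_atTop x
  have hexp := (((tendsto_apply_div_sqrt_mul_of_isLittleO hw x).comp hlog).add_const
    (c * x ^ 2)).rexp
  rw [zero_add] at hexp
  refine (hexp.mul (hlim.comp (hθ.prodMk hlog))).congr' ?_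
  filter_upwards [hlog.eventually_gt_atTop 0, eventually_gt_atTop 0] with N hlogN hN
  have hN' : (0 : ℝ) < N := Nat.cast_pos.2 hN
  simp only [Function.comp_apply, normalizedTwistedSum]
  rw [Real.exp_log hN', Nat.floor_natCast, ← mul_assoc, ← Real.exp_add,
    Real.rpow_def_of_pos hN', div_pow, Real.sq_sqrt hlogN.le]
  congr 2
  field_simp
  ring

theorem exists_tendsto_rpow_neg_mul_twistedSum (hP : ∀ p ∈ P, 2 ≤ p) (hne : P.Nonempty)
    (hpow : ∀ d : ℕ, 2 ≤ d → ¬P ⊆ {n | ∃ k : ℕ, 1 ≤ k ∧ n = d ^ k}) (hρ : 0 < ρ)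
    (hρκ : kappa P < ρ) (hρ1 : Pval P ρ = 1) (hμ : μ = -1 / Pderiv1 P ρ) :
    ∃ c : ℝ, ∀ x : ℝ,
      Tendsto (fun N : ℕ ↦ (N : ℝ) ^ (-ρ) * twistedSum P μ (x / √(Real.log N)) N) atTop
        (𝓝 (Real.exp (c * x ^ 2) * growthConst P ρ)) := by
  obtain ⟨w, hw, hw0, hw', hPw⟩ := exists_Pval_eq_exp_neg (fun h ↦ by simpa using hP 0 h) hρκ hρ1
    (Pderiv1_neg_s16 hP hne hρκ).ne
  -- The choice of `μ` cancels the linear term of `w θ - μ θ`.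
  have hderiv : HasDerivAt (fun θ ↦ w θ - μ * θ) 0 0 :=
    (hw'.sub ((hasDerivAt_id 0).const_mul μ)).congr_deriv (by rw [← hμ, mul_one, sub_self])
  obtain ⟨c, hc⟩ := exists_isLittleO_sub_sq (hw.sub (contDiffAt_id.const_smul μ)) hderiv
  refine ⟨c, tendsto_rpow_neg_mul_twistedSum (w := w) (by simpa [hw0] using hc) ?_⟩
  exact tendsto_normalizedTwistedSum hP hne hpow hρ hρκ μ
    (hw0 ▸ hw.continuousAt.tendsto) hPw

theorem tendsto_sum_bCoef (hP : ∀ p ∈ P, 2 ≤ p) {G : ℝ → ℝ}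
    (hG : ∀ x, Tendsto (fun N : ℕ ↦ (N : ℝ) ^ (-ρ) * twistedSum P μ (x / √(Real.log N)) N) atTop
      (𝓝 (G x))) (hEven : Function.Even G) {k : ℕ} (hk : Odd k) :
    Tendsto (fun N : ℕ ↦ (∑ n ∈ Finset.Icc 1 N, bCoef P μ k n) /
      ((N : ℝ) ^ ρ * √(Real.log N) ^ k)) atTop (𝓝 0) := by
  have hsum (N : ℕ) (φ : ℕ → ℕ → ℝ) :
      ∑ n ∈ Finset.Ioc 0 N, ∑' m, (af P m n : ℝ) * φ n m =
        ∑ a ∈ Finset.Ioc 0 N ×ˢ Finset.range N, (af P a.2 a.1 : ℝ) * φ a.1 a.2 := by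
    rw [Finset.sum_product]
    refine Finset.sum_congr rfl fun n hn ↦ ?_
    obtain ⟨hn0, hnN⟩ := Finset.mem_Ioc.1 hn
    exact tsum_af_mul_s16 hP hn0.ne' hnN _
  refine (tendsto_odd_moment (s := fun N ↦ Finset.Ioc 0 N ×ˢ Finset.range N)
    (W := fun N a ↦ (N : ℝ) ^ (-ρ) * af P a.2 a.1)
    (u := fun N a ↦ (a.2 - μ * Real.log a.1) / √(Real.log N)) (fun N a ↦ by positivity)
    (fun x ↦ (hG x).congr fun N ↦ ?_) hEven hk).congr fun N ↦ ?_
  · rw [twistedSum, hsum N fun n m ↦ Real.exp (x / √(Real.log N) * (m - μ * Real.log n)),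
      Finset.mul_sum]
    refine Finset.sum_congr rfl fun a _ ↦ ?_
    ring_nf
  · simp only [bCoef, ← Finset.Icc_add_one_left_eq_Ioc, zero_add] at hsum ⊢
    rw [hsum N fun n m ↦ (m - μ * Real.log n) ^ k, Finset.sum_div]
    refine Finset.sum_congr rfl fun a _ ↦ ?_
    rw [div_pow, Real.rpow_neg N.cast_nonneg]
    field_simp

theorem isLittleO_sum_bCoef_mul (hρ : 0 < ρ) {k : ℕ} (hk : k ≠ 0)
    (h : Tendsto (fun N : ℕ ↦ (∑ n ∈ Finset.Icc 1 N, bCoef P μ k n) /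
      ((N : ℝ) ^ ρ * √(Real.log N) ^ k)) atTop (𝓝 0)) :
    (fun N : ℕ ↦ ∑ n ∈ Finset.Icc 1 N, bCoef P μ k n * Real.log n ^ ((k : ℝ) / 2)) =o[atTop]
      fun N : ℕ ↦ (N : ℝ) ^ ρ * Real.log N ^ k := by
  have hpow : Monotone fun N : ℕ ↦ √(Real.log N) ^ k := fun m n hmn ↦
    pow_le_pow_left₀ (Real.sqrt_nonneg _) (Real.sqrt_le_sqrt (monotone_log_natCast hmn)) k
  have hrpow : Monotone fun N : ℕ ↦ (N : ℝ) ^ ρ := fun m n hmn ↦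
    Real.rpow_le_rpow m.cast_nonneg (Nat.cast_le.2 hmn) hρ.le
  have htop : Tendsto (fun N : ℕ ↦ (N : ℝ) ^ ρ * √(Real.log N) ^ k) atTop atTop :=
    ((tendsto_rpow_atTop hρ).comp tendsto_natCast_atTop_atTop).atTop_mul_atTop₀
      ((tendsto_pow_atTop hk).comp (Real.tendsto_sqrt_atTop.comp tendsto_log_natCast_atTop))
  have hsum := (isLittleO_iff_tendsto' ((htop.eventually_gt_atTop 0).mono
    fun N hN hN0 ↦ absurd hN0 hN.ne')).2 h
  refine (isLittleO_sum_mul_of_isLittleO_sum hpow (by positivity)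
    (hrpow.mul hpow (fun _ ↦ by positivity) fun _ ↦ by positivity) htop hsum).congr
    (fun N ↦ Finset.sum_congr rfl fun n _ ↦ ?_) fun N ↦ ?_
  · rw [Real.rpow_div_two_eq_sqrt _ (Real.log_natCast_nonneg n), Real.rpow_natCast]
  · rw [Pi.mul_apply, mul_assoc, ← mul_pow, Real.mul_self_sqrt (Real.log_natCast_nonneg N)]

theorem isBigO_rpow_Acum {C : ℝ} (hC : C ≠ 0)
    (h : Tendsto (fun N : ℕ ↦ (N : ℝ) ^ (-ρ) * Acum P N) atTop (𝓝 C)) :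
    (fun N : ℕ ↦ (N : ℝ) ^ ρ) =O[atTop] Acum P := by
  refine isBigO_of_div_tendsto_nhds_of_ne_zero (h.congr fun N ↦ ?_) hC
  rw [Real.rpow_neg N.cast_nonneg, inv_mul_eq_div]

end Asymptotics

/-- **Key cancellation estimate for odd `k`.** Under the stated assumptions, including
non-periodicity, for every odd `k ≥ 1`,
`Σ_{n ≤ N} b_k(n) (log n)^{k/2} = o(A(N) (log N)^k)` as `N → ∞`. -/
theorem odd_weighted_sum_negligible
    (P : Set ℕ) (hP : ∀ n ∈ P, 2 ≤ n) (hP2 : P.Nontrivial)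
    (hκ : 1 < PvalE P (kappa P))
    (ρ : ℝ) (hρ0 : 0 < ρ) (hρκ : kappa P < (ρ : EReal)) (hρ1 : Pval P ρ = 1)
    (μ : ℝ) (hμ : μ = -1 / Pderiv1 P ρ)
    (hnp : ∀ d : ℕ, 2 ≤ d → ¬ P ⊆ {n : ℕ | ∃ k : ℕ, 1 ≤ k ∧ n = d ^ k})
    (k : ℕ) (hk : Odd k) :
    (fun N : ℕ => ∑ n ∈ Finset.Icc 1 N, bCoef P μ k n * (Real.log n) ^ ((k : ℝ) / 2))
      =o[atTop] fun N : ℕ => Acum P N * (Real.log N) ^ k := by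
  obtain ⟨c, hc⟩ :=
    exists_tendsto_rpow_neg_mul_twistedSum hP hP2.nonempty hnp hρ0 hρκ hρ1 hμ
  have hmoment := tendsto_sum_bCoef hP hc (fun x ↦ by simp only [neg_sq]) hk
  have hAcum : (fun N : ℕ ↦ (N : ℝ) ^ ρ) =O[atTop] Acum P := by
    refine isBigO_rpow_Acum (growthConst_pos hP hP2.nonempty hρ0 hρκ).ne' ?_
    simpa [twistedSum_zero_left] using hc 0
  exact (isLittleO_sum_bCoef_mul hρ0 hk.pos.ne' hmoment).trans_isBigO
    (hAcum.mul (isBigO_refl _ _))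
end
end
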